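/- arXiv:1708.07646 — 2 statements merged into one kernel-verified Lean document; each statement's English description precedes it below -/
import Mathlib

section
/- The automorphism group of every maximum partial triple system of order 17 has order at most 12, and there exists an MMPTS(17) whose automorphism group has order exactly 12. -/
def isPTS {n : ℕ} (B : Finset (Finset (Fin n))) : Prop :=
  (∀ T ∈ B, T.card = 3) ∧
  ∀ p : Finset (Fin n), p.card = 2 → ∀ T₁ ∈ B, ∀ T₂ ∈ B, p ⊆ T₁ → p ⊆ T₂ → T₁ = T₂

def isMMPTS {n : ℕ} (B : Finset (Finset (Fin n))) : Prop :=
  isPTS B ∧ ∀ B' : Finset (Finset (Fin n)), isPTS B' → B'.card ≤ B.card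

def isAuto {n : ℕ} (B : Finset (Finset (Fin n))) (φ : Equiv.Perm (Fin n)) : Prop :=
  ∀ T ∈ B, T.image φ ∈ B


abbrev V17 := Fin 17

theorem two_dvd_of_free {α : Type*} [DecidableEq α] (f : α → α) (S : Finset α)
    (h1 : ∀ x ∈ S, f x ∈ S) (h2 : ∀ x ∈ S, f (f x) = x) (h3 : ∀ x ∈ S, f x ≠ x) :
    2 ∣ S.card := by
  induction S using Finset.strongInduction with
  | H S ih =>
    rcases S.eq_empty_or_nonempty with rfl | ⟨x, hx⟩
    · simp
    · have hsub : {x, f x} ⊆ S := by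
        intro y hy; simp at hy; rcases hy with rfl | rfl
        · exact hx
        · exact h1 _ hx
      have hlt : S \ {x, f x} ⊂ S := by
        refine Finset.ssubset_iff_subset_ne.2 ⟨Finset.sdiff_subset, fun h => ?_⟩
        have : x ∈ S \ {x, f x} := by rw [h]; exact hx
        simp at this
      have hc : ({x, f x} : Finset α).card = 2 := Finset.card_pair (h3 x hx).symm
      have := ih _ hlt (by
          intro y hy
          simp only [Finset.mem_sdiff, Finset.mem_insert, Finset.mem_singleton] at hy ⊢
          have := h2 y hy.1; have := h2 x hx
          exact ⟨h1 y hy.1, by grind⟩) (fun y hy => h2 y (Finset.mem_sdiff.1 hy).1)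
          (fun y hy => h3 y (Finset.mem_sdiff.1 hy).1)
      have e := Finset.card_sdiff_add_card_eq_card hsub
      omega

theorem three_dvd_of_free {α : Type*} [DecidableEq α] (f : α → α) (S : Finset α)
    (h1 : ∀ x ∈ S, f x ∈ S) (h2 : ∀ x ∈ S, f (f (f x)) = x) (h3 : ∀ x ∈ S, f x ≠ x) :
    3 ∣ S.card := by
  induction S using Finset.strongInduction with
  | H S ih =>
    rcases S.eq_empty_or_nonempty with rfl | ⟨x, hx⟩
    · simp
    · have hsub : {x, f x, f (f x)} ⊆ S := by
        intro y hy; simp at hy; rcases hy with rfl | rfl | rfl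
        · exact hx
        · exact h1 _ hx
        · exact h1 _ (h1 _ hx)
      have hlt : S \ {x, f x, f (f x)} ⊂ S := by
        refine Finset.ssubset_iff_subset_ne.2 ⟨Finset.sdiff_subset, fun h => ?_⟩
        have : x ∈ S \ {x, f x, f (f x)} := by rw [h]; exact hx
        simp at this
      have h2x := h2 x hx
      have h3x := h3 x hx
      have h3y := h3 _ (h1 x hx)
      have hc : ({x, f x, f (f x)} : Finset α).card = 3 := by
        apply Finset.card_eq_three.2
        exact ⟨x, f x, f (f x), by grind, by grind, by grind, rfl⟩
      have := ih _ hlt (by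
          intro y hy
          simp only [Finset.mem_sdiff, Finset.mem_insert, Finset.mem_singleton] at hy ⊢
          have := h2 y hy.1
          exact ⟨h1 y hy.1, by grind⟩) (fun y hy => h2 y (Finset.mem_sdiff.1 hy).1)
          (fun y hy => h3 y (Finset.mem_sdiff.1 hy).1)
      have e := Finset.card_sdiff_add_card_eq_card hsub
      omega

theorem four_dvd_of_free {α : Type*} [DecidableEq α] (f g : α → α) (S : Finset α)
    (f1 : ∀ x ∈ S, f x ∈ S) (f2 : ∀ x ∈ S, f (f x) = x) (f3 : ∀ x ∈ S, f x ≠ x)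
    (g1 : ∀ x ∈ S, g x ∈ S) (g2 : ∀ x ∈ S, g (g x) = x) (g3 : ∀ x ∈ S, g x ≠ x)
    (hc : ∀ x ∈ S, f (g x) = g (f x)) (hn : ∀ x ∈ S, f x ≠ g x) :
    4 ∣ S.card := by
  induction S using Finset.strongInduction with
  | H S ih =>
    rcases S.eq_empty_or_nonempty with rfl | ⟨x, hx⟩
    · simp
    · have hsub : {x, f x, g x, f (g x)} ⊆ S := by
        intro y hy; simp at hy; rcases hy with rfl | rfl | rfl | rfl
        · exact hx
        · exact f1 _ hx
        · exact g1 _ hx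
        · exact f1 _ (g1 _ hx)
      have hlt : S \ {x, f x, g x, f (g x)} ⊂ S := by
        refine Finset.ssubset_iff_subset_ne.2 ⟨Finset.sdiff_subset, fun h => ?_⟩
        have : x ∈ S \ {x, f x, g x, f (g x)} := by rw [h]; exact hx
        simp at this
      have a1 := f2 x hx
      have a2 := g2 x hx
      have a3 := f3 x hx
      have a4 := g3 x hx
      have a5 := hc x hx
      have a6 := hn x hx
      have a7 := f2 _ (g1 x hx)
      have a8 := f3 _ (g1 x hx)
      have a9 := g3 _ (f1 x hx)
      have hcard : ({x, f x, g x, f (g x)} : Finset α).card = 4 := by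
        apply Finset.card_eq_four.2
        exact ⟨x, f x, g x, f (g x), by grind, by grind, by grind, by grind, by grind,
          by grind, rfl⟩
      have := ih _ hlt (by
          intro y hy
          simp only [Finset.mem_sdiff, Finset.mem_insert, Finset.mem_singleton] at hy ⊢
          have := f2 y hy.1
          exact ⟨f1 y hy.1, by grind⟩) (fun y hy => f2 y (Finset.mem_sdiff.1 hy).1)
          (fun y hy => f3 y (Finset.mem_sdiff.1 hy).1) (by
          intro y hy
          simp only [Finset.mem_sdiff, Finset.mem_insert, Finset.mem_singleton] at hy ⊢
          have := g2 y hy.1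
          exact ⟨g1 y hy.1, by grind⟩) (fun y hy => g2 y (Finset.mem_sdiff.1 hy).1)
          (fun y hy => g3 y (Finset.mem_sdiff.1 hy).1)
          (fun y hy => hc y (Finset.mem_sdiff.1 hy).1)
          (fun y hy => hn y (Finset.mem_sdiff.1 hy).1)
      have e := Finset.card_sdiff_add_card_eq_card hsub
      omega

/-- The third point operation of a partial triple system. -/
structure TS (t : V17 → V17 → V17) : Prop where
  idem : ∀ x, t x x = x
  inv : ∀ x y, t x (t x y) = y
  sym : ∀ x y, t x y ≠ y → t y x = t x y

theorem TS.rot {t} (h : TS t) {x y z : V17} (e : t x y = z) (n : z ≠ y) :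
    t x z = y ∧ t y x = z ∧ t y z = x ∧ t z x = y ∧ t z y = x ∧ x ≠ y ∧ z ≠ x := by
  have h1 : t x z = y := by rw [← e]; exact h.inv x y
  have h2 : t y x = z := by rw [h.sym x y (by rw [e]; exact n), e]
  have h3 : t y z = x := by rw [← h2]; exact h.inv y x
  have h4 : t z x = y := by rw [h.sym x z (by rw [h1]; exact n.symm), h1]
  have hxy : x ≠ y := by rintro rfl; exact n (by rw [← e]; exact h.idem x)
  have hzx : z ≠ x := by
    rintro rfl; exact n (by rw [← h1]; exact (h.idem z).symm)
  have h5 : t z y = x := by rw [h.sym y z (by rw [h3]; exact hzx.symm), h3]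
  exact ⟨h1, h2, h3, h4, h5, hxy, hzx⟩

/-- The automorphism group. -/
def autT (t : V17 → V17 → V17) : Subgroup (Equiv.Perm V17) where
  carrier := {φ | ∀ x y, φ (t x y) = t (φ x) (φ y)}
  mul_mem' := by
    intro φ ψ h1 h2 x y
    simp only [Set.mem_ofPred_eq] at h1 h2
    simp [h1, h2]
  one_mem' := by intro x y; simp
  inv_mem' := by
    intro φ h x y
    simp only [Set.mem_ofPred_eq] at h
    apply φ.injective
    rw [h]; simp

/-- A system whose leave is the 4-cycle `a` . -/
structure Lv (t : V17 → V17 → V17) (a : Fin 4 → V17) : Prop extends TS t where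
  ainj : Function.Injective a
  adj1 : ∀ i, t (a i) (a (i+1)) = a (i+1)
  adj3 : ∀ i, t (a i) (a (i+3)) = a (i+3)
  cov : ∀ x y, x ≠ y → t x y = y → ∃ i, x = a i ∧ (y = a (i+1) ∨ y = a (i+3))

/-- The dihedral group acting on the 4-cycle. -/
def D4 : Subgroup (Equiv.Perm (Fin 4)) where
  carrier := {π | ∀ i, π (i+1) = π i + 1 ∨ π (i+1) = π i + 3}
  mul_mem' := by
    intro a b ha hb
    revert a b
    simp only [Set.mem_ofPred_eq]
    decide
  one_mem' := by simp only [Set.mem_ofPred_eq]; decide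
  inv_mem' := by
    intro a ha
    revert a
    simp only [Set.mem_ofPred_eq]
    decide

theorem mem_D4 (π : Equiv.Perm (Fin 4)) :
    π ∈ D4 ↔ ∀ i, π (i+1) = π i + 1 ∨ π (i+1) = π i + 3 := Iff.rfl

instance : DecidablePred (· ∈ D4) := fun π => decidable_of_iff _ (mem_D4 π).symm

theorem card_D4 : Nat.card D4 = 8 := by
  rw [Nat.card_eq_fintype_card, Fintype.card_subtype]
  decide


theorem fin4_cases (i j : Fin 4) : j = i ∨ j = i + 1 ∨ j = i + 2 ∨ j = i + 3 := by
  revert i j; decide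

theorem fin4_ne (i : Fin 4) : i + 1 ≠ i ∧ i + 2 ≠ i ∧ i + 3 ≠ i ∧ i + 2 ≠ i + 1 ∧
    i + 2 ≠ i + 3 ∧ i + 1 ≠ i + 3 := by
  revert i; decide

theorem fin4_add2 (i : Fin 4) : i + 2 + 2 = i := by
  revert i; decide

theorem Lv.covW {t a} (h : Lv t a) {x y : V17} (hx : ∀ i, x ≠ a i) (n : x ≠ y) :
    t x y ≠ y ∧ t y x ≠ x := by
  constructor
  · intro e
    obtain ⟨i, hi, -⟩ := h.cov x y n e
    exact hx i hi
  · intro e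
    obtain ⟨i, -, hi | hi⟩ := h.cov y x n.symm e
    · exact hx _ hi
    · exact hx _ hi

theorem Lv.opp_cov {t a} (h : Lv t a) (i : Fin 4) : t (a i) (a (i+2)) ≠ a (i+2) := by
  intro e
  have hn := fin4_ne i
  obtain ⟨j, hj, hk⟩ := h.cov _ _ (fun e' => hn.2.1 (h.ainj e').symm) e
  have := h.ainj hj
  subst this
  rcases hk with hk | hk
  · exact hn.2.2.2.1 (h.ainj hk)
  · exact hn.2.2.2.2.1 (h.ainj hk)

theorem Lv.opp_ne {t a} (h : Lv t a) (i j : Fin 4) : t (a i) (a (i+2)) ≠ a j := by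
  intro e
  have hn := fin4_ne i
  have e' : t (a i) (a j) = a (i+2) := by rw [← e]; exact h.inv _ _
  rcases fin4_cases i j with rfl | rfl | rfl | rfl
  · rw [h.idem] at e'; exact hn.2.1 (h.ainj e').symm
  · rw [h.adj1] at e'; exact hn.2.2.2.1 (h.ainj e').symm
  · exact h.opp_cov i e'
  · rw [h.adj3] at e'; exact hn.2.2.2.2.1 (h.ainj e').symm

theorem Lv.exists_pi {t a} (h : Lv t a) {φ : Equiv.Perm V17} (hφ : φ ∈ autT t) :
    ∃ π ∈ D4, ∀ i, φ (a i) = a (π i) := by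
  have hφ' : ∀ x y, φ (t x y) = t (φ x) (φ y) := hφ
  have key : ∀ i, ∃ j, φ (a i) = a j ∧ (φ (a (i+1)) = a (j+1) ∨ φ (a (i+1)) = a (j+3)) := by
    intro i
    have e := hφ' (a i) (a (i+1))
    rw [h.adj1] at e
    exact h.cov _ _ (fun e' => (fin4_ne i).1 (h.ainj (φ.injective e')).symm) e.symm
  choose p hp1 hp2 using key
  have pinj : Function.Injective p := by
    intro i j hij
    apply h.ainj; apply φ.injective; rw [hp1, hp1, hij]
  refine ⟨Equiv.ofBijective p (Finite.injective_iff_bijective.1 pinj), ?_, hp1⟩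
  rw [mem_D4]
  intro i
  simp only [Equiv.ofBijective_apply]
  rcases hp2 i with e | e
  · left; rw [hp1] at e; exact h.ainj e
  · right; rw [hp1] at e; exact h.ainj e

/-- The action on the 4-cycle. -/
noncomputable def Lv.q {t a} (h : Lv t a) : autT t →* Equiv.Perm (Fin 4) where
  toFun φ := (h.exists_pi φ.2).choose
  map_one' := by
    have := (h.exists_pi (1 : autT t).2).choose_spec.2
    ext1 i
    apply h.ainj
    rw [← this]; simp
  map_mul' := by
    intro φ ψ
    have h1 := (h.exists_pi φ.2).choose_spec.2
    have h2 := (h.exists_pi ψ.2).choose_spec.2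
    have h3 := (h.exists_pi (φ * ψ).2).choose_spec.2
    ext1 i
    apply h.ainj
    rw [← h3]
    change φ.1 (ψ.1 (a i)) = _
    rw [h2, h1]
    rfl

theorem Lv.q_mem {t a} (h : Lv t a) (φ : autT t) : h.q φ ∈ D4 :=
  (h.exists_pi φ.2).choose_spec.1

theorem Lv.q_spec {t a} (h : Lv t a) (φ : autT t) (i : Fin 4) : φ.1 (a i) = a (h.q φ i) :=
  (h.exists_pi φ.2).choose_spec.2 i

theorem Lv.q_eq_one {t a} (h : Lv t a) (φ : autT t) : h.q φ = 1 ↔ ∀ i, φ.1 (a i) = a i := by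
  constructor
  · intro e i; rw [h.q_spec, e]; simp
  · intro e; ext1 i; apply h.ainj; rw [← h.q_spec, e]; simp

def fixS (φ : Equiv.Perm V17) : Finset V17 := Finset.univ.filter (fun x => φ x = x)

theorem mem_fixS {φ x} : x ∈ fixS φ ↔ φ x = x := by simp [fixS]

theorem Lv.fix8 {t a} (h : Lv t a) {φ : Equiv.Perm V17} (hφ : φ ∈ autT t) {p : V17}
    (hp : ∀ i, p ≠ a i) (hm : φ p ≠ p) : (fixS φ).card ≤ 8 := by
  have hφ' : ∀ x y, φ (t x y) = t (φ x) (φ y) := hφ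
  have hinj : Set.InjOn (t p) (fixS φ) := by
    intro x _ y _ e
    have e : t p x = t p y := e
    rw [← h.inv p x, e, h.inv]
  have himg : (fixS φ).image (t p) ⊆ (Finset.univ \ fixS φ).erase p := by
    intro y hy
    obtain ⟨f, hf, rfl⟩ := Finset.mem_image.1 hy
    have hf := mem_fixS.1 hf
    have hpf : p ≠ f := by rintro rfl; exact hm hf
    simp only [Finset.mem_erase, Finset.mem_sdiff, Finset.mem_univ, true_and, mem_fixS]
    obtain ⟨r1, r2, r3, r4, r5, r6, r7⟩ := h.rot (rfl : t p f = t p f) (h.covW hp hpf).1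
    refine ⟨r7, fun e => hm ?_⟩
    have := hφ' f (t p f)
    rw [r3, hf, e, r3] at this
    exact this
  have c1 := Finset.card_le_card himg
  rw [Finset.card_image_of_injOn hinj, Finset.card_erase_of_mem (by simp [mem_fixS, hm]),
    Finset.card_sdiff_of_subset (Finset.subset_univ _)] at c1
  have hlt : (fixS φ).card < 17 := by
    have : fixS φ ⊂ Finset.univ := by
      rw [Finset.ssubset_univ_iff]; intro e
      have := Finset.mem_univ p; rw [← e, mem_fixS] at this; exact hm this
    simpa using Finset.card_lt_card this
  simp at c1
  omega

theorem Lv.kfix {t a} (h : Lv t a) {φ : Equiv.Perm V17} (hφ : φ ∈ autT t)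
    (ha : ∀ i, φ (a i) = a i) (h1 : φ ≠ 1) :
    t (a 0) (a 2) = t (a 1) (a 3) ∧
      ∀ x, φ x = x → x = t (a 0) (a 2) ∨ ∃ i, x = a i := by
  have hφ' : ∀ x y, φ (t x y) = t (φ x) (φ y) := hφ
  obtain ⟨p, hp⟩ : ∃ p, φ p ≠ p := by
    by_contra hc; push Not at hc; exact h1 (Equiv.ext hc)
  have hpa : ∀ i, p ≠ a i := by rintro i rfl; exact hp (ha i)
  have h8 := h.fix8 hφ hpa hp
  set x := t (a 0) (a 2) with hx
  have hxa : ∀ j, x ≠ a j := fun j => h.opp_ne 0 j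
  have hfx : φ x = x := by rw [hx, hφ', ha, ha]
  set X : Finset V17 := insert x (Finset.univ.image a) with hX
  have hXc : X.card = 5 := by
    rw [hX, Finset.card_insert_of_notMem, Finset.card_image_of_injective _ h.ainj]
    · simp
    · simp only [Finset.mem_image, Finset.mem_univ, true_and, not_exists]
      exact fun j e => hxa j e.symm
  have memX : ∀ y, y ∈ X ↔ y = x ∨ ∃ i, y = a i := by
    intro y; simp [hX, eq_comm]
  have hXF : X ⊆ fixS φ := by
    intro y hy; rw [mem_fixS]
    rcases (memX y).1 hy with rfl | ⟨i, rfl⟩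
    · exact hfx
    · exact ha i
  have tX : ∀ k : Fin 4, (k = 0 ∨ k = 2) → ∀ y ∈ X, t (a k) y ∈ X := by
    intro k hk y hy
    have o2 : t (a 2) (a 0) = x := h.sym (a 0) (a 2) (h.opp_cov 0)
    have o3 : t (a 2) x = a 0 := by rw [← o2]; exact h.inv _ _
    have o4 : t (a 0) x = a 2 := by rw [hx]; exact h.inv _ _
    have o0 : t (a 0) (a 2) = x := hx.symm
    have e0 := h.adj1 0
    have e1 := h.adj3 0
    have e2 := h.adj1 2
    have e3 := h.adj3 2
    have i0 := h.idem (a 0)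
    have i2 := h.idem (a 2)
    simp only [zero_add, show (2:Fin 4)+1 = 3 from rfl, show (2:Fin 4)+3 = 1 from rfl] at e0 e1 e2 e3
    rw [memX] at hy ⊢
    rcases hk with rfl | rfl <;> rcases hy with rfl | ⟨i, rfl⟩
    · right; exact ⟨2, o4⟩
    · fin_cases i
      · right; exact ⟨0, i0⟩
      · right; exact ⟨1, e0⟩
      · left; exact o0
      · right; exact ⟨3, e1⟩
    · right; exact ⟨0, o3⟩
    · fin_cases i
      · left; exact o2
      · right; exact ⟨1, e3⟩
      · right; exact ⟨2, i2⟩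
      · right; exact ⟨3, e2⟩
  set S := fixS φ \ X with hS
  have hSc : S.card ≤ 3 := by
    rw [hS, Finset.card_sdiff_of_subset hXF]; omega
  have memS : ∀ y, y ∈ S ↔ φ y = y ∧ y ∉ X := by
    intro y; simp [hS, mem_fixS]
  have tS : ∀ k : Fin 4, (k = 0 ∨ k = 2) → ∀ y ∈ S, t (a k) y ∈ S ∧ t (a k) y ≠ y := by
    intro k hk y hy
    rw [memS] at hy ⊢
    refine ⟨⟨by rw [hφ', ha, hy.1], fun hc => hy.2 ?_⟩, ?_⟩
    · rw [← h.inv (a k) y]; exact tX k hk _ hc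
    · have hya : ∀ i, y ≠ a i := fun i e => hy.2 ((memX y).2 (Or.inr ⟨i, e⟩))
      exact (h.covW hya (hya k)).2
  have even : 2 ∣ S.card := two_dvd_of_free (t (a 0)) S (fun y hy => (tS 0 (Or.inl rfl) y hy).1)
    (fun y _ => h.inv _ _) (fun y hy => (tS 0 (Or.inl rfl) y hy).2)
  have hS0 : S = ∅ := by
    by_contra hne
    have : S.card ≠ 0 := fun e => hne (Finset.card_eq_zero.1 e)
    have h2 : S.card = 2 := by omega
    obtain ⟨v, w, hvw, hSe⟩ := Finset.card_eq_two.1 h2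
    have hv : v ∈ S := by rw [hSe]; simp
    have e0 := tS 0 (Or.inl rfl) v hv
    have e2 := tS 2 (Or.inr rfl) v hv
    have f0 : t (a 0) v = w := by
      have := e0.1; rw [hSe] at this; simp at this; exact this.resolve_left e0.2
    have f2 : t (a 2) v = w := by
      have := e2.1; rw [hSe] at this; simp at this; exact this.resolve_left e2.2
    have r0 := (h.rot f0 hvw.symm).2.2.1
    have r2 := (h.rot f2 hvw.symm).2.2.1
    have := h.ainj (r0.symm.trans r2)
    exact absurd this (by decide)
  have hall : ∀ y, φ y = y → y ∈ X := by
    intro y hy; by_contra hc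
    have : y ∈ S := (memS y).2 ⟨hy, hc⟩
    rw [hS0] at this; simp at this
  refine ⟨?_, fun y hy => (memX y).1 (hall y hy)⟩
  have := (memX _).1 (hall (t (a 1) (a 3)) (by rw [hφ', ha, ha]))
  rcases this with e | ⟨i, e⟩
  · exact e.symm
  · exact absurd e (h.opp_ne 1 i)


/-- The case in which both diagonals of the 4-cycle lie in triples through the same point. -/
structure Conf (t : V17 → V17 → V17) (a : Fin 4 → V17) (o : V17) : Prop extends Lv t a where
  opp : ∀ i, t (a i) (a (i+2)) = o

def Wset (a : Fin 4 → V17) (o : V17) : Finset V17 :=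
  Finset.univ.filter (fun z => z ≠ o ∧ ∀ i, z ≠ a i)

theorem memW {a o z} : z ∈ Wset a o ↔ z ≠ o ∧ ∀ i, z ≠ a i := by simp [Wset]

theorem nmemW {a o z} : z ∉ Wset a o ↔ z = o ∨ ∃ i, z = a i := by
  rw [memW]; grind

namespace Conf

variable {t : V17 → V17 → V17} {a : Fin 4 → V17} {o : V17}

theorem one (h : Conf t a o) (i : Fin 4) : o ≠ a i := by
  rw [← h.opp 0]; exact h.opp_ne 0 i

theorem cardW (h : Conf t a o) : (Wset a o).card = 12 := by
  have : Wset a o = Finset.univ \ insert o (Finset.univ.image a) := by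
    ext z
    simp only [memW, Finset.mem_sdiff, Finset.mem_univ, true_and, Finset.mem_insert,
      Finset.mem_image, not_or, not_exists]
    grind
  rw [this, Finset.card_sdiff_of_subset (Finset.subset_univ _), Finset.card_insert_of_notMem,
    Finset.card_image_of_injective _ h.ainj]
  · simp
  · simp only [Finset.mem_image, Finset.mem_univ, true_and, not_exists]
    exact fun j e => h.one j e.symm

theorem covW (h : Conf t a o) {x y : V17} (hx : x ∈ Wset a o) (n : x ≠ y) :
    t x y ≠ y ∧ t y x ≠ x := h.toLv.covW (memW.1 hx).2 n

theorem o_a (h : Conf t a o) (i : Fin 4) : t o (a i) = a (i+2) ∧ t (a i) o = a (i+2) := by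
  have := h.rot (h.opp i) (h.one _)
  exact ⟨this.2.2.2.1, this.1⟩

theorem tF (h : Conf t a o) {x y : V17} (hx : x ∉ Wset a o) (hy : y ∉ Wset a o) :
    t x y ∉ Wset a o := by
  rw [nmemW] at hx hy ⊢
  rcases hx with rfl | ⟨i, rfl⟩ <;> rcases hy with rfl | ⟨j, rfl⟩
  · left; exact h.idem _
  · right; exact ⟨_, (h.o_a j).1⟩
  · right; exact ⟨_, (h.o_a i).2⟩
  · rcases fin4_cases i j with rfl | rfl | rfl | rfl
    · right; exact ⟨_, h.idem _⟩
    · right; exact ⟨_, h.adj1 _⟩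
    · left; exact h.opp _
    · right; exact ⟨_, h.adj3 _⟩

theorem mW (h : Conf t a o) {x y : V17} (hx : x ∉ Wset a o) (hy : y ∈ Wset a o) :
    t x y ∈ Wset a o := by
  by_contra hc
  have := h.tF hx hc
  rw [h.inv] at this
  exact this hy

theorem symW (h : Conf t a o) {x y : V17} (hx : x ∈ Wset a o) : t x y = t y x := by
  by_cases e : x = y
  · rw [e]
  · exact h.sym y x (h.covW hx e).2

theorem aut_o (h : Conf t a o) {φ : Equiv.Perm V17} (hφ : φ ∈ autT t) : φ o = o := by
  have hφ' : ∀ x y, φ (t x y) = t (φ x) (φ y) := hφ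
  obtain ⟨π, hπ, hpa⟩ := h.exists_pi hφ
  have d : ∀ π : Equiv.Perm (Fin 4), (∀ i, π (i+1) = π i + 1 ∨ π (i+1) = π i + 3) →
    π 2 = π 0 + 2 := by decide
  have := hφ' (a 0) (a (0+2))
  rw [h.opp, hpa, hpa, zero_add, d π hπ, h.opp] at this
  exact this

theorem aut_W (h : Conf t a o) {φ : Equiv.Perm V17} (hφ : φ ∈ autT t) {z : V17}
    (hz : z ∈ Wset a o) : φ z ∈ Wset a o := by
  rw [memW] at hz ⊢
  refine ⟨fun e => hz.1 (φ.injective (e.trans (h.aut_o hφ).symm)), fun i e => ?_⟩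
  obtain ⟨π, hπ, hpa⟩ := h.exists_pi hφ
  refine hz.2 (π⁻¹ i) (φ.injective ?_)
  rw [e, hpa]; simp

theorem aut_F (h : Conf t a o) {φ : Equiv.Perm V17} (hφ : φ ∈ autT t) {z : V17}
    (hz : z ∉ Wset a o) : φ z ∉ Wset a o := by
  intro hc
  have := h.aut_W (inv_mem hφ) hc
  simp at this
  exact hz this

theorem exW (h : Conf t a o) : ∃ z, z ∈ Wset a o := by
  have : (Wset a o).Nonempty := by
    rw [← Finset.card_pos, h.cardW]; norm_num
  exact this

theorem aut_ext (h : Conf t a o) {φ ψ : Equiv.Perm V17} (hφ : φ ∈ autT t) (hψ : ψ ∈ autT t)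
    (e : ∀ z ∈ Wset a o, φ z = ψ z) : φ = ψ := by
  have hφ' : ∀ x y, φ (t x y) = t (φ x) (φ y) := hφ
  have hψ' : ∀ x y, ψ (t x y) = t (ψ x) (ψ y) := hψ
  ext1 x
  by_cases hx : x ∈ Wset a o
  · exact e x hx
  · obtain ⟨z, hz⟩ := h.exW
    have h1 := h.mW hx hz
    rw [← h.symW hz] at h1
    rw [← h.inv z x, hφ', hψ', e z hz, e _ h1]

theorem aut_moved (h : Conf t a o) {φ : Equiv.Perm V17} (hφ : φ ∈ autT t) (h1 : φ ≠ 1) :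
    ∃ z ∈ Wset a o, φ z ≠ z := by
  by_contra hc
  push Not at hc
  exact h1 (h.aut_ext hφ (one_mem _) hc)

theorem fix8 (h : Conf t a o) {φ : Equiv.Perm V17} (hφ : φ ∈ autT t) (h1 : φ ≠ 1) :
    (fixS φ).card ≤ 8 := by
  obtain ⟨z, hz, hm⟩ := h.aut_moved hφ h1
  exact h.toLv.fix8 hφ (memW.1 hz).2 hm

theorem K_free (h : Conf t a o) {φ : Equiv.Perm V17} (hφ : φ ∈ autT t)
    (ha : ∀ i, φ (a i) = a i) (h1 : φ ≠ 1) {z : V17} (hz : z ∈ Wset a o) : φ z ≠ z := by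
  intro e
  have := (h.kfix hφ ha h1).2 z e
  have h0 : t (a 0) (a 2) = o := h.opp 0
  rw [h0] at this
  rw [memW] at hz
  rcases this with e | ⟨i, e⟩
  · exact hz.1 e
  · exact hz.2 i e

theorem K_fix (h : Conf t a o) {φ : Equiv.Perm V17} (hφ : φ ∈ autT t)
    (ha : ∀ i, φ (a i) = a i) {f : V17} (hf : f ∉ Wset a o) : φ f = f := by
  rw [nmemW] at hf
  rcases hf with rfl | ⟨i, rfl⟩
  · exact h.aut_o hφ
  · exact ha i

/-- Points `x` with `{x, φ x, u}` a triple. -/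
def Nu (t : V17 → V17 → V17) (φ : Equiv.Perm V17) (u : V17) : Finset V17 :=
  Finset.univ.filter (fun x => φ x ≠ x ∧ t u x = φ x)

theorem mem_Nu {φ : Equiv.Perm V17} {u x : V17} : x ∈ Nu t φ u ↔ φ x ≠ x ∧ t u x = φ x := by
  simp [Nu]

theorem parity_at (h : Conf t a o) {φ : Equiv.Perm V17} (hφ : φ ∈ autT t)
    (h2 : ∀ x, φ (φ x) = x) {u : V17} (hu : u ∈ Wset a o) (hf : φ u = u) :
    ∃ k, 17 = (fixS φ).card + (Nu t φ u).card + 4 * k := by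
  have hφ' : ∀ x y, φ (t x y) = t (φ x) (φ y) := hφ
  set S : Finset V17 := Finset.univ.filter (fun x => φ x ≠ x ∧ t u x ≠ φ x) with hS
  have memS : ∀ x, x ∈ S ↔ φ x ≠ x ∧ t u x ≠ φ x := by intro x; simp [hS]
  have hfree : ∀ x ∈ S, t u x ≠ x := by
    intro x hx
    have hx := (memS x).1 hx
    exact (h.covW hu (by rintro rfl; exact hx.1 hf)).1
  obtain ⟨k, hk⟩ : 4 ∣ S.card := by
    apply four_dvd_of_free (t u) φ S
    · intro x hx
      rw [memS] at hx ⊢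
      rw [hφ', hf, h.inv]
      refine ⟨fun e => hx.1 ?_, fun e => hx.2 ?_⟩
      · rw [← h.inv u (φ x), e, h.inv]
      · have := congrArg (t u) e
        rw [h.inv] at this; exact this
    · intro x _; exact h.inv _ _
    · exact hfree
    · intro x hx
      rw [memS] at hx ⊢
      rw [h2]
      refine ⟨fun e => hx.1 e.symm, fun e => hx.2 ?_⟩
      rw [← h.inv u (φ x), e]
    · intro x _; exact h2 x
    · intro x hx; exact ((memS x).1 hx).1
    · intro x _; rw [hφ', hf]
    · intro x hx; exact ((memS x).1 hx).2
  refine ⟨k, ?_⟩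
  have e1 := Finset.card_filter_add_card_filter_not (s := (Finset.univ : Finset V17)) (fun x => φ x = x)
  have e2 := Finset.card_filter_add_card_filter_not
    (s := (Finset.univ : Finset V17).filter (fun x => ¬ φ x = x)) (fun x => t u x = φ x)
  rw [Finset.filter_filter, Finset.filter_filter] at e2
  have e3 : (Nu t φ u).card = (Finset.univ.filter (fun x => ¬ φ x = x ∧ t u x = φ x)).card := rfl
  have e4 : S.card = (Finset.univ.filter (fun x => ¬ φ x = x ∧ ¬ t u x = φ x)).card := rfl
  have e5 : (fixS φ).card = (Finset.univ.filter (fun x => φ x = x)).card := rfl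
  simp only [Finset.card_univ, Fintype.card_fin] at e1
  omega

theorem Nu_sub (h : Conf t a o) {φ : Equiv.Perm V17} (hφ : φ ∈ autT t)
    {u : V17} (hu : u ∈ Wset a o) {x : V17} (hx : x ∈ Nu t φ u) : x ∈ Wset a o := by
  by_contra hc
  have h1 := h.aut_F hφ hc
  rw [← (mem_Nu.1 hx).2, h.symW hu] at h1
  exact h1 (h.mW hc hu)

theorem Nu_disj (h : Conf t a o) {φ : Equiv.Perm V17} {u v x : V17} (hu : x ∈ Nu t φ u)
    (hv : x ∈ Nu t φ v) : u = v := by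
  rw [mem_Nu] at hu hv
  exact (h.rot hu.2 hu.1).2.2.1.symm.trans (h.rot hv.2 hv.1).2.2.1

/-- Fixed points outside the special five points. -/
def EW (a : Fin 4 → V17) (o : V17) (φ : Equiv.Perm V17) : Finset V17 :=
  (Wset a o).filter (fun x => φ x = x)

theorem mem_EW {φ : Equiv.Perm V17} {x : V17} : x ∈ EW a o φ ↔ x ∈ Wset a o ∧ φ x = x := by
  simp [EW]

theorem fixS_eq (h : Conf t a o) {φ : Equiv.Perm V17} (hφ : φ ∈ autT t)
    (ha : ∀ i, φ (a i) ≠ a i) : fixS φ = insert o (EW a o φ) ∧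
      (fixS φ).card = (EW a o φ).card + 1 := by
  have e : fixS φ = insert o (EW a o φ) := by
    ext x
    rw [mem_fixS, Finset.mem_insert, mem_EW]
    constructor
    · intro hx
      by_cases hw : x ∈ Wset a o
      · exact Or.inr ⟨hw, hx⟩
      · rcases nmemW.1 hw with e | ⟨i, rfl⟩
        · exact Or.inl e
        · exact absurd hx (ha i)
    · rintro (rfl | hx)
      · exact h.aut_o hφ
      · exact hx.2
  refine ⟨e, ?_⟩
  rw [e, Finset.card_insert_of_notMem]
  intro hc
  exact (memW.1 (mem_EW.1 hc).1).1 rfl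

theorem E2 (h : Conf t a o) {φ : Equiv.Perm V17} (hφ : φ ∈ autT t)
    (h2 : ∀ x, φ (φ x) = x) (ha : ∀ i, φ (a i) ≠ a i) : (EW a o φ).card ≤ 2 := by
  have hφ' : ∀ x y, φ (t x y) = t (φ x) (φ y) := hφ
  have oW : o ∉ Wset a o := nmemW.2 (Or.inl rfl)
  have h8 := h.fix8 hφ (by rintro rfl; exact ha 0 rfl)
  obtain ⟨hfe, hfc⟩ := h.fixS_eq hφ ha
  have toE : ∀ x ∈ EW a o φ, t o x ∈ EW a o φ := by
    intro x hx
    rw [mem_EW] at hx ⊢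
    exact ⟨h.mW oW hx.1, by rw [hφ', h.aut_o hφ, hx.2]⟩
  have ton : ∀ x ∈ EW a o φ, t o x ≠ x := by
    intro x hx
    exact (h.covW (mem_EW.1 hx).1 (memW.1 (mem_EW.1 hx).1).1).2
  have hev : 2 ∣ (EW a o φ).card :=
    two_dvd_of_free (t o) _ toE (fun x _ => h.inv _ _) ton
  by_contra hlt
  have h46 : (EW a o φ).card = 4 ∨ (EW a o φ).card = 6 := by omega
  rcases h46 with h4 | h6
  · -- no Steiner triple system on five points
    obtain ⟨u, hu⟩ : (EW a o φ).Nonempty := by rw [← Finset.card_pos]; omega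
    obtain ⟨v, hv⟩ : (EW a o φ \ {u, t o u}).Nonempty := by
      rw [← Finset.card_pos]
      have := Finset.le_card_sdiff ({u, t o u} : Finset V17) (EW a o φ)
      have h3 : ({u, t o u} : Finset V17).card ≤ 2 := Finset.card_le_two
      omega
    simp only [Finset.mem_sdiff, Finset.mem_insert, Finset.mem_singleton, not_or] at hv
    obtain ⟨hv, hvu, hvu'⟩ := hv
    have hw : t u v ∈ EW a o φ := by
      have hne : u ≠ v := fun e => hvu e.symm
      have hcv := (h.covW (mem_EW.1 hu).1 hne).1
      have r := h.rot (rfl : t u v = t u v) hcv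
      by_cases hwW : t u v ∈ Wset a o
      · exact mem_EW.2 ⟨hwW, by rw [hφ', (mem_EW.1 hu).2, (mem_EW.1 hv).2]⟩
      · exfalso
        rcases nmemW.1 hwW with e | ⟨i, e⟩
        · rw [e] at r
          exact hvu' r.2.2.2.1.symm
        · refine ha i ?_
          rw [← e, hφ', (mem_EW.1 hu).2, (mem_EW.1 hv).2]
    have hsub : ({u, t o u, v, t o v, t u v} : Finset V17) ⊆ EW a o φ := by
      intro y hy
      simp only [Finset.mem_insert, Finset.mem_singleton] at hy
      rcases hy with rfl | rfl | rfl | rfl | rfl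
      · exact hu
      · exact toE _ hu
      · exact hv
      · exact toE _ hv
      · exact hw
    have hne : u ≠ v := fun e => hvu e.symm
    have r := h.rot (rfl : t u v = t u v) (h.covW (mem_EW.1 hu).1 hne).1
    have ru := h.rot (rfl : t o u = t o u) (ton u hu)
    have rv := h.rot (rfl : t o v = t o v) (ton v hv)
    have hwo : t u v ≠ o := fun e => oW (e ▸ (mem_EW.1 hw).1)
    have huo : u ≠ o := fun e => oW (e ▸ (mem_EW.1 hu).1)
    have hvo : v ≠ o := fun e => oW (e ▸ (mem_EW.1 hv).1)
    have i1 := h.inv o u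
    have i2 := h.inv o v
    have hcv := (h.covW (mem_EW.1 hu).1 hne).1
    have hn1 := ton u hu
    have hn2 := ton v hv
    have hinv := h.inv
    clear hφ' h2 toE ton hφ
    have hcard : ({u, t o u, v, t o v, t u v} : Finset V17).card = 5 := by
      rw [Finset.card_insert_of_notMem, Finset.card_insert_of_notMem,
        Finset.card_insert_of_notMem, Finset.card_insert_of_notMem, Finset.card_singleton]
      all_goals
        simp only [Finset.mem_insert, Finset.mem_singleton, not_or]
      · grind
      · grind
      · grind
      · grind
    have := Finset.card_le_card hsub
    omega
  · have hN : ∀ u ∈ EW a o φ, 2 ≤ (Nu t φ u).card := by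
      intro u hu
      obtain ⟨k, hk⟩ := h.parity_at hφ h2 (mem_EW.1 hu).1 (mem_EW.1 hu).2
      omega
    have hU : (EW a o φ).biUnion (Nu t φ) ⊆ Wset a o \ EW a o φ := by
      intro x hx
      obtain ⟨u, hu, hx⟩ := Finset.mem_biUnion.1 hx
      rw [Finset.mem_sdiff]
      exact ⟨h.Nu_sub hφ (mem_EW.1 hu).1 hx, fun hc => (mem_Nu.1 hx).1 (mem_EW.1 hc).2⟩
    have c1 := Finset.card_le_card hU
    rw [Finset.card_biUnion (by
      intro u _ v _ huv
      change Disjoint (Nu t φ u) (Nu t φ v)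
      rw [Finset.disjoint_left]
      intro x hxu hxv
      exact huv (h.Nu_disj hxu hxv)),
      Finset.card_sdiff_of_subset (show EW a o φ ⊆ Wset a o from Finset.filter_subset _ _), h.cardW, h6] at c1
    have c2 := Finset.card_nsmul_le_sum _ _ 2 hN
    rw [h6] at c2
    simp only [smul_eq_mul] at c2
    omega

/-- Lemma A. -/
theorem lemA (h : Conf t a o) {g φ : Equiv.Perm V17} (hg : g ∈ autT t) (hφ : φ ∈ autT t)
    (hc : ∀ x, g (φ x) = φ (g x)) (hg2 : ∀ x, g (g x) = x) (h2 : ∀ x, φ (φ x) = x)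
    (ho : ∀ z ∈ Wset a o, t o z = g z) (ha : ∀ i, φ (a i) ≠ a i)
    (hga : (∀ i, g (φ (a i)) ≠ a i) ∨ (g ≠ φ ∧ ∀ i, g (φ (a i)) = a i)) : False := by
  have hφ' : ∀ x y, φ (t x y) = t (φ x) (φ y) := hφ
  have hg' : ∀ x y, g (t x y) = t (g x) (g y) := hg
  have oW : o ∉ Wset a o := nmemW.2 (Or.inl rfl)
  have gfree : ∀ z ∈ Wset a o, g z ≠ z := by
    intro z hz
    rw [← ho z hz]
    exact (h.covW hz (memW.1 hz).1).2
  have hE := h.E2 hφ h2 ha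
  have hgφ : g * φ ∈ autT t := mul_mem hg hφ
  have hD : (EW a o (g * φ)).card ≤ 2 := by
    rcases hga with hga | ⟨hne, hga⟩
    · refine h.E2 hgφ ?_ hga
      intro x
      simp only [Equiv.Perm.coe_mul, Function.comp]
      rw [← hc, hg2, h2]
    · have : EW a o (g * φ) = ∅ := by
        rw [Finset.eq_empty_iff_forall_notMem]
        intro x hx
        refine h.K_free hgφ hga ?_ (mem_EW.1 hx).1 (mem_EW.1 hx).2
        intro e
        apply hne
        ext1 y
        have := Equiv.congr_fun e (φ y)
        simp only [Equiv.Perm.coe_mul, Function.comp, Equiv.Perm.coe_one, id] at this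
        rw [h2] at this
        exact this
      rw [this]; simp
  have memD : ∀ x, x ∈ EW a o (g * φ) ↔ x ∈ Wset a o ∧ φ x = g x := by
    intro x
    rw [mem_EW]
    simp only [Equiv.Perm.coe_mul, Function.comp]
    constructor
    · rintro ⟨h1, h2⟩; exact ⟨h1, by rw [← hg2 (φ x), h2]⟩
    · rintro ⟨h1, h2⟩; exact ⟨h1, by rw [h2, hg2]⟩
  set E := EW a o φ with hEdef
  set D := EW a o (g * φ) with hDdef
  have memE : ∀ x, x ∈ E ↔ x ∈ Wset a o ∧ φ x = x := fun x => mem_EW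
  have hdisj : Disjoint E D := by
    rw [Finset.disjoint_left]
    intro x hx hx'
    have h1 := (memE x).1 hx
    have h2 := (memD x).1 hx'
    exact gfree x h1.1 (h2.2.symm.trans h1.2)
  set S := Wset a o \ (E ∪ D) with hS
  have memS : ∀ x, x ∈ S ↔ x ∈ Wset a o ∧ φ x ≠ x ∧ φ x ≠ g x := by
    intro x
    simp only [hS, Finset.mem_sdiff, Finset.mem_union, memE, memD]
    tauto
  have hSc : S.card + (E.card + D.card) = 12 := by
    rw [← Finset.card_union_of_disjoint hdisj, ← h.cardW]
    apply Finset.card_sdiff_add_card_eq_card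
    intro x hx
    rcases Finset.mem_union.1 hx with hx | hx
    · exact ((memE x).1 hx).1
    · exact ((memD x).1 hx).1
  obtain ⟨k, hk⟩ : 4 ∣ S.card := by
    apply four_dvd_of_free g φ S
    · intro x hx
      rw [memS] at hx ⊢
      refine ⟨h.aut_W hg hx.1, ?_, ?_⟩
      · rw [← hc]; intro e; exact hx.2.1 (g.injective e)
      · rw [← hc]; intro e; exact hx.2.2 (g.injective e)
    · intro x _; exact hg2 x
    · intro x hx; exact gfree x ((memS x).1 hx).1
    · intro x hx
      rw [memS] at hx ⊢
      refine ⟨h.aut_W hφ hx.1, ?_, ?_⟩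
      · intro e; exact hx.2.1 (φ.injective e)
      · rw [hc]; intro e; exact hx.2.2 (φ.injective e)
    · intro x _; exact h2 x
    · intro x hx; exact ((memS x).1 hx).2.1
    · intro x _; exact hc x
    · intro x hx; exact fun e => ((memS x).1 hx).2.2 e.symm
  -- thirds of pairs
  have third : ∀ x ∈ Wset a o, φ x ≠ x → φ x ≠ g x → ∃ u ∈ E, x ∈ Nu t φ u := by
    intro x hx hn hng
    have r := h.rot (rfl : t x (φ x) = t x (φ x)) (h.covW hx (Ne.symm hn)).1
    set y := t x (φ x) with hy
    have hyf : φ y = y := by rw [hy, hφ', h2]; exact r.2.1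
    refine ⟨y, ?_, mem_Nu.2 ⟨hn, r.2.2.2.1⟩⟩
    rw [memE]
    refine ⟨?_, hyf⟩
    by_contra hyW
    rcases nmemW.1 hyW with e | ⟨i, e⟩
    · apply hng
      rw [← r.2.2.2.1, e, ho x hx]
    · exact ha i (e ▸ hyf)
  have hEne : E.card ≠ 0 := by
    intro e0
    rw [Finset.card_eq_zero] at e0
    have : S.card = 0 := by
      rw [Finset.card_eq_zero, Finset.eq_empty_iff_forall_notMem]
      intro x hx
      have := (memS x).1 hx
      obtain ⟨u, hu, -⟩ := third x this.1 this.2.1 this.2.2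
      rw [e0] at hu; simp at hu
    rw [e0] at hSc
    simp at hSc
    omega
  have hE2 : E.card = 2 := by omega
  have hD2 : D.card = 2 := by omega
  have hS8 : S.card = 8 := by omega
  obtain ⟨u, hu⟩ : E.Nonempty := by rw [← Finset.card_pos]; omega
  have huW := ((memE u).1 hu).1
  have huf := ((memE u).1 hu).2
  have hgu : g u ∈ E := (memE _).2 ⟨h.aut_W hg huW, by rw [← hc, huf]⟩
  have hEe : E = {u, g u} := by
    symm
    apply Finset.eq_of_subset_of_card_le
    · intro x hx
      simp only [Finset.mem_insert, Finset.mem_singleton] at hx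
      rcases hx with rfl | rfl
      · exact hu
      · exact hgu
    · rw [hE2, Finset.card_pair (gfree u huW).symm]
  have hguW := ((memE _).1 hgu).1
  have NS : ∀ v ∈ E, ∀ x ∈ Nu t φ v, x ∈ S := by
    intro v hv x hx
    have hvW := ((memE v).1 hv).1
    have hxW := h.Nu_sub hφ hvW hx
    rw [memS]
    refine ⟨hxW, (mem_Nu.1 hx).1, fun e => ?_⟩
    have h1 := (mem_Nu.1 hx).2
    rw [e, ← ho x hxW] at h1
    have n := (h.covW hxW (memW.1 hxW).1).2
    have r1 := (h.rot (rfl : t o x = t o x) n).2.2.1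
    have r2 := (h.rot h1 n).2.2.1
    have e : v = o := r2.symm.trans r1
    rw [e] at hvW; exact oW hvW
  have hSe : S = Nu t φ u ∪ Nu t φ (g u) := by
    ext x
    rw [Finset.mem_union]
    constructor
    · intro hx
      have hx' := (memS x).1 hx
      obtain ⟨v, hv, hxv⟩ := third x hx'.1 hx'.2.1 hx'.2.2
      rw [hEe] at hv
      simp only [Finset.mem_insert, Finset.mem_singleton] at hv
      rcases hv with rfl | rfl
      · exact Or.inl hxv
      · exact Or.inr hxv
    · rintro (hx | hx)
      · exact NS _ hu _ hx
      · exact NS _ hgu _ hx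
  have hNeq : (Nu t φ (g u)).card = (Nu t φ u).card := by
    have : Nu t φ (g u) = (Nu t φ u).image g := by
      ext x
      rw [Finset.mem_image]
      constructor
      · intro hx
        refine ⟨g x, ?_, hg2 x⟩
        rw [mem_Nu] at hx ⊢
        refine ⟨?_, ?_⟩
        · rw [← hc]; intro e; exact hx.1 (g.injective e)
        · rw [← hc, ← hx.2, hg', hg2]
      · rintro ⟨y, hy, rfl⟩
        rw [mem_Nu] at hy ⊢
        refine ⟨?_, ?_⟩
        · rw [← hc]; intro e; exact hy.1 (g.injective e)
        · rw [← hc, ← hy.2, hg']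
    rw [this, Finset.card_image_of_injective _ g.injective]
  have hsum : S.card = (Nu t φ u).card + (Nu t φ (g u)).card := by
    rw [hSe, Finset.card_union_of_disjoint]
    rw [Finset.disjoint_left]
    intro x h1 h2
    exact gfree u huW (h.Nu_disj h2 h1)
  obtain ⟨k', hk'⟩ := h.parity_at hφ h2 huW huf
  have := (h.fixS_eq hφ ha).2
  rw [← hEdef] at this
  omega

end Conf


open Classical in
theorem free_dvd {G α : Type*} [Group G] [Finite G] [DecidableEq α] [MulAction G α]
    (H : Subgroup G) (S : Finset α) (h1 : ∀ g ∈ H, ∀ z ∈ S, g • z ∈ S)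
    (h2 : ∀ g ∈ H, ∀ z ∈ S, g • z = z → g = 1) : Nat.card H ∣ S.card := by
  have : Fintype H := Fintype.ofFinite _
  induction S using Finset.strongInduction with
  | H S ih =>
    rcases S.eq_empty_or_nonempty with rfl | ⟨x, hx⟩
    · simp
    · set O : Finset α := Finset.univ.image (fun g : H => g.1 • x) with hO
      have memO : ∀ y, y ∈ O ↔ ∃ g ∈ H, g • x = y := by
        intro y; simp [hO]
      have hsub : O ⊆ S := by
        intro y hy
        obtain ⟨g, hg, rfl⟩ := (memO y).1 hy
        exact h1 g hg x hx
      have hcard : O.card = Nat.card H := by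
        rw [hO, Finset.card_image_of_injective, Finset.card_univ, Nat.card_eq_fintype_card]
        intro g k e
        have e : g.1 • x = k.1 • x := e
        have := h2 (k.1⁻¹ * g.1) (mul_mem (inv_mem k.2) g.2) x hx
          (by rw [mul_smul, e, inv_smul_smul])
        exact Subtype.ext (inv_mul_eq_one.1 this).symm
      have hlt : S \ O ⊂ S := by
        refine Finset.ssubset_iff_subset_ne.2 ⟨Finset.sdiff_subset, fun h => ?_⟩
        have : x ∈ S \ O := by rw [h]; exact hx
        exact (Finset.mem_sdiff.1 this).2 ((memO x).2 ⟨1, one_mem _, one_smul _ _⟩)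
      have := ih _ hlt (by
        intro g hg z hz
        rw [Finset.mem_sdiff] at hz ⊢
        refine ⟨h1 g hg z hz.1, fun hc => hz.2 ?_⟩
        obtain ⟨k, hk, e⟩ := (memO _).1 hc
        exact (memO _).2 ⟨g⁻¹ * k, mul_mem (inv_mem hg) hk, by
          rw [mul_smul, e, inv_smul_smul]⟩)
        (fun g hg z hz => h2 g hg z (Finset.mem_sdiff.1 hz).1)
      rw [← Finset.card_sdiff_add_card_eq_card hsub, hcard]
      exact dvd_add this dvd_rfl

open Classical in
theorem free_dvd2 {G α : Type*} [Group G] [Finite G] [DecidableEq α] [MulAction G α]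
    (H : Subgroup G) (f : α → α) (S : Finset α) (h1 : ∀ g ∈ H, ∀ z ∈ S, g • z ∈ S)
    (h2 : ∀ g ∈ H, ∀ z ∈ S, g • z = z → g = 1) (f1 : ∀ z ∈ S, f z ∈ S)
    (f2 : ∀ z ∈ S, f (f z) = z) (f3 : ∀ g ∈ H, ∀ z ∈ S, f (g • z) = g • f z)
    (f4 : ∀ g ∈ H, ∀ z ∈ S, f z ≠ g • z) : 2 * Nat.card H ∣ S.card := by
  have : Fintype H := Fintype.ofFinite _
  induction S using Finset.strongInduction with
  | H S ih =>
    rcases S.eq_empty_or_nonempty with rfl | ⟨x, hx⟩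
    · simp
    · have cI : ∀ y ∈ S, (Finset.univ.image (fun g : H => g.1 • y)).card = Nat.card H := by
        intro y hy
        rw [Finset.card_image_of_injective, Finset.card_univ, Nat.card_eq_fintype_card]
        intro g k e
        have e : g.1 • y = k.1 • y := e
        have := h2 (k.1⁻¹ * g.1) (mul_mem (inv_mem k.2) g.2) y hy
          (by rw [mul_smul, e, inv_smul_smul])
        exact Subtype.ext (inv_mul_eq_one.1 this).symm
      set O : Finset α := Finset.univ.image (fun g : H => g.1 • x) with hO
      set O' : Finset α := Finset.univ.image (fun g : H => g.1 • f x) with hO'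
      have memO : ∀ y, y ∈ O ↔ ∃ g ∈ H, g • x = y := by
        intro y; simp [hO]
      have memO' : ∀ y, y ∈ O' ↔ ∃ g ∈ H, g • f x = y := by
        intro y; simp [hO']
      have hsub : O ∪ O' ⊆ S := by
        intro y hy
        rcases Finset.mem_union.1 hy with hy | hy
        · obtain ⟨g, hg, rfl⟩ := (memO y).1 hy
          exact h1 g hg x hx
        · obtain ⟨g, hg, rfl⟩ := (memO' y).1 hy
          exact h1 g hg _ (f1 x hx)
      have hcard : (O ∪ O').card = 2 * Nat.card H := by
        rw [Finset.card_union_of_disjoint, cI x hx, cI _ (f1 x hx), two_mul]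
        rw [Finset.disjoint_left]
        intro y hy hy'
        obtain ⟨g, hg, rfl⟩ := (memO y).1 hy
        obtain ⟨k, hk, e⟩ := (memO' _).1 hy'
        refine f4 (k⁻¹ * g) (mul_mem (inv_mem hk) hg) x hx ?_
        rw [mul_smul, ← e, inv_smul_smul]
      have hlt : S \ (O ∪ O') ⊂ S := by
        refine Finset.ssubset_iff_subset_ne.2 ⟨Finset.sdiff_subset, fun h => ?_⟩
        have : x ∈ S \ (O ∪ O') := by rw [h]; exact hx
        exact (Finset.mem_sdiff.1 this).2 (Finset.mem_union_left _
          ((memO x).2 ⟨1, one_mem _, one_smul _ _⟩))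
      have := ih _ hlt (by
        intro g hg z hz
        rw [Finset.mem_sdiff] at hz ⊢
        refine ⟨h1 g hg z hz.1, fun hc => hz.2 ?_⟩
        rcases Finset.mem_union.1 hc with hc | hc
        · obtain ⟨k, hk, e⟩ := (memO _).1 hc
          exact Finset.mem_union_left _ ((memO _).2 ⟨g⁻¹ * k, mul_mem (inv_mem hg) hk, by
            rw [mul_smul, e, inv_smul_smul]⟩)
        · obtain ⟨k, hk, e⟩ := (memO' _).1 hc
          exact Finset.mem_union_right _ ((memO' _).2 ⟨g⁻¹ * k, mul_mem (inv_mem hg) hk, by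
            rw [mul_smul, e, inv_smul_smul]⟩))
        (fun g hg z hz => h2 g hg z (Finset.mem_sdiff.1 hz).1)
        (by
        intro z hz
        rw [Finset.mem_sdiff] at hz ⊢
        refine ⟨f1 z hz.1, fun hc => hz.2 ?_⟩
        rcases Finset.mem_union.1 hc with hc | hc
        · obtain ⟨k, hk, e⟩ := (memO _).1 hc
          refine Finset.mem_union_right _ ((memO' _).2 ⟨k, hk, ?_⟩)
          rw [← f3 k hk x hx, e, f2 z hz.1]
        · obtain ⟨k, hk, e⟩ := (memO' _).1 hc
          refine Finset.mem_union_left _ ((memO _).2 ⟨k, hk, ?_⟩)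
          rw [← f2 _ (h1 k hk x hx), f3 k hk x hx, e, f2 z hz.1])
        (fun z hz => f2 z (Finset.mem_sdiff.1 hz).1)
        (fun g hg z hz => f3 g hg z (Finset.mem_sdiff.1 hz).1)
        (fun g hg z hz => f4 g hg z (Finset.mem_sdiff.1 hz).1)
      rw [← Finset.card_sdiff_add_card_eq_card hsub, hcard]
      exact dvd_add this dvd_rfl

theorem card_ker_map {G N : Type*} [Group G] [Group N] (q : G →* N) (P : Subgroup G) :
    Nat.card ↥(P ⊓ q.ker) * Nat.card ↥(P.map q) = Nat.card P := by
  rw [← Subgroup.relIndex_ker, inf_comm]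
  rw [Subgroup.relIndex, ← Subgroup.card_mul_index (q.ker.subgroupOf P)]
  congr 1
  rw [← Subgroup.subgroupOf_map_subtype]
  exact (Nat.card_congr (Subgroup.equivMapOfInjective _ _ P.subtype_injective).toEquiv).symm

namespace Conf
variable {t : V17 → V17 → V17} {a : Fin 4 → V17} {o : V17}

theorem kerF (h : Conf t a o) {u : autT t} (hu : u ∈ h.q.ker) {f : V17} (hf : f ∉ Wset a o) :
    u.1 f = f := h.K_fix u.2 ((h.q_eq_one u).1 hu) hf

theorem kerfree (h : Conf t a o) {u : autT t} (hu : u ∈ h.q.ker) {z : V17} (hz : z ∈ Wset a o)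
    (e : u.1 z = z) : u = 1 := by
  by_contra hc
  exact h.K_free u.2 ((h.q_eq_one u).1 hu) (fun e => hc (Subtype.ext e)) hz e

theorem kercomm (h : Conf t a o) {u : autT t} (hu : u ∈ h.q.ker) {f : V17} (hf : f ∉ Wset a o)
    (z : V17) : u.1 (t f z) = t f (u.1 z) := by
  rw [u.2, h.kerF hu hf]

theorem card_dvd12 (h : Conf t a o) (U : Subgroup (autT t))
    (hU : ∀ u ∈ U, ∀ z ∈ Wset a o, u.1 z = z → u = 1) : Nat.card U ∣ 12 := by
  rw [← h.cardW]
  exact free_dvd U _ (fun g _ z hz => h.aut_W g.2 hz) hU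

open Classical in
noncomputable def IS (t : V17 → V17 → V17) (a : Fin 4 → V17) (o : V17) (U : Subgroup (autT t))
    (f : V17) : Finset V17 :=
  (Wset a o).filter (fun z => ∃ u ∈ U, t f z = u.1 z)

theorem mem_IS {U : Subgroup (autT t)} {f z : V17} :
    z ∈ IS t a o U f ↔ z ∈ Wset a o ∧ ∃ u ∈ U, t f z = u.1 z := by
  simp [IS]

theorem IS_smul (h : Conf t a o) {U : Subgroup (autT t)} (hU : U ≤ h.q.ker) {f : V17}
    (hf : f ∉ Wset a o) {u : autT t} (hu : u ∈ U) {z : V17} (hz : z ∈ IS t a o U f) :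
    u.1 z ∈ IS t a o U f := by
  obtain ⟨hzW, v, hv, e⟩ := mem_IS.1 hz
  refine mem_IS.2 ⟨h.aut_W u.2 hzW, u * v * u⁻¹, mul_mem (mul_mem hu hv) (inv_mem hu), ?_⟩
  rw [← h.kercomm (hU hu) hf, e]
  simp

theorem IS_t (h : Conf t a o) {U : Subgroup (autT t)} (hU : U ≤ h.q.ker) {f : V17}
    (hf : f ∉ Wset a o) {z : V17} (hz : z ∈ IS t a o U f) : t f z ∈ IS t a o U f := by
  obtain ⟨hzW, v, hv, e⟩ := mem_IS.1 hz
  rw [e]; exact h.IS_smul hU hf hv hz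

theorem IS_dvd (h : Conf t a o) {U : Subgroup (autT t)} (hU : U ≤ h.q.ker) {f : V17}
    (hf : f ∉ Wset a o) : Nat.card U ∣ (IS t a o U f).card :=
  free_dvd U _ (fun _ hg _ hz => h.IS_smul hU hf hg hz)
    (fun _ hg _ hz e => h.kerfree (hU hg) (mem_IS.1 hz).1 e)

theorem IS_dvd2 (h : Conf t a o) {U : Subgroup (autT t)} (hU : U ≤ h.q.ker) {f : V17}
    (hf : f ∉ Wset a o) :
    ∃ k, 12 = (IS t a o U f).card + 2 * Nat.card U * k := by
  have hs : IS t a o U f ⊆ Wset a o := fun z hz => (mem_IS.1 hz).1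
  have : 2 * Nat.card U ∣ (Wset a o \ IS t a o U f).card := by
    apply free_dvd2 U (t f)
    · intro g hg z hz
      rw [Finset.mem_sdiff] at hz ⊢
      refine ⟨h.aut_W g.2 hz.1, fun hc => hz.2 ?_⟩
      have := h.IS_smul hU hf (inv_mem hg) hc
      have e : (g⁻¹).1 (g • z) = z := inv_smul_smul g z
      rwa [e] at this
    · intro g hg z hz e
      exact h.kerfree (hU hg) (Finset.mem_sdiff.1 hz).1 e
    · intro z hz
      rw [Finset.mem_sdiff] at hz ⊢
      refine ⟨h.mW hf hz.1, fun hc => hz.2 ?_⟩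
      have := h.IS_t hU hf hc
      rwa [h.inv] at this
    · intro z _; exact h.inv _ _
    · intro g hg z _
      exact (h.kercomm (hU hg) hf z).symm
    · intro g hg z hz e
      rw [Finset.mem_sdiff] at hz
      exact hz.2 (mem_IS.2 ⟨hz.1, g, hg, e⟩)
  obtain ⟨k, hk⟩ := this
  refine ⟨k, ?_⟩
  have e := Finset.card_sdiff_add_card_eq_card hs
  rw [h.cardW] at e
  omega

open Classical in
/-- involutions of `U` -/
noncomputable def Inv (U : Subgroup (autT t)) : Finset (autT t) :=
  haveI : Fintype (autT t) := Fintype.ofFinite _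
  Finset.univ.filter (fun u => u ∈ U ∧ u ≠ 1 ∧ u * u = 1)

theorem mem_Inv {U : Subgroup (autT t)} {u : autT t} :
    u ∈ Inv U ↔ u ∈ U ∧ u ≠ 1 ∧ u * u = 1 := by simp [Inv]

theorem card_Inv (U : Subgroup (autT t)) : (Inv U).card + 1 ≤ Nat.card U := by
  classical
  have : Fintype (autT t) := Fintype.ofFinite _
  have h1 : (1 : autT t) ∉ Inv U := by rw [mem_Inv]; simp
  rw [← Finset.card_insert_of_notMem h1, Nat.card_eq_fintype_card, Fintype.card_subtype]
  apply Finset.card_le_card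
  intro u hu
  rcases Finset.mem_insert.1 hu with rfl | hu
  · simp
  · simpa using (mem_Inv.1 hu).1

/-- for involution `u` in the kernel the third point on `{z, u z}` is a label. -/
theorem inv_third (h : Conf t a o) {u : autT t} (hu : u ∈ h.q.ker) (hne : u ≠ 1)
    (h2 : u * u = 1) {z : V17} (hz : z ∈ Wset a o) : t z (u.1 z) ∉ Wset a o := by
  intro hc
  refine hne (h.kerfree hu hc ?_)
  have e : u.1 (u.1 z) = z := by
    have := congrArg (fun g : autT t => g.1 z) h2
    simpa using this
  rw [u.2, e, h.symW (h.aut_W u.2 hz)]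

theorem label_inv (h : Conf t a o) {U : Subgroup (autT t)} (hU : U ≤ h.q.ker) {f : V17}
    (hf : f ∉ Wset a o) {z : V17} (hz : z ∈ Wset a o) {u : autT t} (hu : u ∈ U)
    (e : t f z = u.1 z) : u ∈ Inv U ∧ f = t z (u.1 z) := by
  have hfz : f ≠ z := by rintro rfl; exact hf hz
  have n := (h.covW hz hfz.symm).2
  have r := h.rot (rfl : t f z = t f z) n
  refine ⟨mem_Inv.2 ⟨hu, ?_, ?_⟩, ?_⟩
  · rintro rfl
    exact n (by rw [e]; rfl)
  · apply h.kerfree (mul_mem (hU hu) (hU hu)) hz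
    change u.1 (u.1 z) = z
    rw [← e, h.kercomm (hU hu) hf, ← e, h.inv]
  · rw [← e]; exact r.2.2.1.symm

theorem sumIS (h : Conf t a o) {U : Subgroup (autT t)} (hU : U ≤ h.q.ker) :
    ∑ f ∈ Finset.univ \ Wset a o, (IS t a o U f).card = 12 * (Inv U).card ∧
    ∀ z ∈ Wset a o, ((Finset.univ \ Wset a o).filter (fun f => z ∈ IS t a o U f)).card
      = (Inv U).card := by
  classical
  have key : ∀ z ∈ Wset a o,
      ((Finset.univ \ Wset a o).filter (fun f => z ∈ IS t a o U f)).card = (Inv U).card := by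
    intro z hz
    symm
    apply Finset.card_bij (fun u _ => t z (u.1 z))
    · intro u hu
      rw [mem_Inv] at hu
      have hF := h.inv_third (hU hu.1) hu.2.1 hu.2.2 hz
      simp only [Finset.mem_filter, Finset.mem_sdiff, Finset.mem_univ, true_and]
      refine ⟨hF, mem_IS.2 ⟨hz, u, hu.1, ?_⟩⟩
      have hzu : z ≠ u.1 z := fun e => hu.2.1 (h.kerfree (hU hu.1) hz e.symm)
      exact (h.rot (rfl : t z (u.1 z) = _) (h.covW hz hzu).1).2.2.2.1
    · intro u hu v hv e
      have e := congrArg (t z) e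
      rw [h.inv, h.inv] at e
      have : v⁻¹ * u = 1 := by
        apply h.kerfree (mul_mem (inv_mem (hU (mem_Inv.1 hv).1)) (hU (mem_Inv.1 hu).1)) hz
        change (v.1⁻¹) (u.1 z) = z
        rw [e]; simp
      exact (inv_mul_eq_one.1 this).symm
    · intro f hf
      simp only [Finset.mem_filter, Finset.mem_sdiff, Finset.mem_univ, true_and] at hf
      obtain ⟨hf, hI⟩ := hf
      obtain ⟨_, u, hu, e⟩ := mem_IS.1 hI
      obtain ⟨h1, h2⟩ := h.label_inv hU hf hz hu e
      exact ⟨u, h1, h2.symm⟩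
  refine ⟨?_, key⟩
  have := Finset.sum_card_bipartiteAbove_eq_sum_card_bipartiteBelow
    (s := Finset.univ \ Wset a o) (t := Wset a o) (fun f z => z ∈ IS t a o U f)
  have e1 : ∀ f, Finset.bipartiteAbove (fun f z => z ∈ IS t a o U f) (Wset a o) f
      = IS t a o U f := by
    intro f; ext z
    simp only [Finset.bipartiteAbove, Finset.mem_filter]
    exact ⟨fun x => x.2, fun x => ⟨(mem_IS.1 x).1, x⟩⟩
  simp only [e1] at this
  rw [this]
  change ∑ z ∈ Wset a o, ((Finset.univ \ Wset a o).filter (fun f => z ∈ IS t a o U f)).card = _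
  rw [Finset.sum_congr rfl key, Finset.sum_const, h.cardW, smul_eq_mul]

theorem Fset (h : Conf t a o) :
    Finset.univ \ Wset a o = insert o (Finset.univ.image a) ∧ o ∉ Finset.univ.image a := by
  constructor
  · ext z
    simp only [Finset.mem_sdiff, Finset.mem_univ, true_and, nmemW, Finset.mem_insert,
      Finset.mem_image]
    grind
  · simp only [Finset.mem_image, Finset.mem_univ, true_and, not_exists]
    exact fun i e => h.one i e.symm

theorem sumF (h : Conf t a o) (g : V17 → ℕ) :
    ∑ f ∈ Finset.univ \ Wset a o, g f = g o + (g (a 0) + g (a 1) + g (a 2) + g (a 3)) := by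
  rw [h.Fset.1, Finset.sum_insert h.Fset.2, Finset.sum_image (fun x _ y _ e => h.ainj e),
    Fin.sum_univ_four]

theorem oF : o ∉ Wset a o := nmemW.2 (Or.inl rfl)
theorem aF (i : Fin 4) : a i ∉ Wset a o := nmemW.2 (Or.inr ⟨i, rfl⟩)

theorem IS_conj (h : Conf t a o) {U : Subgroup (autT t)} {p : autT t}
    (hp : ∀ u ∈ U, p * u * p⁻¹ ∈ U) (f : V17) :
    (IS t a o U f).card ≤ (IS t a o U (p.1 f)).card := by
  apply Finset.card_le_card_of_injOn p.1
  · intro z hz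
    obtain ⟨hzW, u, hu, e⟩ := mem_IS.1 hz
    refine mem_IS.2 ⟨h.aut_W p.2 hzW, _, hp u hu, ?_⟩
    rw [← p.2, e]; simp
  · exact fun x _ y _ e => p.1.injective e

end Conf


namespace Conf
variable {t : V17 → V17 → V17} {a : Fin 4 → V17} {o : V17}

/-- element-wise version of Lemma A -/
theorem lemA' (h : Conf t a o) {g φ : autT t} (hc : g * φ = φ * g) (hg2 : g * g = 1)
    (h2 : φ * φ = 1) (ho : ∀ z ∈ Wset a o, t o z = g.1 z) (ha : ∀ i, h.q φ i ≠ i)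
    (hga : (∀ i, h.q (g * φ) i ≠ i) ∨ (g ≠ φ ∧ h.q (g * φ) = 1)) : False := by
  have app : ∀ {x y : autT t}, x = y → ∀ z, x.1 z = y.1 z := by rintro x _ rfl z; rfl
  refine h.lemA g.2 φ.2 (fun x => app hc x) (fun x => app hg2 x) (fun x => app h2 x) ho
    (fun i e => ha i (h.ainj ?_)) ?_
  · rw [← h.q_spec, e]
  · rcases hga with hga | ⟨hne, hga⟩
    · left
      intro i e
      refine hga i (h.ainj ?_)
      rw [← h.q_spec]
      exact e
    · right
      refine ⟨fun e => hne (Subtype.ext e), fun i => ?_⟩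
      exact (h.q_eq_one (g * φ)).1 hga i

def rotP : Equiv.Perm (Fin 4) := Equiv.addRight 1

theorem rotP_mem : rotP ∈ D4 := by rw [mem_D4]; decide

theorem case16_two (h : Conf t a o) (P : Subgroup (autT t)) (hP : Nat.card P = 16)
    (hU : Nat.card ↥(P ⊓ h.q.ker) = 2) : False := by
  classical
  have hle : P.map h.q ≤ D4 := by
    rintro _ ⟨p, _, rfl⟩; exact h.q_mem p
  have hQ : P.map h.q = D4 := by
    apply Subgroup.eq_of_le_of_card_ge hle
    have := card_ker_map h.q P
    rw [hU, hP] at this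
    rw [card_D4]; omega
  set U := P ⊓ h.q.ker with hUd
  have hUk : U ≤ h.q.ker := inf_le_right
  have : Nontrivial U := (Finite.one_lt_card_iff_nontrivial).1 (by rw [hU]; norm_num)
  obtain ⟨⟨σ, hσU⟩, hσ⟩ := exists_ne (1 : U)
  have hσ1 : σ ≠ 1 := fun e => hσ (Subtype.ext e)
  have hall : ∀ u ∈ U, u = 1 ∨ u = σ := by
    intro u hu
    by_contra hc
    push Not at hc
    have : Fintype U := Fintype.ofFinite _
    have h3 : ({1, ⟨σ, hσU⟩, ⟨u, hu⟩} : Finset U).card = 3 := by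
      rw [Finset.card_eq_three]
      refine ⟨_, _, _, fun e => hσ e.symm, fun e => hc.1 ?_, fun e => hc.2 ?_, rfl⟩
      · exact (congrArg Subtype.val e).symm
      · exact (congrArg Subtype.val e).symm
    have := Finset.card_le_univ ({1, ⟨σ, hσU⟩, ⟨u, hu⟩} : Finset U)
    rw [h3, ← Nat.card_eq_fintype_card, hU] at this
    omega
  have hσ2 : σ * σ = 1 := by
    rcases hall _ (mul_mem hσU hσU) with e | e
    · exact e
    · exact absurd (mul_eq_left.1 e) hσ1
  have hnorm : ∀ p ∈ P, ∀ u ∈ U, p * u * p⁻¹ ∈ U := by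
    intro p hp u hu
    refine Subgroup.mem_inf.2 ⟨mul_mem (mul_mem hp hu.1) (inv_mem hp), ?_⟩
    have : h.q u = 1 := hu.2
    rw [MonoidHom.mem_ker, map_mul, map_mul, this, mul_one, map_inv, mul_inv_cancel]
  have hcen : ∀ p ∈ P, σ * p = p * σ := by
    intro p hp
    rcases hall _ (hnorm p hp σ hσU) with e | e
    · exfalso; apply hσ1
      rwa [mul_inv_eq_one, mul_eq_left] at e
    · rw [mul_inv_eq_iff_eq_mul] at e
      exact e.symm
  -- the involution at `o`
  obtain ⟨ρ, hρP, hρ⟩ : rotP ∈ P.map h.q := by rw [hQ]; exact rotP_mem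
  have hInv : (Inv U).card = 1 := by
    have h1 := card_Inv U
    rw [hU] at h1
    have : 0 < (Inv U).card := Finset.card_pos.2 ⟨σ, mem_Inv.2 ⟨hσU, hσ1, hσ2⟩⟩
    omega
  have hsum := (h.sumIS hUk).1
  rw [h.sumF, hInv] at hsum
  have heq : ∀ i, (IS t a o U (a i)).card ≤ (IS t a o U (a (i+1))).card := by
    intro i
    have := h.IS_conj (hnorm ρ hρP) (a i)
    rwa [h.q_spec, hρ] at this
  have h0 := heq 0
  have h1 := heq 1
  have h2 := heq 2
  have h3 := heq 3
  simp only [Fin.isValue, zero_add, Fin.reduceAdd] at h0 h1 h2 h3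
  obtain ⟨k, hk⟩ := h.IS_dvd2 hUk (aF (a := a) (o := o) 0)
  rw [hU] at hk
  have hIo : (IS t a o U o).card = 12 := by omega
  have hW : IS t a o U o = Wset a o := by
    apply Finset.eq_of_subset_of_card_le
    · exact fun z hz => (mem_IS.1 hz).1
    · rw [h.cardW, hIo]
  have ho : ∀ z ∈ Wset a o, t o z = σ.1 z := by
    intro z hz
    rw [← hW] at hz
    obtain ⟨hzW, u, hu, e⟩ := mem_IS.1 hz
    rcases hall u hu with rfl | rfl
    · exfalso
      have := (h.label_inv hUk oF hzW hu e).1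
      exact (mem_Inv.1 this).2.1 rfl
    · exact e
  have hρ4 : ρ ^ 4 ∈ U := by
    refine Subgroup.mem_inf.2 ⟨pow_mem hρP 4, ?_⟩
    rw [MonoidHom.mem_ker, map_pow, hρ]
    decide
  rcases hall _ hρ4 with e | e
  · refine h.lemA' (g := σ) (φ := ρ ^ 2) (hcen _ (pow_mem hρP 2)) hσ2 ?_ ho ?_ (Or.inl ?_)
    · rw [← pow_add]; exact e
    · rw [map_pow, hρ]; decide
    · rw [map_mul, hUk hσU, one_mul, map_pow, hρ]; decide
  · have hord : Nat.card (Subgroup.zpowers ρ) ∣ 12 := by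
      apply h.card_dvd12
      intro u hu z hz huz
      have ρ8 : ρ ^ 8 = 1 := by
        rw [show 8 = 4 + 4 from rfl, pow_add, e, hσ2]
      have hfin : IsOfFinOrder ρ := isOfFinOrder_of_finite ρ
      obtain ⟨k, hk, e'⟩ := hfin.mem_zpowers_iff_mem_range_orderOf.1 hu |> Finset.mem_image.1
      have e' : ρ ^ k = u := e'
      have hk8 : k < 8 := lt_of_lt_of_le (Finset.mem_range.1 hk)
        (orderOf_le_of_pow_eq_one (by norm_num) ρ8)
      have pw : ∀ m, (u ^ m).1 z = z := by
        intro m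
        induction m with
        | zero => rfl
        | succ m ih =>
          rw [pow_succ]
          change (u ^ m).1 (u.1 z) = z
          rw [huz, ih]
      have bad : ∀ m, u ^ m ≠ σ := by
        intro m em
        have := pw m
        rw [em] at this
        exact hσ1 (h.kerfree (hUk hσU) hz this)
      have red : ∀ m j, k * m = 4 + 8 * j → False := by
        intro m j hm
        apply bad m
        rw [← e', ← pow_mul, hm, pow_add, e, pow_mul, ρ8, one_pow, mul_one]
      rw [← e']
      interval_cases k
      · simp
      · exact (red 4 0 rfl).elim
      · exact (red 2 0 rfl).elim
      · exact (red 4 1 rfl).elim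
      · exact (red 1 0 rfl).elim
      · exact (red 4 2 rfl).elim
      · exact (red 2 1 rfl).elim
      · exact (red 4 3 rfl).elim
    rw [Nat.card_zpowers] at hord
    have : orderOf ρ = 2 ^ (2 + 1) := by
      apply orderOf_eq_prime_pow
      · rw [show 2 ^ 2 = 4 from rfl, e]; exact hσ1
      · rw [show 2 ^ (2+1) = 4 + 4 from rfl, pow_add, e, hσ2]
    rw [this] at hord
    revert hord; decide

theorem fin9 (h : Conf t a o) {U : Subgroup (autT t)} (hU : U ≤ h.q.ker) (hc : Nat.card U = 4)
    {p : autT t} (hp1 : p ≠ 1) {f1 f2 f3 w : V17} (hf1 : f1 ∉ Wset a o) (hf2 : f2 ∉ Wset a o)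
    (hf3 : f3 ∉ Wset a o) (n12 : f1 ≠ f2) (n13 : f1 ≠ f3) (n23 : f2 ≠ f3)
    (p1 : p.1 f1 = f1) (p2 : p.1 f2 = f2) (p3 : p.1 f3 = f3) (hw : w ∈ Wset a o)
    (pw : p.1 w = w) (c1 : (IS t a o U f1).card = 4)
    (hcov : ∀ z ∈ Wset a o, z ∈ IS t a o U f1 ∨ z ∈ IS t a o U f2 ∨ z ∈ IS t a o U f3)
    (d12 : ∀ z, z ∈ IS t a o U f1 → z ∉ IS t a o U f2)
    (d13 : ∀ z, z ∈ IS t a o U f1 → z ∉ IS t a o U f3)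
    (d23 : ∀ z, z ∈ IS t a o U f2 → z ∉ IS t a o U f3)
    (w1 : w ∈ IS t a o U f1) : False := by
  classical
  have : Fintype U := Fintype.ofFinite _
  have orb : ∀ z ∈ IS t a o U f1, ∃ u ∈ U, z = u.1 w := by
    have hs : (Finset.univ.image (fun g : U => g.1.1 w)) ⊆ IS t a o U f1 := by
      intro y hy
      obtain ⟨g, -, rfl⟩ := Finset.mem_image.1 hy
      exact h.IS_smul hU hf1 g.2 w1
    have hcd : (Finset.univ.image (fun g : U => g.1.1 w)).card = 4 := by
      rw [Finset.card_image_of_injective, Finset.card_univ, ← Nat.card_eq_fintype_card, hc]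
      intro g k e
      have e : g.1.1 w = k.1.1 w := e
      have : k.1⁻¹ * g.1 = 1 := by
        apply h.kerfree (mul_mem (inv_mem (hU k.2)) (hU g.2)) hw
        change (k.1.1⁻¹) (g.1.1 w) = w
        rw [e]; simp
      exact Subtype.ext (inv_mul_eq_one.1 this).symm
    have he := Finset.eq_of_subset_of_card_le hs (by rw [hcd, c1])
    intro z hz
    rw [← he] at hz
    obtain ⟨g, -, rfl⟩ := Finset.mem_image.1 hz
    exact ⟨g.1, g.2, rfl⟩
  have nf : ∀ f, f ∉ Wset a o → w ∉ IS t a o U f → t f w ∉ IS t a o U f1 := by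
    intro f hf hwf hcc
    obtain ⟨u, hu, e⟩ := orb _ hcc
    exact hwf (mem_IS.2 ⟨hw, u, hu, e⟩)
  have w2 := d12 w w1
  have w3 := d13 w w1
  have z3 : t f2 w ∈ IS t a o U f3 := by
    rcases hcov _ (h.mW hf2 hw) with hh | hh | hh
    · exact absurd hh (nf f2 hf2 w2)
    · have := h.IS_t hU hf2 hh
      rw [h.inv] at this
      exact absurd this w2
    · exact hh
  have y2 : t f3 w ∈ IS t a o U f2 := by
    rcases hcov _ (h.mW hf3 hw) with hh | hh | hh
    · exact absurd hh (nf f3 hf3 w3)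
    · exact hh
    · have := h.IS_t hU hf3 hh
      rw [h.inv] at this
      exact absurd this w3
  have w1' := h.IS_t hU hf1 w1
  have z3' := h.IS_t hU hf3 z3
  have y2' := h.IS_t hU hf2 y2
  have ne : ∀ f z, f ∉ Wset a o → z ∈ Wset a o → t f z ≠ z := by
    intro f z hf hz
    exact (h.covW hz (by rintro rfl; exact hf hz)).2
  have toW : ∀ {f z}, z ∈ IS t a o U f → z ∈ Wset a o := fun hz => (mem_IS.1 hz).1
  have nw := ne f1 w hf1 hw
  have nz := ne f3 _ hf3 (toW z3)
  have ny := ne f2 _ hf2 (toW y2)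
  have key : ({f1, f2, f3, w, t f1 w, t f2 w, t f3 (t f2 w), t f3 w, t f2 (t f3 w)} :
      Finset V17).card = 9 := by
    have a1 := toW w1'
    have a2 := toW z3
    have a3 := toW z3'
    have a4 := toW y2
    have a5 := toW y2'
    generalize t f1 w = w' at *
    generalize t f3 (t f2 w) = z' at *
    generalize t f2 (t f3 w) = y' at *
    generalize t f2 w = z at *
    generalize t f3 w = y at *
    generalize Wset a o = W at *
    generalize IS t a o U f1 = I1 at *
    generalize IS t a o U f2 = I2 at *
    generalize IS t a o U f3 = I3 at *
    clear orb hcov nf ne this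
    rw [Finset.card_insert_of_notMem, Finset.card_insert_of_notMem,
      Finset.card_insert_of_notMem, Finset.card_insert_of_notMem,
      Finset.card_insert_of_notMem, Finset.card_insert_of_notMem,
      Finset.card_insert_of_notMem, Finset.card_insert_of_notMem, Finset.card_singleton]
    all_goals
      simp only [Finset.mem_insert, Finset.mem_singleton, not_or]
      grind
  have hsub : ({f1, f2, f3, w, t f1 w, t f2 w, t f3 (t f2 w), t f3 w, t f2 (t f3 w)} :
      Finset V17) ⊆ fixS p.1 := by
    intro x hx
    simp only [Finset.mem_insert, Finset.mem_singleton] at hx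
    have hpt : ∀ x y, p.1 (t x y) = t (p.1 x) (p.1 y) := p.2
    rw [mem_fixS]
    rcases hx with rfl | rfl | rfl | rfl | rfl | rfl | rfl | rfl | rfl <;>
      simp only [hpt, p1, p2, p3, pw]
  have c := Finset.card_le_card hsub
  have c8 := h.fix8 p.2 (fun e => hp1 (Subtype.ext e))
  omega

def stT (T : Fin 4 → Bool) : Finset (Equiv.Perm (Fin 4)) :=
  Finset.univ.filter (fun π =>
      (∀ i, π (i+1) = π i + 1 ∨ π (i+1) = π i + 3) ∧ ∀ i, T (π i) = T i)

def ctT (T : Fin 4 → Bool) : ℕ := (Finset.univ.filter (fun i => T i = true)).card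

theorem d4_types : ∀ T : Fin 4 → Bool, (ctT T = 1 ∨ ctT T = 2) → 4 ≤ (stT T).card →
    (stT T).card = 4 ∧ ctT T = 2 ∧
    ∃ k, T k = false ∧ T (k+2) = false ∧ T (k+1) = true ∧ T (k+3) = true ∧
      ∃ π ∈ stT T, π ≠ 1 ∧ π k = k := by
  set_option maxRecDepth 4000 in
  decide

end Conf


namespace Conf
variable {t : V17 → V17 → V17} {a : Fin 4 → V17} {o : V17}

theorem sumF' (h : Conf t a o) (g : V17 → ℕ) (k : Fin 4) :
    ∑ f ∈ Finset.univ \ Wset a o, g f =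
      g o + (g (a k) + g (a (k+2))) + (g (a (k+1)) + g (a (k+3))) := by
  rw [h.sumF]
  fin_cases k <;> simp <;> ring

theorem case16_four (h : Conf t a o) (P : Subgroup (autT t)) (hP : Nat.card P = 16)
    (hU : Nat.card ↥(P ⊓ h.q.ker) = 4) : False := by
  classical
  have hQ : Nat.card (P.map h.q) = 4 := by
    have := card_ker_map h.q P
    rw [hU, hP] at this
    omega
  set U := P ⊓ h.q.ker with hUd
  have hUk : U ≤ h.q.ker := inf_le_right
  have hnorm : ∀ p ∈ P, ∀ u ∈ U, p * u * p⁻¹ ∈ U := by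
    intro p hp u hu
    refine Subgroup.mem_inf.2 ⟨mul_mem (mul_mem hp hu.1) (inv_mem hp), ?_⟩
    have : h.q u = 1 := hu.2
    rw [MonoidHom.mem_ker, map_mul, map_mul, this, mul_one, map_inv, mul_inv_cancel]
  have hcf : ∀ f, f ∉ Wset a o → (IS t a o U f).card = 4 ∨ (IS t a o U f).card = 12 := by
    intro f hf
    have h1 := h.IS_dvd hUk hf
    obtain ⟨k, hk⟩ := h.IS_dvd2 hUk hf
    rw [hU] at h1 hk
    omega
  have hN := card_Inv U
  rw [hU] at hN
  obtain ⟨hsum, hlab⟩ := h.sumIS hUk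
  have hsum' := hsum
  rw [h.sumF] at hsum
  have co := hcf o oF
  have ca := fun i => hcf (a i) (aF i)
  have heq : ∀ p ∈ P, ∀ i, (IS t a o U (a (h.q p i))).card = (IS t a o U (a i)).card := by
    intro p hp i
    apply le_antisymm
    · have := h.IS_conj (hnorm p⁻¹ (inv_mem hp)) (a (h.q p i))
      rw [h.q_spec, map_inv] at this
      simpa using this
    · have := h.IS_conj (hnorm p hp) (a i)
      rwa [h.q_spec] at this
  set T : Fin 4 → Bool := fun i => decide ((IS t a o U (a i)).card = 12) with hT
  have hct : ctT T = (if T 0 then 1 else 0) + (if T 1 then 1 else 0) + (if T 2 then 1 else 0)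
      + (if T 3 then 1 else 0) := by
    rw [ctT, Finset.card_filter, Fin.sum_univ_four]
  have hval : ∀ i, (IS t a o U (a i)).card = 4 + 8 * (if T i then 1 else 0) := by
    intro i
    rcases ca i with e | e <;> simp [hT, e]
  rw [hval 0, hval 1, hval 2, hval 3] at hsum
  have hN3 : (Inv U).card = 3 := by omega
  have hct2 : ctT T = 1 ∨ ctT T = 2 := by omega
  have hsubQ : ∀ π ∈ P.map h.q, π ∈ stT T := by
    rintro _ ⟨p, hp, rfl⟩
    rw [stT, Finset.mem_filter]
    refine ⟨Finset.mem_univ _, h.q_mem p, fun i => ?_⟩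
    simp only [hT, heq p hp i]
  set Qf : Finset (Equiv.Perm (Fin 4)) := Finset.univ.filter (fun π => π ∈ P.map h.q) with hQf
  have hQfc : Qf.card = 4 := by
    refine Eq.trans ?_ hQ
    rw [Nat.card_eq_fintype_card, Fintype.card_subtype]
  have hQs : Qf ⊆ stT T := fun π hπ => hsubQ π (Finset.mem_filter.1 hπ).2
  obtain ⟨hs4, hct2, k, k0, k2, k1, k3, π, hπ, hπ1, hπk⟩ :=
    d4_types T hct2 (hQfc.symm.le.trans (Finset.card_le_card hQs))
  have hQe := Finset.eq_of_subset_of_card_le hQs (by rw [hQfc, hs4])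
  rw [← hQe, hQf, Finset.mem_filter] at hπ
  have hπQ := hπ.2
  have co4 : (IS t a o U o).card = 4 := by omega
  have ck : (IS t a o U (a k)).card = 4 := by rw [hval, k0]; rfl
  have ck2 : (IS t a o U (a (k+2))).card = 4 := by rw [hval, k2]; rfl
  have full : ∀ i, T i = true → ∀ z ∈ Wset a o, z ∈ IS t a o U (a i) := by
    intro i hi z hz
    have : IS t a o U (a i) = Wset a o := by
      apply Finset.eq_of_subset_of_card_le
      · exact fun z hz => (mem_IS.1 hz).1
      · rw [h.cardW, hval, hi]; rfl
    rw [this]; exact hz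
  -- an element with a fixed point
  obtain ⟨p, hpP, hpk, w, hw, pw, hp1⟩ : ∃ p ∈ P, h.q p k = k ∧ ∃ w ∈ Wset a o,
      p.1 w = w ∧ p ≠ 1 := by
    by_contra hcon
    push Not at hcon
    let Pk : Subgroup (autT t) :=
      P ⊓ (MulAction.stabilizer (Equiv.Perm (Fin 4)) k).comap h.q
    have d12 : Nat.card Pk ∣ 12 := by
      apply h.card_dvd12
      intro u hu z hz e
      exact hcon u hu.1 hu.2 z hz e
    have d16 : Nat.card Pk ∣ 16 := by
      rw [← hP]; exact Subgroup.card_dvd_of_le inf_le_left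
    have hc := card_ker_map h.q Pk
    have e1 : Pk ⊓ h.q.ker = U := by
      ext x
      simp only [Pk, hUd, Subgroup.mem_inf, Subgroup.mem_comap, MulAction.mem_stabilizer_iff,
        MonoidHom.mem_ker]
      constructor
      · rintro ⟨⟨x1, x2⟩, x3⟩; exact ⟨x1, x3⟩
      · rintro ⟨x1, x3⟩; exact ⟨⟨x1, by rw [x3]; rfl⟩, x3⟩
    have e2 : 1 < Nat.card (Pk.map h.q) := by
      rw [Finite.one_lt_card_iff_nontrivial]
      obtain ⟨p, hp, hpe⟩ := hπQ
      refine ⟨⟨⟨π, p, ⟨hp, ?_⟩, hpe⟩, 1, fun e => hπ1 (congrArg Subtype.val e)⟩⟩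
      simp only [Subgroup.coe_toSubmonoid, SetLike.mem_coe]
      change h.q p k = k
      rw [hpe, hπk]
    rw [e1, hU] at hc
    have := Nat.dvd_gcd d12 d16
    have := Nat.le_of_dvd (by norm_num) this
    have h4 : Nat.card Pk ≤ 4 := this
    rw [← hc] at h4
    omega
  have hq2 : h.q p (k+2) = k+2 := by
    have d : ∀ π : Equiv.Perm (Fin 4), (∀ i, π (i+1) = π i + 1 ∨ π (i+1) = π i + 3) →
      ∀ k, π k = k → π (k+2) = k+2 := by decide
    exact d _ (h.q_mem p) k hpk
  have po := h.aut_o p.2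
  have pk : p.1 (a k) = a k := by rw [h.q_spec, hpk]
  have pk2 : p.1 (a (k+2)) = a (k+2) := by rw [h.q_spec, hq2]
  have n1 := h.one k
  have n2 := h.one (k+2)
  have n3 : a k ≠ a (k+2) := fun e => (fin4_ne k).2.1 (h.ainj e).symm
  have ex : ∀ z ∈ Wset a o, (if z ∈ IS t a o U o then 1 else 0) +
      ((if z ∈ IS t a o U (a k) then 1 else 0) + (if z ∈ IS t a o U (a (k+2)) then 1 else 0))
      = 1 := by
    intro z hz
    have := hlab z hz
    rw [Finset.card_filter, h.sumF' _ k, hN3, if_pos (full _ k1 z hz), if_pos (full _ k3 z hz)]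
      at this
    omega
  have cov : ∀ z ∈ Wset a o, z ∈ IS t a o U o ∨ z ∈ IS t a o U (a k) ∨
      z ∈ IS t a o U (a (k+2)) := by
    intro z hz
    have := ex z hz
    by_contra hc
    push Not at hc
    rw [if_neg hc.1, if_neg hc.2.1, if_neg hc.2.2] at this
    omega
  have toW : ∀ {f z}, z ∈ IS t a o U f → z ∈ Wset a o := fun hz => (mem_IS.1 hz).1
  have d1 : ∀ z, z ∈ IS t a o U o → z ∉ IS t a o U (a k) := by
    intro z h1 h2
    have := ex z (toW h1)
    rw [if_pos h1, if_pos h2] at this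
    omega
  have d2 : ∀ z, z ∈ IS t a o U o → z ∉ IS t a o U (a (k+2)) := by
    intro z h1 h2
    have := ex z (toW h1)
    rw [if_pos h1, if_pos h2] at this
    omega
  have d3 : ∀ z, z ∈ IS t a o U (a k) → z ∉ IS t a o U (a (k+2)) := by
    intro z h1 h2
    have := ex z (toW h1)
    rw [if_pos h1, if_pos h2] at this
    omega
  rcases cov w hw with hh | hh | hh
  · exact h.fin9 hUk hU hp1 oF (aF k) (aF (k+2)) n1 n2 n3 po pk pk2 hw pw co4 cov d1 d2 d3 hh
  · exact h.fin9 hUk hU hp1 (aF k) oF (aF (k+2)) n1.symm n3 n2 pk po pk2 hw pw ck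
      (fun z hz => or_left_comm.1 (cov z hz)) (fun z x y => d1 z y x) d3 d2 hh
  · exact h.fin9 hUk hU hp1 (aF (k+2)) oF (aF k) n2.symm n3.symm n1 pk2 po pk hw pw ck2
      (fun z hz => Or.comm.1 (or_assoc.2 (cov z hz))) (fun z x y => d2 z y x)
      (fun z x y => d3 z y x) d1 hh

theorem case16 (h : Conf t a o) (hG : 16 ∣ Nat.card (autT t)) : False := by
  obtain ⟨P, hP⟩ := Sylow.exists_subgroup_card_pow_prime (G := autT t) 2 (n := 4) hG
  have hP : Nat.card P = 16 := hP
  have hc := card_ker_map h.q P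
  have h12 : Nat.card ↥(P ⊓ h.q.ker) ∣ 12 := by
    apply h.card_dvd12
    intro u hu z hz e
    exact h.kerfree hu.2 hz e
  have h8 : Nat.card (P.map h.q) ∣ 8 := by
    rw [← card_D4]
    apply Subgroup.card_dvd_of_le
    rintro _ ⟨p, _, rfl⟩; exact h.q_mem p
  rw [hP] at hc
  have h16 : Nat.card ↥(P ⊓ h.q.ker) ∣ 16 := ⟨_, hc.symm⟩
  have hd : Nat.card ↥(P ⊓ h.q.ker) ∣ 4 := by
    have := Nat.dvd_gcd h12 h16
    simpa using this
  have hle := Nat.le_of_dvd (by norm_num) hd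
  have h8' := Nat.le_of_dvd (by norm_num) h8
  have key : Nat.card ↥(P ⊓ h.q.ker) = 2 ∨ Nat.card ↥(P ⊓ h.q.ker) = 4 := by
    generalize Nat.card ↥(P ⊓ h.q.ker) = n at *
    generalize Nat.card (P.map h.q) = m at *
    interval_cases n <;> omega
  rcases key with e | e
  · exact h.case16_two P hP e
  · exact h.case16_four P hP e

end Conf


namespace Conf
variable {t : V17 → V17 → V17} {a : Fin 4 → V17} {o : V17}

theorem app {x y : autT t} (e : x = y) (z : V17) : x.1 z = y.1 z := by rw [e]

theorem pow_ne {c : autT t} (hc : orderOf c = 6) (n : ℕ) (hn : ¬ 6 ∣ n) : c ^ n ≠ 1 := by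
  intro e
  exact hn (hc ▸ orderOf_dvd_of_pow_eq_one e)

/-- the six points `c^i z` are distinct -/
theorem powz_inj (h : Conf t a o) {c : autT t} (hcK : c ∈ h.q.ker) (hc : orderOf c = 6)
    {z : V17} (hz : z ∈ Wset a o) {i j : ℕ} (e : (c ^ i).1 z = (c ^ j).1 z) (hi : i < 6)
    (hj : j < 6) : i = j := by
  have : (c ^ j)⁻¹ * c ^ i = 1 := by
    apply h.kerfree (mul_mem (inv_mem (pow_mem hcK j)) (pow_mem hcK i)) hz
    change ((c ^ j).1⁻¹) ((c ^ i).1 z) = z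
    rw [e]; simp
  have e2 : c ^ j = c ^ i := inv_mul_eq_one.1 this
  exact (pow_injOn_Iio_orderOf (Set.mem_Iio.2 (by rwa [hc])) (Set.mem_Iio.2 (by rwa [hc])) e2).symm

theorem powS (c : autT t) (n : ℕ) (z : V17) : c.1 ((c ^ n).1 z) = (c ^ (n+1)).1 z := by
  rw [pow_succ']; rfl

/-- the third point on `{z, c z}` -/
theorem step6 (h : Conf t a o) {c : autT t} (hcK : c ∈ h.q.ker) (hc : orderOf c = 6)
    {z : V17} (hz : z ∈ Wset a o) :
    t z (c.1 z) ∈ Wset a o ∧ ∀ i < 6, t z (c.1 z) ≠ (c ^ i).1 z := by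
  have c6 : c ^ 6 = 1 := by rw [← hc]; exact pow_orderOf_eq_one c
  have inj := fun {i j : ℕ} => h.powz_inj hcK hc hz (i := i) (j := j)
  have p0 : z = (c ^ 0).1 z := rfl
  have p1 : c.1 z = (c ^ 1).1 z := by rw [pow_one]
  have hne : z ≠ c.1 z := by
    intro e
    have := inj (i := 0) (j := 1) (by rw [← p0, ← p1]; exact e) (by norm_num) (by norm_num)
    omega
  have hcov := (h.covW hz hne).1
  have r := h.rot (rfl : t z (c.1 z) = _) hcov
  have c3K := pow_mem hcK 3
  have c3n := pow_ne hc 3 (by norm_num)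
  have c33 : c ^ 3 * c ^ 3 = 1 := by rw [← pow_add]; exact c6
  constructor
  · by_contra hf
    have hle : Subgroup.zpowers c ≤ h.q.ker := by
      rw [Subgroup.zpowers_le]; exact hcK
    have := (h.label_inv hle hf hz (Subgroup.mem_zpowers c) r.2.2.2.1).1
    have := (mem_Inv.1 this).2.2
    rw [← pow_two] at this
    exact pow_ne hc 2 (by norm_num) this
  · intro i hi e
    interval_cases i
    · exact r.2.2.2.2.2.2 e
    · exact hcov (e.trans p1.symm)
    · -- {z, cz, c²z}
      have h1 : c.1 (t z (c.1 z)) = t (c.1 z) (c.1 (c.1 z)) := c.2 _ _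
      have e1 : c.1 (c.1 z) = (c ^ 2).1 z := by
        have := powS c 1 z
        rwa [← p1] at this
      rw [e1, ← e, r.2.2.1, e, powS] at h1
      have := inj (i := 3) (j := 0) h1 (by norm_num) (by norm_num)
      omega
    · have h1 : t z ((c ^ 3).1 z) ∉ Wset a o := h.inv_third c3K c3n c33 hz
      rw [← e, h.inv] at h1
      exact h1 (h.aut_W c.2 hz)
    · have hz' := h.aut_W c.2 hz
      have h1 := h.inv_third c3K c3n c33 hz'
      have e1 : (c ^ 3).1 (c.1 z) = (c ^ 4).1 z := by
        rw [pow_succ c 3]; rfl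
      rw [e1, ← e, r.2.2.1] at h1
      exact h1 hz
    · -- {z, cz, c⁵z}
      have h1 : c.1 (t z (c.1 z)) = t (c.1 z) (c.1 (c.1 z)) := c.2 _ _
      have e1 : c.1 (c.1 z) = (c ^ 2).1 z := by
        have := powS c 1 z
        rwa [← p1] at this
      rw [e, powS, c6, e1] at h1
      have h1 : z = t (c.1 z) ((c ^ 2).1 z) := h1
      have h2 := congrArg (t (c.1 z)) h1
      rw [h.inv, r.2.1, e] at h2
      have := inj h2 (by norm_num) (by norm_num)
      omega

theorem no6 (h : Conf t a o) {c : autT t} (hcK : c ∈ h.q.ker) (hc : orderOf c = 6) : False := by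
  classical
  have c6 : c ^ 6 = 1 := by rw [← hc]; exact pow_orderOf_eq_one c
  set U := Subgroup.zpowers c with hUd
  have hU : U ≤ h.q.ker := by rw [hUd, Subgroup.zpowers_le]; exact hcK
  have hcard : Nat.card U = 6 := by rw [hUd, Nat.card_zpowers, hc]
  have hmem : ∀ u ∈ U, ∃ i < 6, c ^ i = u := by
    intro u hu
    have hfin : IsOfFinOrder c := isOfFinOrder_of_finite c
    obtain ⟨k, hk, e'⟩ := hfin.mem_zpowers_iff_mem_range_orderOf.1 hu |> Finset.mem_image.1
    rw [hc, Finset.mem_range] at hk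
    exact ⟨k, hk, e'⟩
  have hInv : Inv U = {c ^ 3} := by
    ext u
    rw [mem_Inv, Finset.mem_singleton]
    constructor
    · rintro ⟨hu, hu1, hu2⟩
      obtain ⟨i, hi, rfl⟩ := hmem u hu
      rw [← pow_add] at hu2
      have hd : 6 ∣ i + i := hc ▸ orderOf_dvd_of_pow_eq_one hu2
      have : i ≠ 0 := by rintro rfl; exact hu1 (pow_zero c)
      have : i = 3 := by omega
      rw [this]
    · rintro rfl
      exact ⟨pow_mem (Subgroup.mem_zpowers c) 3, pow_ne hc 3 (by norm_num),
        by rw [← pow_add]; exact c6⟩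
  have hsum := (h.sumIS hU).1
  rw [hInv, Finset.card_singleton, mul_one] at hsum
  have hval : ∀ f, f ∉ Wset a o → (IS t a o U f).card = 0 ∨ (IS t a o U f).card = 12 := by
    intro f hf
    obtain ⟨k, hk⟩ := h.IS_dvd2 hU hf
    rw [hcard] at hk
    omega
  obtain ⟨f0, hf0, hf0n⟩ := Finset.exists_ne_zero_of_sum_ne_zero (by rw [hsum]; norm_num :
    ∑ f ∈ Finset.univ \ Wset a o, (IS t a o U f).card ≠ 0)
  have hf0F : f0 ∉ Wset a o := (Finset.mem_sdiff.1 hf0).2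
  have h12 := (hval f0 hf0F).resolve_left hf0n
  rw [← Finset.add_sum_erase _ _ hf0, h12] at hsum
  have hz0 : ∀ f, f ∉ Wset a o → f ≠ f0 → ∀ z ∈ Wset a o, ∀ i, t f z ≠ (c ^ i).1 z := by
    intro f hf hne z hz i e
    have h0 : ∑ f ∈ (Finset.univ \ Wset a o).erase f0, (IS t a o U f).card = 0 := by omega
    have := Finset.sum_eq_zero_iff.1 h0 f (Finset.mem_erase.2 ⟨hne, Finset.mem_sdiff.2
      ⟨Finset.mem_univ _, hf⟩⟩)
    rw [Finset.card_eq_zero] at this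
    have hm : z ∈ IS t a o U f := mem_IS.2 ⟨hz, _, pow_mem (Subgroup.mem_zpowers c) i, e⟩
    rw [this] at hm
    simp at hm
  have hcF : ((Finset.univ \ Wset a o).erase f0).card = 4 := by
    rw [Finset.card_erase_of_mem hf0, Finset.card_sdiff_of_subset (Finset.subset_univ _), h.cardW]
    simp
  -- orbits
  set O : V17 → Finset V17 := fun z => (Finset.range 6).image (fun i => (c ^ i).1 z) with hO
  have memO : ∀ y z, y ∈ O z ↔ ∃ i < 6, (c ^ i).1 z = y := by
    intro y z; simp [hO]
  have hOc : ∀ z ∈ Wset a o, (O z).card = 6 := by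
    intro z hz
    rw [hO, Finset.card_image_of_injOn, Finset.card_range]
    intro i hi j hj e
    exact h.powz_inj hcK hc hz e (Finset.mem_range.1 hi) (Finset.mem_range.1 hj)
  have hOW : ∀ z ∈ Wset a o, O z ⊆ Wset a o := by
    intro z hz y hy
    obtain ⟨i, _, rfl⟩ := (memO _ _).1 hy
    exact h.aut_W (c ^ i).2 hz
  have hcK' : c⁻¹ ∈ h.q.ker := inv_mem hcK
  have hc' : orderOf c⁻¹ = 6 := by rw [orderOf_inv, hc]
  have hOinv : ∀ z y, y ∈ O z → ∃ i < 6, y = (c⁻¹ ^ i).1 z := by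
    intro z y hy
    obtain ⟨i, hi, rfl⟩ := (memO _ _).1 hy
    rcases Nat.eq_zero_or_pos i with rfl | hp
    · exact ⟨0, by norm_num, rfl⟩
    · refine ⟨6 - i, by omega, ?_⟩
      apply app
      rw [inv_pow, eq_inv_iff_mul_eq_one, ← pow_add, show i + (6 - i) = 6 by omega, c6]
  have key : ∀ z ∈ Wset a o, ∀ y ∈ Wset a o, y ∉ O z → t z y ∉ Wset a o ∨ t z y = c.1 z ∨
      t z y = (c⁻¹).1 z := by
    intro z hz y hy hyO
    set A : Finset V17 := insert (c.1 z) (insert ((c⁻¹).1 z) ((Finset.univ \ Wset a o).erase f0))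
      with hA
    have hAc : A.card = 6 := by
      rw [hA, Finset.card_insert_of_notMem, Finset.card_insert_of_notMem, hcF]
      · intro hcon
        have := (Finset.mem_sdiff.1 (Finset.mem_erase.1 hcon).2).2
        exact this (h.aut_W (c⁻¹).2 hz)
      · rw [Finset.mem_insert]
        rintro (hcon | hcon)
        · have : c * c = 1 := by
            apply h.kerfree (mul_mem hcK hcK) hz
            change c.1 (c.1 z) = z
            rw [hcon]
            change c.1 ((c.1)⁻¹ z) = z
            simp
          rw [← pow_two] at this
          exact pow_ne hc 2 (by norm_num) this
        · have := (Finset.mem_sdiff.1 (Finset.mem_erase.1 hcon).2).2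
          exact this (h.aut_W c.2 hz)
    have hAi : (A.image (t z)).card = 6 := by
      rw [Finset.card_image_of_injective, hAc]
      intro x y e
      have e := congrArg (t z) e
      rwa [h.inv, h.inv] at e
    have hsub : A.image (t z) ⊆ Wset a o \ O z := by
      intro x hx
      obtain ⟨y, hy, rfl⟩ := Finset.mem_image.1 hx
      rw [Finset.mem_sdiff]
      rw [hA, Finset.mem_insert, Finset.mem_insert] at hy
      rcases hy with rfl | rfl | hy
      · have := h.step6 hcK hc hz
        refine ⟨this.1, fun hcon => ?_⟩
        obtain ⟨i, hi, e⟩ := (memO _ _).1 hcon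
        exact this.2 i hi e.symm
      · have := h.step6 hcK' hc' hz
        refine ⟨this.1, fun hcon => ?_⟩
        obtain ⟨i, hi, e⟩ := hOinv _ _ hcon
        exact this.2 i hi e
      · rw [Finset.mem_erase, Finset.mem_sdiff] at hy
        rw [h.symW hz]
        refine ⟨h.mW hy.2.2 hz, fun hcon => ?_⟩
        obtain ⟨i, hi, e⟩ := (memO _ _).1 hcon
        exact hz0 y hy.2.2 hy.1 z hz i e.symm
    have heq := Finset.eq_of_subset_of_card_le hsub (by
      rw [hAi, Finset.card_sdiff_of_subset (hOW z hz), h.cardW, hOc z hz])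
    have hyA : y ∈ A.image (t z) := by rw [heq, Finset.mem_sdiff]; exact ⟨hy, hyO⟩
    obtain ⟨x, hx, rfl⟩ := Finset.mem_image.1 hyA
    rw [h.inv]
    rw [hA, Finset.mem_insert, Finset.mem_insert] at hx
    rcases hx with rfl | rfl | hx
    · exact Or.inr (Or.inl rfl)
    · exact Or.inr (Or.inr rfl)
    · exact Or.inl (Finset.mem_sdiff.1 (Finset.mem_erase.1 hx).2).2
  obtain ⟨z, hz⟩ := h.exW
  obtain ⟨hyW, hyO⟩ := h.step6 hcK hc hz
  have hcW := h.aut_W c.2 hz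
  have hne : z ≠ c.1 z := by
    intro e
    have := h.powz_inj hcK hc hz (i := 0) (j := 1) (by rw [pow_one]; exact e)
      (by norm_num) (by norm_num)
    omega
  have r := h.rot (rfl : t z (c.1 z) = _) (h.covW hz hne).1
  have hzO : z ∉ O (t z (c.1 z)) := by
    intro hcon
    obtain ⟨i, hi, e⟩ := hOinv _ _ hcon
    refine hyO i hi ?_
    conv_rhs => rw [e]
    change _ = ((c ^ i) * (c⁻¹) ^ i).1 _
    rw [inv_pow, mul_inv_cancel]; rfl
  rcases key _ hyW z hz hzO with h1 | h1 | h1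
  · rw [r.2.2.2.1] at h1; exact h1 hcW
  · rw [r.2.2.2.1] at h1
    exact hyO 0 (by norm_num) (c.1.injective h1).symm
  · rw [r.2.2.2.1] at h1
    refine hyO 2 (by norm_num) ?_
    have := congrArg c.1 h1
    change _ = (c.1) ((c.1)⁻¹ _) at this
    have hh : ∀ x, c.1 ((c.1)⁻¹ x) = x := fun x => by simp
    rw [hh] at this
    rw [← this, pow_two]; rfl

end Conf


namespace Conf
variable {t : V17 → V17 → V17} {a : Fin 4 → V17} {o : V17}

/-- no involution in the kernel commutes with an element of order three of the kernel -/
theorem noComm (h : Conf t a o) {σ τ : autT t} (hσ : σ ∈ h.q.ker) (hτ : τ ∈ h.q.ker)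
    (h2 : orderOf σ = 2) (h3 : orderOf τ = 3) (hc : Commute σ τ) : False := by
  refine h.no6 (mul_mem hσ hτ) ?_
  rw [hc.orderOf_mul_eq_mul_orderOf_of_coprime (by rw [h2, h3]; norm_num), h2, h3]

theorem ord2 {σ : autT t} (h1 : σ ≠ 1) (h2 : σ * σ = 1) : orderOf σ = 2 :=
  orderOf_eq_prime (by rw [pow_two]; exact h2) h1

/-- an involution moving all `a i` and commuting with an element of order three. -/
theorem freeinv (h : Conf t a o) {g τ : autT t} (hτ : τ ∈ h.q.ker) (h3 : orderOf τ = 3)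
    (hg2 : g * g = 1) (hc : g * τ = τ * g) (hm : ∀ i, h.q g i ≠ i) :
    ∀ z ∈ Wset a o, t o z = g.1 z := by
  have hma : ∀ i, g.1 (a i) ≠ a i := by
    intro i e
    rw [h.q_spec] at e
    exact hm i (h.ainj e)
  have τ3 : τ * (τ * τ) = 1 := by
    have := pow_orderOf_eq_one τ
    rw [h3, pow_succ', pow_two] at this
    exact this
  have hτ1 : τ ≠ 1 := by rintro rfl; simp at h3
  have hE := h.E2 g.2 (fun x => app hg2 x) hma
  have hd : 3 ∣ (EW a o g.1).card := by
    apply three_dvd_of_free τ.1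
    · intro x hx
      rw [mem_EW] at hx ⊢
      refine ⟨h.aut_W τ.2 hx.1, ?_⟩
      have : g.1 (τ.1 x) = τ.1 (g.1 x) := app hc x
      rw [this, hx.2]
    · intro x _; exact app τ3 x
    · intro x hx e
      exact hτ1 (h.kerfree hτ (mem_EW.1 hx).1 e)
  have h0 : EW a o g.1 = ∅ := by
    rw [← Finset.card_eq_zero]; omega
  have hfree : ∀ z ∈ Wset a o, g.1 z ≠ z := by
    intro z hz e
    have : z ∈ EW a o g.1 := mem_EW.2 ⟨hz, e⟩
    rw [h0] at this; simp at this
  intro z hz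
  have hgg : g.1 (g.1 z) = z := app hg2 z
  have hw : g.1 (t z (g.1 z)) = t z (g.1 z) := by
    rw [g.2, hgg, h.symW (h.aut_W g.2 hz)]
  have r := h.rot (rfl : t z (g.1 z) = _) (h.covW hz (hfree z hz).symm).1
  have : t z (g.1 z) = o := by
    by_cases hW : t z (g.1 z) ∈ Wset a o
    · exact absurd hw (hfree _ hW)
    · rcases nmemW.1 hW with e | ⟨i, e⟩
      · exact e
      · rw [e] at hw; exact absurd hw (hma i)
  rw [this] at r
  exact r.2.2.2.1

def rot2 : Equiv.Perm (Fin 4) := Equiv.addRight 2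
def edgeP : Equiv.Perm (Fin 4) := Equiv.subLeft 3

theorem edgeP_mem : edgeP ∈ D4 := by rw [mem_D4]; decide

theorem nat24 (n c : ℕ) (h1 : n ∣ 12) (h2 : c ∣ 8) (h3 : n * c = 24) :
    n = 3 ∨ n = 6 ∨ n = 12 := by
  have hm : n ∈ Nat.divisors 12 := Nat.mem_divisors.2 ⟨h1, by norm_num⟩
  have hm2 : c ∈ Nat.divisors 8 := Nat.mem_divisors.2 ⟨h2, by norm_num⟩
  have hdv : Nat.divisors 12 = {1, 2, 3, 4, 6, 12} := by decide
  have hdv2 : Nat.divisors 8 = {1, 2, 4, 8} := by decide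
  rw [hdv] at hm
  rw [hdv2] at hm2
  simp only [Finset.mem_insert, Finset.mem_singleton] at hm hm2
  rcases hm with rfl | rfl | rfl | rfl | rfl | rfl <;> omega

theorem nat96 (n : ℕ) (h96 : n ∣ 96) (h16 : 16 ∣ n → False) (h24 : n = 24 → False) :
    n ≤ 12 := by
  have hm : n ∈ Nat.divisors 96 := Nat.mem_divisors.2 ⟨h96, by norm_num⟩
  have hdv : Nat.divisors 96 = {1, 2, 3, 4, 6, 8, 12, 16, 24, 32, 48, 96} := by decide
  rw [hdv] at hm
  simp only [Finset.mem_insert, Finset.mem_singleton] at hm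
  have hcc : 12 < n → False := by
    intro hc
    have hm' : n = 24 ∨ n = 16 * 1 ∨ n = 16 * 2 ∨ n = 16 * 3 ∨ n = 16 * 6 := by
      clear h16 h24 h96 hdv
      omega
    rcases hm' with e | e | e | e | e
    · exact h24 e
    all_goals exact h16 ⟨_, e⟩
  exact Nat.le_of_not_lt hcc

set_option maxRecDepth 20000 in
theorem d4_rot2 : ∀ x : Equiv.Perm (Fin 4), (∀ i, x (i+1) = x i + 1 ∨ x (i+1) = x i + 3) →
    ∀ y : Equiv.Perm (Fin 4), (∀ i, y (i+1) = y i + 1 ∨ y (i+1) = y i + 3) →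
    x ≠ 1 → y ≠ 1 → x ≠ y →
    rot2 = x ∨ rot2 = y ∨ rot2 = x * x ∨ rot2 = y * y ∨ rot2 = x * y ∨
      rot2 = (x * y) * (x * y) := by
  decide

theorem rot2_mem (S : Subgroup (Equiv.Perm (Fin 4))) (hS : S ≤ D4) (hc : 3 ≤ Nat.card S) :
    rot2 ∈ S := by
  classical
  have : Fintype S := Fintype.ofFinite _
  rw [Nat.card_eq_fintype_card] at hc
  obtain ⟨x, hx⟩ : ∃ x : S, x ≠ 1 := by
    have : Nontrivial S := Fintype.one_lt_card_iff_nontrivial.1 (by omega)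
    exact exists_ne 1
  obtain ⟨y, hy⟩ : ∃ y : S, y ∉ ({1, x} : Finset S) := by
    by_contra hcon
    push Not at hcon
    have h1 : (Finset.univ : Finset S) ⊆ {1, x} := fun y _ => hcon y
    have h2 := Finset.card_le_card h1
    have h3 : ({1, x} : Finset S).card ≤ 2 := Finset.card_le_two
    rw [Finset.card_univ] at h2
    omega
  simp only [Finset.mem_insert, Finset.mem_singleton, not_or] at hy
  have := d4_rot2 x.1 (hS x.2) y.1 (hS y.2) (fun e => hx (Subtype.ext e))
    (fun e => hy.1 (Subtype.ext e)) (fun e => hy.2 (Subtype.ext e).symm)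
  have hxy := mul_mem x.2 y.2
  rcases this with e | e | e | e | e | e <;> rw [e]
  · exact x.2
  · exact y.2
  · exact mul_mem x.2 x.2
  · exact mul_mem y.2 y.2
  · exact hxy
  · exact mul_mem hxy hxy

theorem case24 (h : Conf t a o) (hG : Nat.card (autT t) = 24) : False := by
  classical
  set K := h.q.ker with hKd
  have hK12 : Nat.card K ∣ 12 :=
    h.card_dvd12 K (fun u hu z hz e => h.kerfree hu hz e)
  have hD : (⊤ : Subgroup (autT t)).map h.q ≤ D4 := by
    rintro _ ⟨p, _, rfl⟩; exact h.q_mem p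
  have hQ8 : Nat.card ((⊤ : Subgroup (autT t)).map h.q) ∣ 8 := by
    rw [← card_D4]; exact Subgroup.card_dvd_of_le hD
  have hKQ := card_ker_map h.q ⊤
  rw [top_inf_eq, Subgroup.card_top, hG] at hKQ
  have hK : Nat.card K = 3 ∨ Nat.card K = 6 ∨ Nat.card K = 12 := by
    exact nat24 _ _ hK12 hQ8 hKQ
  have h3K : 3 ∣ Nat.card K := by rcases hK with e | e | e <;> rw [e] <;> norm_num
  have : Fact (Nat.Prime 3) := ⟨by norm_num⟩
  have : Fact (Nat.Prime 2) := ⟨by norm_num⟩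
  obtain ⟨⟨τ, hτK⟩, hτ⟩ := exists_prime_orderOf_dvd_card' 3 h3K
  have hτ3 : orderOf τ = 3 := by rw [← hτ]; exact (Subgroup.orderOf_coe ⟨τ, hτK⟩)
  have τ3 : τ ^ 3 = 1 := by rw [← hτ3]; exact pow_orderOf_eq_one τ
  have hτ1 : τ ≠ 1 := by rintro rfl; simp at hτ3
  have hKn : ∀ x, ∀ k ∈ K, x * k * x⁻¹ ∈ K := fun x k hk =>
    (MonoidHom.normal_ker h.q).conj_mem k hk x
  -- the kernel does not have order twelve
  have hK : Nat.card K = 3 ∨ Nat.card K = 6 := by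
    rcases hK with e | e | e
    · exact Or.inl e
    · exact Or.inr e
    · exfalso
      have hsum := (h.sumIS (le_refl K)).1
      have hval : ∀ f, f ∉ Wset a o → (IS t a o K f).card = 12 := by
        intro f hf
        obtain ⟨k, hk⟩ := h.IS_dvd2 (le_refl K) hf
        rw [e] at hk
        omega
      rw [h.sumF, hval o oF, hval _ (aF 0), hval _ (aF 1), hval _ (aF 2), hval _ (aF 3)] at hsum
      have h3 : 3 ∣ (Inv K).card := by
        apply three_dvd_of_free (fun x => τ * x * τ⁻¹)
        · intro x hx
          rw [mem_Inv] at hx ⊢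
          refine ⟨hKn τ x hx.1, fun e => hx.2.1 ?_, ?_⟩
          · rwa [mul_inv_eq_one, mul_eq_left] at e
          · calc τ * x * τ⁻¹ * (τ * x * τ⁻¹) = τ * (x * x) * τ⁻¹ := by group
              _ = 1 := by rw [hx.2.2]; group
        · intro x _
          calc τ * (τ * (τ * x * τ⁻¹) * τ⁻¹) * τ⁻¹ = τ ^ 3 * x * (τ ^ 3)⁻¹ := by
                simp only [pow_succ, pow_zero, one_mul, mul_assoc, mul_inv_rev]
            _ = x := by rw [τ3]; group
        · intro x hx e
          rw [mem_Inv] at hx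
          have e : τ * x * τ⁻¹ = x := e
          rw [mul_inv_eq_iff_eq_mul] at e
          exact h.noComm hx.1 hτK (ord2 hx.2.1 hx.2.2) hτ3 e.symm
      omega
  -- squares of elements of K
  have hsq : ∀ k ∈ K, k * k ∈ Subgroup.zpowers τ := by
    intro k hk
    have hle : Subgroup.zpowers τ ≤ K := by rw [Subgroup.zpowers_le]; exact hτK
    have hi := Subgroup.card_mul_index ((Subgroup.zpowers τ).subgroupOf K)
    rw [Nat.card_congr (Subgroup.subgroupOfEquivOfLe hle).toEquiv, Nat.card_zpowers, hτ3] at hi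
    have hi' : ((Subgroup.zpowers τ).subgroupOf K).index = 1 ∨
        ((Subgroup.zpowers τ).subgroupOf K).index = 2 := by omega
    rcases hi' with e | e
    · rw [Subgroup.index_eq_one] at e
      have hk' : (⟨k, hk⟩ : K) ∈ (Subgroup.zpowers τ).subgroupOf K := by rw [e]; trivial
      exact mul_mem (Subgroup.mem_subgroupOf.1 hk') (Subgroup.mem_subgroupOf.1 hk')
    · exact Subgroup.mem_subgroupOf.1 (Subgroup.mul_self_mem_of_index_two e ⟨k, hk⟩)
  have hconj : ∀ x, x * τ * x⁻¹ = τ ∨ x * τ * x⁻¹ = τ⁻¹ := by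
    intro x
    set y := x * τ * x⁻¹ with hy
    have hyK : y ∈ K := hKn x τ hτK
    have hy3 : y ^ 3 = 1 := by
      calc y ^ 3 = x * τ ^ 3 * x⁻¹ := by rw [hy, conj_pow]
        _ = 1 := by rw [τ3]; group
    have hy1 : y ≠ 1 := by
      intro e
      rw [hy, mul_inv_eq_one, mul_eq_left] at e
      exact hτ1 e
    have hyy : y ∈ Subgroup.zpowers τ := by
      have := mul_mem (hsq y hyK) (hsq y hyK)
      have e : y * y * (y * y) = y := by
        calc y * y * (y * y) = y ^ 3 * y := by
                simp only [pow_succ, pow_zero, one_mul, mul_assoc]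
          _ = y := by rw [hy3, one_mul]
      rwa [e] at this
    have hfin : IsOfFinOrder τ := isOfFinOrder_of_finite τ
    obtain ⟨k, hk, e'⟩ := hfin.mem_zpowers_iff_mem_range_orderOf.1 hyy |> Finset.mem_image.1
    have e' : τ ^ k = y := e'
    rw [hτ3, Finset.mem_range] at hk
    interval_cases k
    · exact absurd e'.symm (by rw [pow_zero]; exact hy1)
    · left; rw [← e', pow_one]
    · right; rw [← e', eq_inv_iff_mul_eq_one, ← pow_succ]; exact τ3
  -- the centralizer
  set C : Subgroup (autT t) := Subgroup.centralizer {τ} with hCd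
  have memC : ∀ x, x ∈ C ↔ x * τ = τ * x := by
    intro x
    rw [hCd, Subgroup.mem_centralizer_singleton_iff]
  have memC' : ∀ x, x ∈ C ↔ x * τ * x⁻¹ = τ := by
    intro x; rw [memC, mul_inv_eq_iff_eq_mul]
  have hC12 : 12 ≤ Nat.card C := by
    have hi := C.card_mul_index
    rw [hG] at hi
    have : C.index = 1 ∨ C.index = 2 := by
      by_cases hall : C = ⊤
      · left; rw [hall]; exact Subgroup.index_top
      · right
        obtain ⟨x, hx⟩ : ∃ x, x ∉ C := by
          by_contra hcon
          push Not at hcon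
          exact hall (Subgroup.eq_top_iff' C |>.2 hcon)
        have inv_of : ∀ y, y ∉ C → y * τ * y⁻¹ = τ⁻¹ := fun y hy =>
          (hconj y).resolve_left (fun e => hy ((memC' y).2 e))
        rw [Subgroup.index_eq_two_iff]
        refine ⟨x, fun b => ?_⟩
        by_cases hb : b ∈ C
        · refine Or.inr ⟨hb, fun hbx => hx ?_⟩
          have := mul_mem (inv_mem hb) hbx
          rwa [inv_mul_cancel_left] at this
        · refine Or.inl ⟨?_, hb⟩
          rw [memC']
          calc b * x * τ * (b * x)⁻¹ = b * (x * τ * x⁻¹) * b⁻¹ := by group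
            _ = (b * τ * b⁻¹)⁻¹ := by rw [inv_of x hx]; group
            _ = τ := by rw [inv_of b hb, inv_inv]
    rcases this with e | e <;> rw [e] at hi <;> omega
  have hCK : Nat.card ↥(C ⊓ K) = 3 := by
    have hτC : τ ∈ C ⊓ K := Subgroup.mem_inf.2 ⟨(memC τ).2 rfl, hτK⟩
    have h1 : Nat.card ↥(C ⊓ K) ∣ Nat.card K := Subgroup.card_dvd_of_le inf_le_right
    have h2 : 3 ∣ Nat.card ↥(C ⊓ K) := by
      rw [← hτ3]; exact Subgroup.orderOf_dvd_natCard _ hτC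
    have h3 : ¬ 2 ∣ Nat.card ↥(C ⊓ K) := by
      intro hd
      obtain ⟨⟨σ, hσ⟩, ho⟩ := exists_prime_orderOf_dvd_card' 2 hd
      have hσ2 : orderOf σ = 2 := by rw [← ho]; exact (Subgroup.orderOf_coe ⟨σ, hσ⟩)
      exact h.noComm hσ.2 hτK hσ2 hτ3 ((memC σ).1 hσ.1)
    have h4 : Nat.card ↥(C ⊓ K) ≤ 6 := by
      have := Nat.le_of_dvd (by omega) h1
      omega
    have h5 : 0 < Nat.card ↥(C ⊓ K) := Nat.card_pos
    omega
  have hr2 : rot2 ∈ C.map h.q := by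
    apply rot2_mem
    · rintro _ ⟨p, _, rfl⟩; exact h.q_mem p
    · have := card_ker_map h.q C
      have hCK' : Nat.card ↥(C ⊓ h.q.ker) = 3 := hCK
      rw [hCK'] at this
      omega
  obtain ⟨g0, hg0C, hg0⟩ := hr2
  have hg0C : g0 ∈ C := hg0C
  obtain ⟨g, hgC, hgq, hg2⟩ : ∃ g ∈ C, h.q g = rot2 ∧ g * g = 1 := by
    refine ⟨g0 ^ 3, pow_mem hg0C 3, ?_, ?_⟩
    · rw [map_pow, hg0]; decide
    · have hm : g0 ^ 2 ∈ C ⊓ K := by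
        refine Subgroup.mem_inf.2 ⟨pow_mem hg0C 2, ?_⟩
        rw [hKd, MonoidHom.mem_ker, map_pow, hg0]; decide
      have := pow_card_eq_one' (x := (⟨g0 ^ 2, hm⟩ : ↥(C ⊓ K)))
      rw [hCK] at this
      have := congrArg Subtype.val this
      have this : (g0 ^ 2) ^ 3 = 1 := this
      rw [← pow_add]
      rwa [← pow_mul] at this
  have hgm : ∀ i, h.q g i ≠ i := by rw [hgq]; decide
  have ho := h.freeinv hτK hτ3 hg2 ((memC g).1 hgC) hgm
  have hcen : ∀ x, g * x = x * g := by
    intro x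
    have e : x * g * x⁻¹ = g := by
      have h2 : x * g * x⁻¹ * (x * g * x⁻¹) = 1 := by
        calc x * g * x⁻¹ * (x * g * x⁻¹) = x * (g * g) * x⁻¹ := by group
          _ = 1 := by rw [hg2]; group
      have hco : x * g * x⁻¹ * τ = τ * (x * g * x⁻¹) := by
        have hg' : g * τ = τ * g := (memC g).1 hgC
        have hg'' : g * τ⁻¹ = τ⁻¹ * g := (Commute.inv_right (show Commute g τ from hg'))
        have hx := hconj x⁻¹
        rw [inv_inv] at hx
        have : g * (x⁻¹ * τ * x) = x⁻¹ * τ * x * g := by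
          rcases hx with e | e <;> rw [e]
          · exact hg'
          · exact hg''
        calc x * g * x⁻¹ * τ = x * (g * (x⁻¹ * τ * x)) * x⁻¹ := by group
          _ = τ * (x * g * x⁻¹) := by rw [this]; group
      have hmm : ∀ i, h.q (x * g * x⁻¹) i ≠ i := by
        intro i e
        rw [map_mul, map_mul, map_inv] at e
        apply hgm ((h.q x)⁻¹ i)
        apply (h.q x).injective
        simp only [Equiv.Perm.coe_mul, Function.comp_apply] at e
        rw [e]; simp
      have ho' := h.freeinv hτK hτ3 h2 hco hmm
      apply Subtype.ext
      apply h.aut_ext (x * g * x⁻¹).2 g.2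
      intro z hz
      rw [← ho' z hz, ho z hz]
    rw [mul_inv_eq_iff_eq_mul] at e
    exact e.symm
  rcases hK with hK3 | hK6
  · -- kernel of order three
    have hQ : (⊤ : Subgroup (autT t)).map h.q = D4 := by
      apply Subgroup.eq_of_le_of_card_ge hD
      have hKQ : Nat.card K * _ = 24 := hKQ
      rw [hK3] at hKQ
      rw [card_D4]; omega
    obtain ⟨e0, -, he0⟩ : edgeP ∈ (⊤ : Subgroup (autT t)).map h.q := by rw [hQ]; exact edgeP_mem
    have hm : e0 ^ 2 ∈ K := by
      rw [hKd, MonoidHom.mem_ker, map_pow, he0]; decide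
    have := pow_card_eq_one' (x := (⟨e0 ^ 2, hm⟩ : K))
    rw [hK3] at this
    have := congrArg Subtype.val this
    have this : (e0 ^ 2) ^ 3 = 1 := this
    refine h.lemA' (g := g) (φ := e0 ^ 3) (hcen _) hg2 ?_ ho ?_ (Or.inl ?_)
    · rw [← pow_add]; rwa [← pow_mul] at this
    · rw [map_pow, he0]; decide
    · rw [map_mul, map_pow, he0, hgq]; decide
  · obtain ⟨⟨σ, hσ⟩, hor⟩ := exists_prime_orderOf_dvd_card' 2 (show 2 ∣ Nat.card K by rw [hK6]; norm_num)
    have hσ2 : orderOf σ = 2 := by rw [← hor]; exact (Subgroup.orderOf_coe ⟨σ, hσ⟩)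
    have hσσ : σ * σ = 1 := by rw [← pow_two, ← hσ2]; exact pow_orderOf_eq_one σ
    have hσ1 : σ ≠ 1 := by rintro rfl; simp at hσ2
    have hqσ : h.q σ = 1 := hσ
    have hgφ : g * (σ * g) = σ := by rw [← mul_assoc, hcen σ, mul_assoc, hg2, mul_one]
    refine h.lemA' (g := g) (φ := σ * g) (hcen _) hg2 ?_ ho ?_ (Or.inr ⟨?_, ?_⟩)
    · rw [mul_assoc, hgφ, hσσ]
    · rw [map_mul, hqσ, one_mul]; exact hgm
    · intro e
      exact hσ1 (mul_eq_right.1 e.symm)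
    · rw [hgφ, hqσ]

theorem bound (h : Conf t a o) : Nat.card (autT t) ≤ 12 := by
  have hK12 : Nat.card h.q.ker ∣ 12 :=
    h.card_dvd12 _ (fun u hu z hz e => h.kerfree hu hz e)
  have hD : (⊤ : Subgroup (autT t)).map h.q ≤ D4 := by
    rintro _ ⟨p, _, rfl⟩; exact h.q_mem p
  have hQ8 : Nat.card ((⊤ : Subgroup (autT t)).map h.q) ∣ 8 := by
    rw [← card_D4]; exact Subgroup.card_dvd_of_le hD
  have hKQ := card_ker_map h.q ⊤
  rw [top_inf_eq, Subgroup.card_top] at hKQ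
  have h16 := h.case16
  have h24 := h.case24
  have h96 : Nat.card (autT t) ∣ 96 := by
    rw [← hKQ]; exact mul_dvd_mul hK12 hQ8
  exact nat96 _ h96 h16 h24

end Conf

theorem Lv.bound {t : V17 → V17 → V17} {a : Fin 4 → V17} (h : Lv t a) :
    Nat.card (autT t) ≤ 12 := by
  by_cases e : t (a 0) (a 2) = t (a 1) (a 3)
  · have hc : Conf t a (t (a 0) (a 2)) := by
      refine { toLv := h, opp := ?_ }
      have key : ∀ i, t (a i) (a (i+2)) = t (a (i+2)) (a i) := by
        intro i
        exact (h.sym (a i) (a (i+2)) (h.opp_cov i)).symm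
      intro i
      fin_cases i
      · rfl
      · exact e.symm
      · exact (key 0).symm
      · exact (key 1).symm.trans e.symm
    exact hc.bound
  · have hinj : Function.Injective h.q := by
      rw [injective_iff_map_eq_one]
      intro φ hφ
      by_contra hne
      exact e (h.kfix φ.2 ((h.q_eq_one φ).1 hφ) (fun hh => hne (Subtype.ext hh))).1
    have h8 : Nat.card (autT t) ≤ Nat.card D4 :=
      Nat.card_le_card_of_injective (fun φ : autT t => (⟨h.q φ, h.q_mem φ⟩ : D4))
        (fun x y exy => hinj (congrArg Subtype.val exy))
    rw [card_D4] at h8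
    omega


section Leave
variable {t : V17 → V17 → V17}

def nb (t : V17 → V17 → V17) (x : V17) : Finset V17 :=
  Finset.univ.filter fun y => x ≠ y ∧ t x y = y

theorem mem_nb {x y : V17} : y ∈ nb t x ↔ x ≠ y ∧ t x y = y := by simp [nb]

theorem nb_symm (h : TS t) {x y : V17} (hxy : y ∈ nb t x) : x ∈ nb t y := by
  rw [mem_nb] at *
  refine ⟨hxy.1.symm, ?_⟩
  by_contra hne
  have e := h.sym y x hne
  rw [hxy.2] at e
  have e2 := h.inv y x
  rw [← e, h.idem] at e2
  exact hxy.1 e2.symm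

theorem nb_even (h : TS t) (x : V17) : 2 ∣ (nb t x).card := by
  have h1 : 2 ∣ (Finset.univ.filter fun y => t x y ≠ y).card := by
    apply two_dvd_of_free (t x)
    · intro y hy
      simp only [Finset.mem_filter, Finset.mem_univ, true_and] at *
      rw [h.inv]
      exact fun e => hy e.symm
    · intro y _; exact h.inv x y
    · intro y hy
      simpa using hy
  have h2 : insert x (nb t x) = Finset.univ.filter fun y => ¬ t x y ≠ y := by
    ext y
    simp only [Finset.mem_insert, mem_nb, Finset.mem_filter, Finset.mem_univ, true_and, not_not]
    constructor
    · rintro (rfl | e)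
      · exact h.idem y
      · exact e.2
    · intro e
      by_cases hx : y = x
      · exact Or.inl hx
      · exact Or.inr ⟨fun e => hx e.symm, e⟩
  have h3 : (insert x (nb t x)).card = (nb t x).card + 1 :=
    Finset.card_insert_of_notMem (by simp [mem_nb])
  have h4 := Finset.card_filter_add_card_filter_not (s := (Finset.univ : Finset V17))
    (fun y => t x y ≠ y)
  rw [← h2, h3, Finset.card_univ, Fintype.card_fin] at h4
  omega

theorem nb_two (h : TS t) {x y : V17} (hxy : y ∈ nb t x) : 2 ≤ (nb t x).card := by
  have h1 := Finset.card_pos.2 ⟨y, hxy⟩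
  have := nb_even h x
  omega

theorem nb_three (h : TS t) (x : V17) : 3 * (nb t x).card ≤ ∑ z, (nb t z).card := by
  have h1 : ∑ z ∈ insert x (nb t x), (nb t z).card ≤ ∑ z, (nb t z).card :=
    Finset.sum_le_sum_of_subset (Finset.subset_univ _)
  rw [Finset.sum_insert (by simp [mem_nb])] at h1
  have h2 : (nb t x).card • 2 ≤ ∑ z ∈ nb t x, (nb t z).card :=
    Finset.card_nsmul_le_sum _ _ _ (fun z hz => nb_two h (nb_symm h hz))
  rw [smul_eq_mul] at h2
  omega

theorem sum_ne_two (h : TS t) : ∑ z, (nb t z).card ≠ 2 := by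
  intro e
  have h0 : ∀ x, (nb t x).card = 0 := by
    intro x
    have := nb_three h x
    omega
  simp [h0] at e

set_option maxHeartbeats 1000000 in
theorem leave_cycle (h : TS t) (e : ∑ z, (nb t z).card = 8) : ∃ a, Lv t a := by
  classical
  have h02 : ∀ x, (nb t x).card = 0 ∨ (nb t x).card = 2 := by
    intro x
    have := nb_three h x
    have := nb_even h x
    omega
  have hd2 : ∀ {x y}, y ∈ nb t x → (nb t x).card = 2 := by
    intro x y hy
    have := nb_two h hy
    have := h02 x
    omega
  -- the second neighbour
  have hex : ∀ {x y}, y ∈ nb t x → ∃ z, z ≠ y ∧ nb t x = {y, z} := by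
    intro x y hy
    obtain ⟨u, v, huv, e⟩ := Finset.card_eq_two.1 (hd2 hy)
    rw [e] at hy
    simp only [Finset.mem_insert, Finset.mem_singleton] at hy
    rcases hy with rfl | rfl
    · exact ⟨v, huv.symm, e⟩
    · exact ⟨u, huv, by rw [e, Finset.pair_comm]⟩
  set S := Finset.univ.filter fun z => (nb t z).card ≠ 0 with hS
  have hmS : ∀ {x y}, y ∈ nb t x → x ∈ S := by
    intro x y hy
    simp only [hS, Finset.mem_filter, Finset.mem_univ, true_and]
    rw [hd2 hy]; norm_num
  have hSc : S.card = 4 := by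
    have h1 : ∑ z ∈ S, (nb t z).card = 8 := by
      rw [← e, hS]
      apply Finset.sum_filter_ne_zero
    have h2 : ∑ z ∈ S, (nb t z).card = ∑ z ∈ S, 2 := by
      apply Finset.sum_congr rfl
      intro z hz
      simp only [hS, Finset.mem_filter, Finset.mem_univ, true_and] at hz
      have := h02 z
      omega
    rw [h2, Finset.sum_const, smul_eq_mul] at h1
    omega
  obtain ⟨x, hx⟩ : S.Nonempty := Finset.card_pos.1 (by omega)
  obtain ⟨y, hy⟩ : (nb t x).Nonempty := by
    simp only [hS, Finset.mem_filter, Finset.mem_univ, true_and] at hx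
    exact Finset.card_pos.1 (by omega)
  obtain ⟨y', hyy, hnx⟩ := hex hy
  have hy' : y' ∈ nb t x := by rw [hnx]; simp
  obtain ⟨w, hwx, hny⟩ := hex (nb_symm h hy)
  obtain ⟨w', hwx', hny'⟩ := hex (nb_symm h hy')
  have hw : w ∈ nb t y := by rw [hny]; simp
  have hw' : w' ∈ nb t y' := by rw [hny']; simp
  have nx : ∀ {u v}, v ∈ nb t u → u ≠ v := fun hv => (mem_nb.1 hv).1
  have hxy := nx hy
  have hxy' := nx hy'
  have hyw := nx hw
  have hyw' := nx hw'
  have hwy' : w ≠ y' := by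
    rintro rfl
    have hw2 : w' = y := by
      have := nb_symm h hw
      rw [hny'] at this
      simp only [Finset.mem_insert, Finset.mem_singleton] at this
      rcases this with e | e
      · exact absurd e.symm hxy
      · exact e.symm
    subst hw2
    have hlt : ({x, w', w} : Finset V17).card < S.card := by
      rw [hSc]; exact lt_of_le_of_lt Finset.card_le_three (by norm_num)
    obtain ⟨z, hz, hz'⟩ := Finset.exists_mem_notMem_of_card_lt_card hlt
    simp only [Finset.mem_insert, Finset.mem_singleton, not_or] at hz'
    obtain ⟨z1, hz1⟩ : (nb t z).Nonempty := by
      simp only [hS, Finset.mem_filter, Finset.mem_univ, true_and] at hz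
      exact Finset.card_pos.1 (by omega)
    obtain ⟨z2, hz12, hnz⟩ := hex hz1
    have hz2 : z2 ∈ nb t z := by rw [hnz]; simp
    have hn : ∀ v ∈ nb t z, v ≠ x ∧ v ≠ w' ∧ v ≠ w := by
      intro v hv
      have := nb_symm h hv
      refine ⟨?_, ?_, ?_⟩ <;> rintro rfl
      · rw [hnx, Finset.mem_insert, Finset.mem_singleton] at this
        exact this.elim hz'.2.1 hz'.2.2
      · rw [hny, Finset.mem_insert, Finset.mem_singleton] at this
        exact this.elim hz'.1 hz'.2.2
      · rw [hny', Finset.mem_insert, Finset.mem_singleton] at this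
        exact this.elim hz'.1 hz'.2.1
    have h1 := hn z1 hz1
    have hsub : ({z, z1, x, w', w} : Finset V17) ⊆ S := by
      intro v hv
      simp only [Finset.mem_insert, Finset.mem_singleton] at hv
      rcases hv with rfl | rfl | rfl | rfl | rfl
      · exact hz
      · exact hmS (nb_symm h hz1)
      · exact hx
      · exact hmS hw
      · exact hmS hw'
    have hc := Finset.card_le_card hsub
    have : ({z, z1, x, w', w} : Finset V17).card = 5 := by
      rw [Finset.card_insert_of_notMem, Finset.card_insert_of_notMem,
        Finset.card_insert_of_notMem, Finset.card_insert_of_notMem, Finset.card_singleton]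
      · rw [Finset.mem_singleton]; exact hyw
      · simp only [Finset.mem_insert, Finset.mem_singleton, not_or]; exact ⟨hxy, hxy'⟩
      · simp only [Finset.mem_insert, Finset.mem_singleton, not_or]; exact h1
      · simp only [Finset.mem_insert, Finset.mem_singleton, not_or]; exact ⟨nx hz1, hz'⟩
    omega
  have hcard : ({x, y, w, y'} : Finset V17).card = 4 := by
    rw [Finset.card_insert_of_notMem, Finset.card_insert_of_notMem, Finset.card_insert_of_notMem,
      Finset.card_singleton]
    · simpa using hwy'
    · simp only [Finset.mem_insert, Finset.mem_singleton, not_or]; exact ⟨hyw, hyy.symm⟩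
    · simp only [Finset.mem_insert, Finset.mem_singleton, not_or]; exact ⟨hxy, hwx.symm, hxy'⟩
  have hSe : ({x, y, w, y'} : Finset V17) = S := by
    apply Finset.eq_of_subset_of_card_le
    · intro v hv
      simp only [Finset.mem_insert, Finset.mem_singleton] at hv
      rcases hv with rfl | rfl | rfl | rfl
      · exact hx
      · exact hmS hw
      · exact hmS (nb_symm h hw)
      · exact hmS hw'
    · omega
  have hww : w' = w := by
    have h1 : w' ∈ S := hmS (nb_symm h hw')
    rw [← hSe] at h1
    simp only [Finset.mem_insert, Finset.mem_singleton] at h1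
    rcases h1 with e | e | e | e
    · exact absurd e hwx'
    · have := nb_symm h hw'
      rw [e, hny] at this
      simp only [Finset.mem_insert, Finset.mem_singleton] at this
      rcases this with e | e
      · exact absurd e.symm hxy'
      · exact absurd e.symm hwy'
    · exact e
    · exact absurd e.symm hyw'
  subst hww
  have hnw : nb t w' = {y, y'} := by
    obtain ⟨z, hz, hn⟩ := hex (nb_symm h hw)
    have := nb_symm h hw'
    rw [hn] at this
    simp only [Finset.mem_insert, Finset.mem_singleton] at this
    rcases this with e | e
    · exact absurd e hyy
    · rw [hn, e]
  have T : ∀ {u v}, v ∈ nb t u → t u v = v := fun hv => (mem_nb.1 hv).2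
  refine ⟨![x, y, w', y'], { toTS := h, ainj := ?_, adj1 := ?_, adj3 := ?_, cov := ?_ }⟩
  · intro i j hij
    fin_cases i <;> fin_cases j <;> simp at hij ⊢ <;> first | exact absurd hij ‹_› | exact absurd hij.symm ‹_›
  · intro i
    fin_cases i
    · exact T hy
    · exact T hw
    · exact T (nb_symm h hw')
    · exact T (nb_symm h hy')
  · intro i
    fin_cases i
    · exact T hy'
    · exact T (nb_symm h hy)
    · exact T (nb_symm h hw)
    · exact T hw'
  · intro u v huv e
    have hv : v ∈ nb t u := mem_nb.2 ⟨huv, e⟩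
    have hu : u ∈ S := hmS hv
    rw [← hSe] at hu
    simp only [Finset.mem_insert, Finset.mem_singleton] at hu
    rcases hu with rfl | rfl | rfl | rfl
    · rw [hnx] at hv; simp at hv; exact ⟨0, rfl, hv⟩
    · rw [hny] at hv; simp at hv; exact ⟨1, rfl, hv.symm⟩
    · rw [hnw] at hv; simp at hv; exact ⟨2, rfl, hv.symm⟩
    · rw [hny'] at hv; simp at hv; exact ⟨3, rfl, hv⟩

end Leave


section FromB
variable {B : Finset (Finset V17)}

/-- `z` completes the pair `x, y` to a block. -/
def Tr (B : Finset (Finset V17)) (x y z : V17) : Prop :=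
  x ≠ y ∧ y ≠ z ∧ x ≠ z ∧ ({x, y, z} : Finset V17) ∈ B

theorem Tr.swap {x y z : V17} (h : Tr B x y z) : Tr B y x z :=
  ⟨h.1.symm, h.2.2.1, h.2.1, by rw [Finset.insert_comm]; exact h.2.2.2⟩

theorem Tr.flip {x y z : V17} (h : Tr B x y z) : Tr B x z y :=
  ⟨h.2.2.1, h.2.1.symm, h.1, by rw [Finset.pair_comm]; exact h.2.2.2⟩

theorem Tr.uniq (hB : isPTS B) {x y z w : V17} (h : Tr B x y z) (h' : Tr B x y w) : z = w := by
  have e := hB.2 {x, y} (Finset.card_pair h.1) _ h.2.2.2 _ h'.2.2.2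
    (by intro v; simp only [Finset.mem_insert, Finset.mem_singleton]; tauto)
    (by intro v; simp only [Finset.mem_insert, Finset.mem_singleton]; tauto)
  have hz : z ∈ ({x, y, w} : Finset V17) := by rw [← e]; simp
  simp only [Finset.mem_insert, Finset.mem_singleton] at hz
  rcases hz with e | e | e
  · exact absurd e.symm h.2.2.1
  · exact absurd e.symm h.2.1
  · exact e

theorem Tr.of_mem (hB : isPTS B) {x y : V17} {T : Finset V17} (hT : T ∈ B) (hx : x ∈ T)
    (hy : y ∈ T) (hxy : x ≠ y) : ∃ z, Tr B x y z ∧ T = {x, y, z} := by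
  have h3 := hB.1 T hT
  have hy1 : y ∈ T.erase x := Finset.mem_erase.2 ⟨hxy.symm, hy⟩
  have hc : ((T.erase x).erase y).card = 1 := by
    rw [Finset.card_erase_of_mem hy1, Finset.card_erase_of_mem hx, h3]
  obtain ⟨z, hz⟩ := Finset.card_eq_one.1 hc
  have hzm : z ∈ (T.erase x).erase y := by rw [hz]; simp
  simp only [Finset.mem_erase] at hzm
  have e : T = {x, y, z} := by
    rw [← hz, Finset.insert_erase hy1, Finset.insert_erase hx]
  exact ⟨z, ⟨hxy, fun e => hzm.1 e.symm, fun e => hzm.2.1 e.symm, e ▸ hT⟩, e⟩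

open Classical in
/-- The third point on a block through two points. -/
noncomputable def tB (B : Finset (Finset V17)) (x y : V17) : V17 :=
  if h : ∃ z, Tr B x y z then h.choose else y

theorem tB_eq (hB : isPTS B) {x y z : V17} (h : Tr B x y z) : tB B x y = z := by
  have hex : ∃ z, Tr B x y z := ⟨z, h⟩
  unfold tB
  rw [dif_pos hex]
  exact Tr.uniq hB hex.choose_spec h

theorem tB_neg {x y : V17} (h : ¬ ∃ z, Tr B x y z) : tB B x y = y := by
  unfold tB
  rw [dif_neg h]

theorem tB_ne (hB : isPTS B) {x y : V17} : tB B x y ≠ y ↔ ∃ z, Tr B x y z := by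
  constructor
  · intro h
    by_contra hc
    exact h (tB_neg hc)
  · rintro ⟨z, hz⟩ e
    rw [tB_eq hB hz] at e
    exact hz.2.1 e.symm

theorem tB_TS (hB : isPTS B) : TS (tB B) where
  idem := by
    intro x
    apply tB_neg
    rintro ⟨z, hz⟩
    exact hz.1 rfl
  inv := by
    intro x y
    by_cases h : ∃ z, Tr B x y z
    · obtain ⟨z, hz⟩ := h
      rw [tB_eq hB hz, tB_eq hB hz.flip]
    · rw [tB_neg h, tB_neg h]
  sym := by
    intro x y h
    obtain ⟨z, hz⟩ := (tB_ne hB).1 h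
    rw [tB_eq hB hz, tB_eq hB hz.swap]

theorem leave_count (hB : isPTS B) : ∑ z, (nb (tB B) z).card + 6 * B.card = 272 := by
  classical
  have h1 : (B.biUnion fun T => T.offDiag).card = 6 * B.card := by
    rw [Finset.card_biUnion]
    · rw [Finset.sum_congr rfl (g := fun _ => 6), Finset.sum_const, smul_eq_mul, mul_comm]
      intro T hT
      rw [Finset.offDiag_card, hB.1 T hT]
    · intro T1 h1 T2 h2 hne
      rw [Function.onFun, Finset.disjoint_left]
      rintro ⟨x, y⟩ hp1 hp2
      rw [Finset.mem_offDiag] at hp1 hp2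
      apply hne
      apply hB.2 {x, y} (Finset.card_pair hp1.2.2) _ h1 _ h2
      · intro v; simp only [Finset.mem_insert, Finset.mem_singleton]
        rintro (rfl | rfl)
        exacts [hp1.1, hp1.2.1]
      · intro v; simp only [Finset.mem_insert, Finset.mem_singleton]
        rintro (rfl | rfl)
        exacts [hp2.1, hp2.2.1]
  have h2 : (B.biUnion fun T => T.offDiag) =
      (Finset.univ : Finset V17).offDiag.filter (fun p => tB B p.1 p.2 ≠ p.2) := by
    ext ⟨x, y⟩
    rw [Finset.mem_biUnion, Finset.mem_filter, Finset.mem_offDiag]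
    constructor
    · rintro ⟨T, hT, hp⟩
      rw [Finset.mem_offDiag] at hp
      obtain ⟨z, hz, -⟩ := Tr.of_mem hB hT hp.1 hp.2.1 hp.2.2
      exact ⟨⟨Finset.mem_univ _, Finset.mem_univ _, hp.2.2⟩, (tB_ne hB).2 ⟨z, hz⟩⟩
    · rintro ⟨h, hp⟩
      obtain ⟨z, hz⟩ := (tB_ne hB).1 hp
      exact ⟨_, hz.2.2.2, by rw [Finset.mem_offDiag]; simpa using hz.1⟩
  have h3 : ∑ z, (nb (tB B) z).card =
      ((Finset.univ : Finset V17).offDiag.filter (fun p => ¬ tB B p.1 p.2 ≠ p.2)).card := by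
    rw [← Finset.card_sigma]
    apply Finset.card_bij (fun (p : (_ : V17) × V17) _ => (p.1, p.2))
    · rintro ⟨x, y⟩ hp
      rw [Finset.mem_sigma, mem_nb] at hp
      rw [Finset.mem_filter, Finset.mem_offDiag]
      exact ⟨⟨Finset.mem_univ _, Finset.mem_univ _, hp.2.1⟩, not_not.2 hp.2.2⟩
    · rintro ⟨x, y⟩ _ ⟨x', y'⟩ _ e
      simp only [Prod.mk.injEq] at e
      obtain ⟨rfl, rfl⟩ := e
      rfl
    · rintro ⟨x, y⟩ hp
      rw [Finset.mem_filter, Finset.mem_offDiag] at hp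
      exact ⟨⟨x, y⟩, Finset.mem_sigma.2 ⟨Finset.mem_univ _, mem_nb.2 ⟨hp.1.2.2, not_not.1 hp.2⟩⟩, rfl⟩
  have h4 := Finset.card_filter_add_card_filter_not (s := (Finset.univ : Finset V17).offDiag)
    (fun p => tB B p.1 p.2 ≠ p.2)
  rw [← h2, ← h3, h1, Finset.offDiag_card, Finset.card_univ, Fintype.card_fin] at h4
  omega

theorem card_le_44 (hB : isPTS B) : B.card ≤ 44 := by
  have h1 := leave_count hB
  have h2 := sum_ne_two (tB_TS hB)
  omega

theorem auto_mem (hB : isPTS B) {φ : Equiv.Perm V17} (hφ : isAuto B φ) : φ ∈ autT (tB B) := by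
  classical
  have him : ∀ {x y z}, Tr B x y z → Tr B (φ x) (φ y) (φ z) := by
    intro x y z h
    refine ⟨φ.injective.ne h.1, φ.injective.ne h.2.1, φ.injective.ne h.2.2.1, ?_⟩
    have := hφ _ h.2.2.2
    simpa [Finset.image_insert] using this
  have hsurj : B.image (fun T => T.image φ) = B := by
    apply Finset.eq_of_subset_of_card_le
    · intro T hT
      obtain ⟨T', hT', rfl⟩ := Finset.mem_image.1 hT
      exact hφ T' hT'
    · rw [Finset.card_image_of_injective _ (Finset.image_injective φ.injective)]
  show ∀ x y, φ (tB B x y) = tB B (φ x) (φ y)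
  intro x y
  by_cases h : ∃ z, Tr B x y z
  · obtain ⟨z, hz⟩ := h
    rw [tB_eq hB hz, tB_eq hB (him hz)]
  · rw [tB_neg h, tB_neg]
    rintro ⟨w, hw⟩
    have hm := hw.2.2.2
    rw [← hsurj] at hm
    obtain ⟨T, hT, e⟩ := Finset.mem_image.1 hm
    have hmem : ∀ v, φ v ∈ ({φ x, φ y, w} : Finset V17) → v ∈ T := by
      intro v hv
      rw [← e] at hv
      obtain ⟨v', hv', e'⟩ := Finset.mem_image.1 hv
      rwa [← φ.injective e']
    obtain ⟨z, hz, -⟩ := Tr.of_mem hB hT (hmem x (by simp)) (hmem y (by simp))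
      (fun e => hw.1 (by rw [e]))
    exact h ⟨z, hz⟩

theorem aut_le (hB : isPTS B) (hc : B.card = 44) :
    Nat.card {φ : Equiv.Perm (Fin 17) // isAuto B φ} ≤ 12 := by
  have h1 := leave_count hB
  obtain ⟨a, ha⟩ := leave_cycle (tB_TS hB) (by omega)
  refine le_trans ?_ ha.bound
  exact Nat.card_le_card_of_injective
    (fun φ : {φ : Equiv.Perm (Fin 17) // isAuto B φ} => (⟨φ.1, auto_mem hB φ.2⟩ : autT (tB B)))
    (fun x y e => Subtype.ext (by simpa using e))

end FromB

def exL : List (Fin 17 × Fin 17 × Fin 17) :=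
  [(0, 1, 3), (0, 2, 5), (0, 4, 13), (0, 6, 12), (0, 7, 15), (0, 8, 14), (0, 9, 11),
   (0, 10, 16), (1, 2, 4), (1, 5, 13), (1, 6, 14), (1, 7, 12), (1, 8, 15), (1, 9, 10),
   (1, 11, 16), (2, 3, 13), (2, 6, 15), (2, 7, 14), (2, 8, 12), (2, 9, 16), (2, 10, 11),
   (3, 4, 8), (3, 5, 7), (3, 6, 16), (3, 9, 15), (3, 10, 12), (3, 11, 14), (4, 5, 6),
   (4, 7, 16), (4, 9, 14), (4, 10, 15), (4, 11, 12), (5, 8, 16), (5, 9, 12), (5, 10, 14),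
   (5, 11, 15), (6, 7, 11), (6, 8, 10), (6, 9, 13), (7, 8, 9), (7, 10, 13), (8, 11, 13),
   (12, 14, 16), (13, 15, 16)]

def blk (p : Fin 17 × Fin 17 × Fin 17) : Finset (Fin 17) := {p.1, p.2.1, p.2.2}

def eqb (x y : Fin 17) : Bool := Nat.beq x.val y.val

theorem eqb_iff {x y : Fin 17} : eqb x y = true ↔ x = y := by
  unfold eqb
  rw [Nat.beq_eq, Fin.ext_iff]

def inb (x : Fin 17) (p : Fin 17 × Fin 17 × Fin 17) : Bool :=
  eqb x p.1 || eqb x p.2.1 || eqb x p.2.2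

theorem inb_iff {x : Fin 17} {p : Fin 17 × Fin 17 × Fin 17} : inb x p = true ↔ x ∈ blk p := by
  unfold inb blk
  simp only [Bool.or_eq_true, eqb_iff, Finset.mem_insert, Finset.mem_singleton, or_assoc]

def eq3 (p q : Fin 17 × Fin 17 × Fin 17) : Bool :=
  eqb p.1 q.1 && eqb p.2.1 q.2.1 && eqb p.2.2 q.2.2

theorem eq3_iff {p q : Fin 17 × Fin 17 × Fin 17} : eq3 p q = true ↔ p = q := by
  unfold eq3
  simp only [Bool.and_eq_true, eqb_iff, Prod.ext_iff, and_assoc]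

/-- Two triples are equal or share at most one point. -/
def chk (p q : Fin 17 × Fin 17 × Fin 17) : Bool :=
  eq3 p q || !((inb p.1 q && inb p.2.1 q) || (inb p.1 q && inb p.2.2 q) ||
    (inb p.2.1 q && inb p.2.2 q))

def dis (p : Fin 17 × Fin 17 × Fin 17) : Bool :=
  !(eqb p.1 p.2.1 || eqb p.1 p.2.2 || eqb p.2.1 p.2.2)

theorem exL_chk : (exL.all fun p => exL.all fun q => chk p q) = true := by
  decide +kernel

theorem exL_dis : (exL.all dis) = true := by
  decide +kernel

theorem exL_nodup : exL.Nodup := by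
  decide +kernel

theorem exL_card3 {p : Fin 17 × Fin 17 × Fin 17} (hp : p ∈ exL) : (blk p).card = 3 := by
  have h := List.all_eq_true.1 exL_dis p hp
  unfold dis at h
  simp only [Bool.not_eq_true', ← Bool.not_eq_true, Bool.or_eq_true, eqb_iff, not_or] at h
  unfold blk
  rw [Finset.card_eq_three]
  exact ⟨_, _, _, h.1.1, h.1.2, h.2, rfl⟩

theorem exL_share {p q : Fin 17 × Fin 17 × Fin 17} (hp : p ∈ exL) (hq : q ∈ exL)
    {x y : Fin 17} (hxy : x ≠ y) (h1 : x ∈ blk p) (h2 : y ∈ blk p) (h3 : x ∈ blk q)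
    (h4 : y ∈ blk q) : p = q := by
  have h := List.all_eq_true.1 (List.all_eq_true.1 exL_chk p hp) q hq
  unfold chk at h
  simp only [Bool.not_eq_true', ← Bool.not_eq_true, Bool.or_eq_true, Bool.and_eq_true,
    inb_iff, eq3_iff] at h
  rcases h with h | h
  · exact h
  · exfalso
    apply h
    unfold blk at h1 h2
    simp only [Finset.mem_insert, Finset.mem_singleton] at h1 h2
    rcases h1 with rfl | rfl | rfl <;> rcases h2 with rfl | rfl | rfl
    · exact absurd rfl hxy
    · exact Or.inl (Or.inl ⟨h3, h4⟩)
    · exact Or.inl (Or.inr ⟨h3, h4⟩)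
    · exact Or.inl (Or.inl ⟨h4, h3⟩)
    · exact absurd rfl hxy
    · exact Or.inr ⟨h3, h4⟩
    · exact Or.inl (Or.inr ⟨h4, h3⟩)
    · exact Or.inr ⟨h4, h3⟩
    · exact absurd rfl hxy

def exB : Finset (Finset (Fin 17)) := exL.toFinset.image blk

theorem mem_exB {T : Finset (Fin 17)} : T ∈ exB ↔ ∃ p ∈ exL, blk p = T := by
  unfold exB
  rw [Finset.mem_image]
  simp only [List.mem_toFinset]

theorem exB_pts : isPTS exB := by
  refine ⟨?_, ?_⟩
  · intro T hT
    obtain ⟨p, hp, rfl⟩ := mem_exB.1 hT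
    exact exL_card3 hp
  · intro s hs T₁ h1 T₂ h2 s1 s2
    obtain ⟨p, hp, rfl⟩ := mem_exB.1 h1
    obtain ⟨q, hq, rfl⟩ := mem_exB.1 h2
    obtain ⟨x, y, hxy, rfl⟩ := Finset.card_eq_two.1 hs
    rw [exL_share hp hq hxy (s1 (by simp)) (s1 (by simp)) (s2 (by simp)) (s2 (by simp))]

theorem exB_card : exB.card = 44 := by
  unfold exB
  rw [Finset.card_image_of_injOn, List.toFinset_card_of_nodup exL_nodup]
  · rfl
  · intro p hp q hq e
    have hp : p ∈ exL := by simpa using hp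
    have hq : q ∈ exL := by simpa using hq
    obtain ⟨x, y, z, hxy, -, -, ee⟩ := Finset.card_eq_three.1 (exL_card3 hp)
    have e : blk p = blk q := e
    have hx : x ∈ blk p := by rw [ee]; simp
    have hy : y ∈ blk p := by rw [ee]; simp
    exact exL_share hp hq hxy hx hy (e ▸ hx) (e ▸ hy)

theorem exB_max : isMMPTS exB :=
  ⟨exB_pts, fun B' h => by rw [exB_card]; exact card_le_44 h⟩

def tauF : Fin 17 → Fin 17 := ![1,2,0,4,5,3,7,8,6,10,11,9,12,13,14,15,16]
def tauI : Fin 17 → Fin 17 := ![2,0,1,5,3,4,8,6,7,11,9,10,12,13,14,15,16]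
def pF : Fin 17 → Fin 17 := ![7,8,6,9,10,11,2,0,1,3,4,5,14,13,12,15,16]
def sF : Fin 17 → Fin 17 := ![8,7,6,9,11,10,2,1,0,3,5,4,12,13,14,15,16]

def tauE : Equiv.Perm (Fin 17) := ⟨tauF, tauI, by decide, by decide⟩
def pE : Equiv.Perm (Fin 17) := ⟨pF, pF, by decide, by decide⟩
def sE : Equiv.Perm (Fin 17) := ⟨sF, sF, by decide, by decide⟩

def exA (i : Fin 3 × Fin 2 × Fin 2) : Equiv.Perm (Fin 17) :=
  tauE ^ i.1.val * pE ^ i.2.1.val * sE ^ i.2.2.val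

def achk (f : Fin 17 → Fin 17) : Bool :=
  exL.all fun p => exL.any fun q => inb (f p.1) q && inb (f p.2.1) q && inb (f p.2.2) q

theorem tau_chk : achk tauF = true := by decide +kernel
theorem p_chk : achk pF = true := by decide +kernel
theorem s_chk : achk sF = true := by decide +kernel

theorem auto_of_chk (φ : Equiv.Perm (Fin 17)) (h : achk φ = true) : isAuto exB φ := by
  intro T hT
  obtain ⟨p, hp, rfl⟩ := mem_exB.1 hT
  obtain ⟨q, hq, e⟩ := List.any_eq_true.1 (List.all_eq_true.1 h p hp)
  simp only [Bool.and_eq_true, inb_iff] at e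
  rw [mem_exB]
  refine ⟨q, hq, ?_⟩
  symm
  apply Finset.eq_of_subset_of_card_le
  · intro v hv
    obtain ⟨u, hu, rfl⟩ := Finset.mem_image.1 hv
    unfold blk at hu
    simp only [Finset.mem_insert, Finset.mem_singleton] at hu
    rcases hu with rfl | rfl | rfl
    · exact e.1.1
    · exact e.1.2
    · exact e.2
  · rw [Finset.card_image_of_injective _ φ.injective, exL_card3 hp, exL_card3 hq]

theorem exA_auto (i : Fin 3 × Fin 2 × Fin 2) : isAuto exB (exA i) := by
  have hm : ∀ φ ψ : Equiv.Perm (Fin 17), isAuto exB φ → isAuto exB ψ → isAuto exB (φ * ψ) := by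
    intro φ ψ h1 h2 T hT
    have := h1 _ (h2 T hT)
    rw [Finset.image_image] at this
    exact this
  have h1 : isAuto exB 1 := by
    intro T hT
    simpa using hT
  have hp : ∀ (φ : Equiv.Perm (Fin 17)) (n : ℕ), isAuto exB φ → isAuto exB (φ ^ n) := by
    intro φ n h
    induction n with
    | zero => exact h1
    | succ n ih => rw [pow_succ]; exact hm _ _ ih h
  refine hm _ _ (hm _ _ (hp _ _ ?_) (hp _ _ ?_)) (hp _ _ ?_)
  · exact auto_of_chk tauE tau_chk
  · exact auto_of_chk pE p_chk
  · exact auto_of_chk sE s_chk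

theorem exA_inj : Function.Injective exA := by
  have h : ∀ i j, exA i 0 = exA j 0 ∧ exA i 1 = exA j 1 ∧ exA i 12 = exA j 12 → i = j := by
    set_option maxRecDepth 100000 in decide +kernel
  intro i j e
  exact h i j (by rw [e]; exact ⟨rfl, rfl, rfl⟩)

theorem ex_card : Nat.card {φ : Equiv.Perm (Fin 17) // isAuto exB φ} = 12 := by
  apply le_antisymm (aut_le exB_pts exB_card)
  have := Nat.card_le_card_of_injective
    (fun i => (⟨exA i, exA_auto i⟩ : {φ : Equiv.Perm (Fin 17) // isAuto exB φ}))
    (fun i j e => exA_inj (congrArg Subtype.val e))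
  simpa using this

theorem mmpts17_aut_group_bounds :
    (∀ B : Finset (Finset (Fin 17)), isMMPTS B →
      Nat.card {φ : Equiv.Perm (Fin 17) // isAuto B φ} ≤ 12) ∧
    (∃ B : Finset (Finset (Fin 17)), isMMPTS B ∧
      Nat.card {φ : Equiv.Perm (Fin 17) // isAuto B φ} = 12) := by
  refine ⟨fun B hB => aut_le hB.1 (le_antisymm (card_le_44 hB.1) ?_), exB, exB_max, ex_card⟩
  rw [← exB_card]
  exact hB.2 _ exB_pts
end

section
/- Every maximum partial triple system of order 17 of Type-N has automorphism group of order at most 2. -/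
def leave {n : ℕ} (B : Finset (Finset (Fin n))) : Set (Finset (Fin n)) :=
  {p | p.card = 2 ∧ ∀ T ∈ B, ¬ p ⊆ T}

def isTypeQ {n : ℕ} (B : Finset (Finset (Fin n))) : Prop :=
  ∃ a b c d : Fin n, a ≠ b ∧ a ≠ c ∧ a ≠ d ∧ b ≠ c ∧ b ≠ d ∧ c ≠ d ∧
    leave B = {{a, b}, {b, c}, {c, d}, {d, a}} ∧
    ∃ e : Fin n, ({a, c, e} : Finset (Fin n)) ∈ B ∧ ({b, d, e} : Finset (Fin n)) ∈ B

/-- Fixed points of a map of prime period on a finset, modulo the prime. -/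
theorem card_fixed_modEq {α : Type*} [DecidableEq α] (S : Finset α) (f : α → α) (p : ℕ)
    (hp : p.Prime) (hS : ∀ x ∈ S, f x ∈ S) (hf : ∀ x ∈ S, f^[p] x = x) :
    S.card ≡ (S.filter (fun x => f x = x)).card [MOD p] := by
  have : Fact p.Prime := ⟨hp⟩
  let g : Function.End S := fun x => ⟨f x.1, hS x.1 x.2⟩
  have hit : ∀ n : ℕ, ∀ x : S, ((g ^ n : Function.End S) x).1 = f^[n] x.1 := by
    intro n
    induction n with
    | zero => intro x; rfl
    | succ k ih =>
      intro x
      rw [pow_succ, Function.iterate_succ_apply]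
      exact ih (g x)
  have hg : g ^ p ^ 1 = 1 := by
    funext x
    apply Subtype.ext
    rw [pow_one, hit]
    exact hf x.1 x.2
  have h := Equiv.Perm.card_fixedPoints_modEq hg
  rw [Fintype.card_coe] at h
  have h2 : Fintype.card (Function.fixedPoints g) = (S.filter (fun x => f x = x)).card := by
    rw [← Fintype.card_coe]
    refine Fintype.card_congr ⟨fun x => ⟨x.1.1, ?_⟩, fun x => ⟨⟨x.1, ?_⟩, ?_⟩, ?_, ?_⟩
    · rw [Finset.mem_filter]
      exact ⟨x.1.2, congrArg Subtype.val x.2⟩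
    · exact (Finset.mem_filter.1 x.2).1
    · exact Subtype.ext (Finset.mem_filter.1 x.2).2
    · intro x; rfl
    · intro x; rfl
  rw [← h2]
  exact h

/-- The partial Steiner quasigroup of a triple system: `m x y` is the third point, or `y` when
the pair is not covered. -/
structure Sys (m : Fin 17 → Fin 17 → Fin 17) : Prop where
  inv : ∀ x y, m x (m x y) = y
  self : ∀ x, m x x = x
  comm : ∀ x y, m x y ≠ y → m x y = m y x

namespace Sys

variable {m : Fin 17 → Fin 17 → Fin 17}

theorem symm (h : Sys m) {x y : Fin 17} (hxy : m x y = y) : m y x = x := by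
  by_contra hne
  have h1 := h.comm y x hne
  rw [hxy] at h1
  have h2 := h.inv y x
  rw [h1, h.self] at h2
  subst h2
  exact hne hxy

theorem comm' (h : Sys m) {x y z : Fin 17} (hz : m x y = z) (hne : z ≠ y) : m y x = z := by
  rw [← h.comm x y (by rw [hz]; exact hne), hz]

theorem rot (h : Sys m) {x y z : Fin 17} (hz : m x y = z) (hne : z ≠ y) : m y z = x := by
  rw [← h.comm' hz hne, h.inv]

theorem ne_left (h : Sys m) {x y : Fin 17} (hne : m x y ≠ y) : m x y ≠ x := by
  intro h1
  have h2 := h.inv x y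
  rw [h1, h.self] at h2
  exact hne (h1.trans h2)

theorem parity (h : Sys m) (F : Finset (Fin 17)) (z : Fin 17) (hF : ∀ y ∈ F, m z y ∈ F) :
    F.card ≡ (F.filter (fun y => m z y = y)).card [MOD 2] := by
  apply card_fixed_modEq F (m z) 2 Nat.prime_two hF
  intro x _
  exact h.inv z x

theorem mod_three (h : Sys m) (F : Finset (Fin 17)) (hF : ∀ x ∈ F, ∀ y ∈ F, m x y ∈ F) :
    3 ∣ ((F ×ˢ F).filter (fun p => m p.1 p.2 ≠ p.2)).card := by
  have h1 := card_fixed_modEq ((F ×ˢ F).filter (fun p => m p.1 p.2 ≠ p.2))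
    (fun p => (p.2, m p.1 p.2)) 3 Nat.prime_three ?_ ?_
  · have h2 : (((F ×ˢ F).filter (fun p => m p.1 p.2 ≠ p.2)).filter
        (fun p => (p.2, m p.1 p.2) = p)) = ∅ := by
      apply Finset.filter_eq_empty_iff.2
      rintro ⟨x, y⟩ hp heq
      rw [Finset.mem_filter] at hp
      exact hp.2 (congrArg Prod.snd heq)
    rw [h2, Finset.card_empty] at h1
    exact (Nat.modEq_zero_iff_dvd).1 h1
  · rintro ⟨x, y⟩ hp
    simp only [Finset.mem_filter, Finset.mem_product] at hp ⊢
    refine ⟨⟨hp.1.2, hF x hp.1.1 y hp.1.2⟩, ?_⟩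
    rw [h.rot rfl hp.2]
    exact (h.ne_left hp.2).symm
  · rintro ⟨x, y⟩ hp
    simp only [Finset.mem_filter, Finset.mem_product] at hp
    have e1 := h.rot rfl hp.2
    have e2 := h.rot e1 (h.ne_left hp.2).symm
    simp only [Function.iterate_succ_apply, Function.iterate_zero, id]
    rw [e1, e2]

/-- Split of the ordered pairs of `F`. -/
theorem split (h : Sys m) (F : Finset (Fin 17)) (hF : ∀ x ∈ F, ∀ y ∈ F, m x y ∈ F) :
    ∃ k, F.card * F.card = 3 * k + F.card +
      ((F ×ˢ F).filter (fun p => p.1 ≠ p.2 ∧ m p.1 p.2 = p.2)).card := by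
  obtain ⟨k, hk⟩ := h.mod_three F hF
  refine ⟨k, ?_⟩
  have h1 := Finset.card_filter_add_card_filter_not (s := F ×ˢ F) (fun p => m p.1 p.2 ≠ p.2)
  have h2 := Finset.card_filter_add_card_filter_not
    (s := (F ×ˢ F).filter (fun p => ¬ m p.1 p.2 ≠ p.2)) (fun p => p.1 = p.2)
  have h3 : (((F ×ˢ F).filter (fun p => ¬ m p.1 p.2 ≠ p.2)).filter (fun p => p.1 = p.2)) =
      F.diag := by
    ext ⟨x, y⟩
    simp only [Finset.mem_filter, Finset.mem_product, Finset.mem_diag]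
    constructor
    · rintro ⟨⟨⟨hx, hy⟩, _⟩, rfl⟩; exact ⟨hx, rfl⟩
    · rintro ⟨hx, rfl⟩; exact ⟨⟨⟨hx, hx⟩, by simp [h.self]⟩, rfl⟩
  have h4 : (((F ×ˢ F).filter (fun p => ¬ m p.1 p.2 ≠ p.2)).filter (fun p => ¬ p.1 = p.2)) =
      ((F ×ˢ F).filter (fun p => p.1 ≠ p.2 ∧ m p.1 p.2 = p.2)) := by
    ext ⟨x, y⟩
    simp only [Finset.mem_filter, Finset.mem_product]
    tauto
  rw [h3, h4, Finset.diag_card] at h2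
  rw [Finset.card_product] at h1
  omega

/-- A point outside a subsystem bounds its size. -/
theorem size_bound (h : Sys m) (F : Finset (Fin 17)) (hF : ∀ x ∈ F, ∀ y ∈ F, m x y ∈ F)
    (w : Fin 17) (hw : w ∉ F) :
    (F.filter (fun z => m z w ≠ w)).card + F.card ≤ 16 := by
  have h1 : (F.filter (fun z => m z w ≠ w)).card ≤ ((insert w F)ᶜ).card := by
    apply Finset.card_le_card_of_injOn (fun z => m z w)
    · intro z hz
      have hz' := Finset.mem_filter.1 (Finset.mem_coe.1 hz)
      simp only [Finset.coe_compl, Set.mem_compl_iff, Finset.mem_coe, Finset.mem_insert, not_or]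
      refine ⟨hz'.2, fun hin => hw ?_⟩
      have := hF z hz'.1 _ hin
      rwa [h.inv] at this
    · intro z hz z' hz' heq
      have a1 := Finset.mem_filter.1 (Finset.mem_coe.1 hz)
      have a2 := Finset.mem_filter.1 (Finset.mem_coe.1 hz')
      have b1 := h.comm _ _ a1.2
      have b2 := h.comm _ _ a2.2
      have : m w z = m w z' := by rw [← b1, ← b2]; exact heq
      rw [← h.inv w z, this, h.inv]
  rw [Finset.card_compl, Finset.card_insert_of_notMem hw, Fintype.card_fin] at h1
  have := Finset.card_le_univ F
  rw [Fintype.card_fin] at this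
  have h17 : F.card ≠ 17 := by
    intro h17
    apply hw
    rw [(Finset.card_eq_iff_eq_univ F).1 (by simpa using h17)]
    exact Finset.mem_univ w
  omega

end Sys

/-- The system has a four-cycle leave `a b c d` and is of type N. -/
structure TypeN (m : Fin 17 → Fin 17 → Fin 17) (a b c d : Fin 17) : Prop where
  sys : Sys m
  ab : a ≠ b
  ac : a ≠ c
  ad : a ≠ d
  bc : b ≠ c
  bd : b ≠ d
  cd : c ≠ d
  la : ∀ y, m a y = y ↔ y = a ∨ y = b ∨ y = d
  lb : ∀ y, m b y = y ↔ y = b ∨ y = a ∨ y = c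
  lc : ∀ y, m c y = y ↔ y = c ∨ y = b ∨ y = d
  ld : ∀ y, m d y = y ↔ y = d ∨ y = a ∨ y = c
  lo : ∀ x, x ≠ a → x ≠ b → x ≠ c → x ≠ d → ∀ y, m x y = y → y = x
  ne : m a c ≠ m b d

namespace TypeN

variable {m : Fin 17 → Fin 17 → Fin 17} {a b c d : Fin 17}

theorem shift (h : TypeN m a b c d) : TypeN m b c d a where
  sys := h.sys
  ab := h.bc
  ac := h.bd
  ad := h.ab.symm
  bc := h.cd
  bd := h.ac.symm
  cd := h.ad.symm
  la := fun y => by rw [h.lb]; tauto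
  lb := h.lc
  lc := fun y => by rw [h.ld]; tauto
  ld := h.la
  lo := fun x h1 h2 h3 h4 => h.lo x h4 h1 h2 h3
  ne := by
    have h1 : m a c ≠ c := fun h1 => by
      rcases (h.la c).1 h1 with h2 | h2 | h2
      · exact h.ac h2.symm
      · exact h.bc h2.symm
      · exact h.cd h2
    rw [← h.sys.comm a c h1]
    exact h.ne.symm

theorem mac (h : TypeN m a b c d) : m a c ≠ c := fun h1 => by
  rcases (h.la c).1 h1 with h2 | h2 | h2
  · exact h.ac h2.symm
  · exact h.bc h2.symm
  · exact h.cd h2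

/-- The third point on a diagonal lies outside of the leave. -/
theorem mac_out (h : TypeN m a b c d) :
    m a c ≠ a ∧ m a c ≠ b ∧ m a c ≠ c ∧ m a c ≠ d := by
  refine ⟨h.sys.ne_left h.mac, ?_, h.mac, ?_⟩
  · intro h1
    have h2 := h.sys.inv a c
    rw [h1, (h.la b).2 (by tauto)] at h2
    exact h.bc h2
  · intro h1
    have h2 := h.sys.inv a c
    rw [h1, (h.la d).2 (by tauto)] at h2
    exact h.cd h2.symm

variable {g : Equiv.Perm (Fin 17)}

theorem leave_pres (hg : ∀ x y, g (m x y) = m (g x) (g y)) (x y : Fin 17) :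
    m (g x) (g y) = g y ↔ m x y = y := by
  rw [← hg]; exact g.injective.eq_iff

theorem img (h : TypeN m a b c d) (hg : ∀ x y, g (m x y) = m (g x) (g y)) :
    g a = a ∨ g a = b ∨ g a = c ∨ g a = d := by
  by_contra hn
  push Not at hn
  have h1 := h.lo (g a) hn.1 hn.2.1 hn.2.2.1 hn.2.2.2 (g b)
    ((leave_pres hg a b).2 ((h.la b).2 (by tauto)))
  exact h.ab (g.injective h1).symm

/-- Fixing two adjacent leave points fixes the whole cycle. -/
theorem fix_opp (h : TypeN m a b c d) (hg : ∀ x y, g (m x y) = m (g x) (g y))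
    (ha : g a = a) : g c = c := by
  have h1 := h.shift.shift.img hg
  have h2 := leave_pres hg a c
  rw [ha] at h2
  have h3 : ¬ m a (g c) = g c := fun h4 => h.mac (h2.1 h4)
  rw [h.la] at h3
  tauto

theorem opp (h : TypeN m a b c d) (hg : ∀ x y, g (m x y) = m (g x) (g y)) :
    (g a = b → g c = d) ∧ (g a = c → g c = a) ∧ (g a = d → g c = b) := by
  have h1 := h.shift.shift.img hg
  have h2 : ¬ m (g a) (g c) = g c := fun h4 => h.mac ((leave_pres hg a c).1 h4)
  refine ⟨fun h3 => ?_, fun h3 => ?_, fun h3 => ?_⟩ <;> rw [h3] at h2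
  · rw [h.lb] at h2; tauto
  · rw [h.lc] at h2; tauto
  · rw [h.ld] at h2; tauto

theorem pow_four (h : TypeN m a b c d) (hg : ∀ x y, g (m x y) = m (g x) (g y)) :
    g (g (g (g a))) = a := by
  have oa := h.opp hg
  have ob := h.shift.opp hg
  have nab := g.injective.ne h.ab
  have nbc := g.injective.ne h.bc
  rcases h.img hg with ia | ia | ia | ia
  · simp only [ia]
  · have oc := oa.1 ia
    rcases h.shift.img hg with ib | ib | ib | ib
    · exact absurd (ia.trans ib.symm) nab
    · simp only [ia, ib, oc, ob.1 ib]
    · exact absurd (ib.trans oc.symm) nbc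
    · simp only [ia, ib]
  · simp only [ia, oa.2.1 ia]
  · have oc := oa.2.2 ia
    rcases h.shift.img hg with ib | ib | ib | ib
    · exact absurd (ib.trans oc.symm) nbc
    · simp only [ia, ob.1 ib]
    · exact absurd (ia.trans ib.symm) nab
    · simp only [ia, ob.2.2 ib, oc, ib]

/-- The list of leave edges. -/
theorem edges (h : TypeN m a b c d) (x y : Fin 17) (hxy : x ≠ y) (hm : m x y = y) :
    ((x = a ∨ x = c) ∧ (y = b ∨ y = d)) ∨ ((x = b ∨ x = d) ∧ (y = a ∨ y = c)) := by
  by_cases h1 : x = a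
  · subst h1; rw [h.la] at hm; have := hxy.symm; tauto
  by_cases h2 : x = b
  · subst h2; rw [h.lb] at hm; have := hxy.symm; tauto
  by_cases h3 : x = c
  · subst h3; rw [h.lc] at hm; have := hxy.symm; tauto
  by_cases h4 : x = d
  · subst h4; rw [h.ld] at hm; have := hxy.symm; tauto
  exact absurd (h.lo x h1 h2 h3 h4 y hm).symm hxy

theorem fix_closed (hg : ∀ x y, g (m x y) = m (g x) (g y)) :
    ∀ x ∈ Finset.univ.filter (fun x => g x = x), ∀ y ∈ Finset.univ.filter (fun x => g x = x),
      m x y ∈ Finset.univ.filter (fun x => g x = x) := by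
  intro x hx y hy
  simp only [Finset.mem_filter, Finset.mem_univ, true_and] at *
  rw [hg, hx, hy]

/-- A proper subsystem has at most eight points. -/
theorem le_eight (h : TypeN m a b c d) (F : Finset (Fin 17))
    (hF : ∀ x ∈ F, ∀ y ∈ F, m x y ∈ F) (hne : F ≠ Finset.univ) : F.card ≤ 8 := by
  have key : ∀ w, w ∉ F → w ≠ a → w ≠ b → w ≠ c → w ≠ d → F.card ≤ 8 := by
    intro w hw h1 h2 h3 h4
    have h5 := h.sys.size_bound F hF w hw
    rw [Finset.filter_true_of_mem] at h5
    · omega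
    · intro z hz h6
      exact hw (h.lo w h1 h2 h3 h4 z (h.sys.symm h6) ▸ hz)
  by_cases hex : ∃ w, w ∉ F ∧ w ≠ a ∧ w ≠ b ∧ w ≠ c ∧ w ≠ d
  · obtain ⟨w, hw, h1, h2, h3, h4⟩ := hex
    exact key w hw h1 h2 h3 h4
  · exfalso
    have hsub : Fᶜ ⊆ {a, b, c, d} := by
      intro w hw
      rw [Finset.mem_compl] at hw
      by_contra h1
      simp only [Finset.mem_insert, Finset.mem_singleton, not_or] at h1
      exact hex ⟨w, hw, h1⟩
    have hc := (Finset.card_le_card hsub).trans Finset.card_le_four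
    rw [Finset.card_compl, Fintype.card_fin] at hc
    obtain ⟨w, hw⟩ : ∃ w, w ∉ F := by
      by_contra hall
      push Not at hall
      exact hne (Finset.eq_univ_iff_forall.2 hall)
    have h5 := h.sys.size_bound F hF w hw
    have h6 := Finset.card_filter_add_card_filter_not (s := F) (fun z => m z w ≠ w)
    have h7 : (F.filter (fun z => ¬ m z w ≠ w)) ⊆ {a, b, c, d} := by
      intro z hz
      rw [Finset.mem_filter] at hz
      by_contra h1
      simp only [Finset.mem_insert, Finset.mem_singleton, not_or] at h1
      have := h.lo z h1.1 h1.2.1 h1.2.2.1 h1.2.2.2 w (not_not.1 hz.2)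
      exact hw (this ▸ hz.1)
    have h8 := (Finset.card_le_card h7).trans Finset.card_le_four
    omega

/-- An automorphism fixing the leave pointwise is trivial. -/
theorem rigid (h : TypeN m a b c d) (hg : ∀ x y, g (m x y) = m (g x) (g y))
    (ha : g a = a) (hb : g b = b) (hc : g c = c) (hd : g d = d) : g = 1 := by
  by_contra hne
  set F := Finset.univ.filter (fun x => g x = x) with hFdef
  have hF := fix_closed hg
  rw [← hFdef] at hF
  have memF : ∀ x, x ∈ F ↔ g x = x := fun x => by simp [hFdef]
  have hFne : F ≠ Finset.univ := by
    intro hu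
    apply hne
    ext x
    have : x ∈ F := hu ▸ Finset.mem_univ x
    rw [(memF x).1 this]; rfl
  have h8 := h.le_eight F hF hFne
  have maF := (memF a).2 ha
  have mbF := (memF b).2 hb
  have mcF := (memF c).2 hc
  have mdF := (memF d).2 hd
  have h6 : ({a, b, c, d, m a c, m b d} : Finset (Fin 17)).card = 6 := by
    obtain ⟨o1, o2, o3, o4⟩ := h.mac_out
    obtain ⟨o5, o6, o7, o8⟩ := h.shift.mac_out
    simp [Finset.card_insert_of_notMem, h.ne, h.ab, h.ac, h.ad, h.bc, h.bd, h.cd, o1.symm,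
      o2.symm, o3.symm, o4.symm, o5.symm, o6.symm, o7.symm, o8.symm]
  have h6' : 6 ≤ F.card := by
    rw [← h6]
    apply Finset.card_le_card
    intro x hx
    simp only [Finset.mem_insert, Finset.mem_singleton] at hx
    rcases hx with rfl | rfl | rfl | rfl | rfl | rfl
    · exact maF
    · exact mbF
    · exact mcF
    · exact mdF
    · exact hF _ maF _ mcF
    · exact hF _ mbF _ mdF
  have hpar := h.sys.parity F a (fun y hy => hF a maF y hy)
  have hp3 : (F.filter (fun y => m a y = y)) = {a, b, d} := by
    ext y
    simp only [Finset.mem_filter, h.la, Finset.mem_insert, Finset.mem_singleton]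
    constructor
    · exact fun h => h.2
    · rintro (rfl | rfl | rfl)
      · exact ⟨maF, by simp⟩
      · exact ⟨mbF, by simp⟩
      · exact ⟨mdF, by simp⟩
  rw [hp3, Finset.card_eq_three.2 ⟨a, b, d, h.ab, h.ad, h.bd, rfl⟩] at hpar
  obtain ⟨k, hk⟩ := h.sys.split F hF
  have hL : ((F ×ˢ F).filter (fun p => p.1 ≠ p.2 ∧ m p.1 p.2 = p.2)) =
      (({a, c} : Finset (Fin 17)) ×ˢ ({b, d} : Finset (Fin 17))) ∪
      (({b, d} : Finset (Fin 17)) ×ˢ ({a, c} : Finset (Fin 17))) := by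
    ext ⟨x, y⟩
    simp only [Finset.mem_filter, Finset.mem_product, Finset.mem_union, Finset.mem_insert,
      Finset.mem_singleton]
    constructor
    · rintro ⟨_, h1, h2⟩
      exact h.edges x y h1 h2
    · rintro (⟨rfl | rfl, rfl | rfl⟩ | ⟨rfl | rfl, rfl | rfl⟩)
      · exact ⟨⟨maF, mbF⟩, h.ab, (h.la _).2 (by tauto)⟩
      · exact ⟨⟨maF, mdF⟩, h.ad, (h.la _).2 (by tauto)⟩
      · exact ⟨⟨mcF, mbF⟩, h.bc.symm, (h.lc _).2 (by tauto)⟩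
      · exact ⟨⟨mcF, mdF⟩, h.cd, (h.lc _).2 (by tauto)⟩
      · exact ⟨⟨mbF, maF⟩, h.ab.symm, (h.lb _).2 (by tauto)⟩
      · exact ⟨⟨mbF, mcF⟩, h.bc, (h.lb _).2 (by tauto)⟩
      · exact ⟨⟨mdF, maF⟩, h.ad.symm, (h.ld _).2 (by tauto)⟩
      · exact ⟨⟨mdF, mcF⟩, h.cd.symm, (h.ld _).2 (by tauto)⟩
  rw [hL, Finset.card_union_of_disjoint, Finset.card_product, Finset.card_product,
    Finset.card_pair h.ac, Finset.card_pair h.bd] at hk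
  · generalize F.card = n at *
    have hn : n % 2 = 1 := hpar
    interval_cases n <;> omega
  · rw [Finset.disjoint_left]
    rintro ⟨x, y⟩ h1 h2
    simp only [Finset.mem_product, Finset.mem_insert, Finset.mem_singleton] at h1 h2
    rcases h1.1 with rfl | rfl <;> rcases h2.1 with h3 | h3
    · exact h.ab h3
    · exact h.ad h3
    · exact h.bc h3.symm
    · exact h.cd h3

/-- An involutory automorphism moves leave points around without a fixed leave edge. -/
theorem no_edge (h : TypeN m a b c d) (hg : ∀ x y, g (m x y) = m (g x) (g y)) (hne : g ≠ 1)
    (ha : g a = a) (hb : g b = b) : False :=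
  hne (h.rigid hg ha hb (h.fix_opp hg ha) (h.shift.fix_opp hg hb))

/-- If the fixed set is `{x}` then `x a` and the opposite point `c` form a triple. -/
theorem single (h : TypeN m a b c d) (hg : ∀ x y, g (m x y) = m (g x) (g y))
    (hinv : ∀ x, g (g x) = x) (x : Fin 17) (hx : ∀ y, g y = y ↔ y = x) :
    m a c = x := by
  have hxa : x ≠ a := by
    rintro rfl
    exact h.ac.symm ((hx c).1 (h.fix_opp hg ((hx x).2 rfl)))
  have hxb : x ≠ b := by
    rintro rfl
    exact h.bd.symm ((hx d).1 (h.shift.fix_opp hg ((hx x).2 rfl)))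
  have hxc : x ≠ c := by
    rintro rfl
    exact h.ac ((hx a).1 (h.shift.shift.fix_opp hg ((hx x).2 rfl)))
  have hxd : x ≠ d := by
    rintro rfl
    exact h.bd ((hx b).1 (h.shift.shift.shift.fix_opp hg ((hx x).2 rfl)))
  have hy : ∀ y, y ≠ a → y ≠ b → y ≠ c → y ≠ d → y ≠ x → m x y = g y := by
    intro y h1 h2 h3 h4 h5
    have hcov : m y (g y) ≠ g y := fun h6 => h5 ((hx y).1 (h.lo y h1 h2 h3 h4 (g y) h6))
    have h7 : g (m y (g y)) = m y (g y) := by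
      rw [hg, hinv]; exact (h.sys.comm _ _ hcov).symm
    have h8 := (hx _).1 h7
    have h9 := h.sys.inv y (g y)
    rw [h8] at h9
    rw [← h9]
    apply h.sys.comm
    intro h10
    exact h5 (h.lo x hxa hxb hxc hxd y h10)
  set u := m x a with hu
  have hua : u ≠ a := fun h1 => hxa (h.lo x hxa hxb hxc hxd a h1).symm
  have hux : m x u = a := h.sys.inv x a
  have hau : m a u = x := h.sys.rot hu.symm hua
  have hur : u = x ∨ u = b ∨ u = c ∨ u = d := by
    by_contra hn
    push Not at hn
    have h1 := hy u hua hn.2.1 hn.2.2.1 hn.2.2.2 hn.1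
    rw [hux] at h1
    have h2 : g a = u := by rw [h1, hinv]
    have := h.img hg
    rw [h2] at this
    tauto
  rcases hur with h1 | h1 | h1 | h1
  · rw [h1, h.sys.self] at hux
    exact absurd hux hxa
  · rw [h1, (h.la b).2 (by tauto)] at hau
    exact absurd hau.symm hxb
  · rwa [h1] at hau
  · rw [h1, (h.la d).2 (by tauto)] at hau
    exact absurd hau.symm hxd

theorem involution_odd (h : TypeN m a b c d) (hg : ∀ x y, g (m x y) = m (g x) (g y))
    (hne : g ≠ 1) (hsq : g ^ 2 = 1) : Equiv.Perm.sign g = -1 := by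
  have hinv : ∀ x, g (g x) = x := fun x => by
    have := congrArg (fun e : Equiv.Perm (Fin 17) => e x) hsq
    simpa [pow_two] using this
  set F := Finset.univ.filter (fun x => g x = x) with hFdef
  have hF := fix_closed hg
  rw [← hFdef] at hF
  have memF : ∀ x, x ∈ F ↔ g x = x := fun x => by simp [hFdef]
  have hFne : F ≠ Finset.univ := by
    intro hu
    apply hne
    ext x
    have : x ∈ F := hu ▸ Finset.mem_univ x
    rw [(memF x).1 this]; rfl
  have h8 := h.le_eight F hF hFne
  have hpar := card_fixed_modEq Finset.univ g 2 Nat.prime_two (fun x _ => Finset.mem_univ _)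
    (fun x _ => hinv x)
  rw [← hFdef, Finset.card_univ, Fintype.card_fin] at hpar
  obtain ⟨k, hk⟩ := h.sys.split F hF
  have hL : ((F ×ˢ F).filter (fun p => p.1 ≠ p.2 ∧ m p.1 p.2 = p.2)) = ∅ := by
    apply Finset.filter_eq_empty_iff.2
    rintro ⟨x, y⟩ hxy
    simp only [Finset.mem_product, memF] at hxy
    rintro ⟨h1, h2⟩
    dsimp only at h1 h2
    have e1 := h.no_edge hg hne
    have e2 := h.shift.no_edge hg hne
    have e3 := h.shift.shift.no_edge hg hne
    have e4 := h.shift.shift.shift.no_edge hg hne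
    rcases h.edges x y h1 h2 with ⟨rfl | rfl, rfl | rfl⟩ | ⟨rfl | rfl, rfl | rfl⟩
    · exact e1 hxy.1 hxy.2
    · exact e4 hxy.2 hxy.1
    · exact e2 hxy.2 hxy.1
    · exact e3 hxy.1 hxy.2
    · exact e1 hxy.2 hxy.1
    · exact e2 hxy.1 hxy.2
    · exact e4 hxy.1 hxy.2
    · exact e3 hxy.2 hxy.1
  rw [hL, Finset.card_empty] at hk
  have h1 : F.card ≠ 1 := by
    intro h1
    obtain ⟨x, hx⟩ := Finset.card_eq_one.1 h1
    have hx' : ∀ y, g y = y ↔ y = x := fun y => by rw [← memF, hx, Finset.mem_singleton]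
    exact h.ne ((h.single hg hinv x hx').trans (h.shift.single hg hinv x hx').symm)
  have hcard : Fintype.card (Function.fixedPoints g) = F.card := by
    rw [← Fintype.card_coe]
    exact Fintype.card_congr (Equiv.subtypeEquivRight fun x => (memF x).symm)
  rw [Equiv.Perm.sign_of_pow_two_eq_one hsq, hcard, Fintype.card_fin]
  generalize F.card = n at *
  have hn : 1 = n % 2 := hpar
  have h37 : n = 3 ∨ n = 7 := by
    interval_cases n <;> omega
  rcases h37 with rfl | rfl <;> rfl

theorem auto_odd (h : TypeN m a b c d) (hg : ∀ x y, g (m x y) = m (g x) (g y))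
    (hne : g ≠ 1) : Equiv.Perm.sign g = -1 := by
  by_cases hsq : g ^ 2 = 1
  · exact h.involution_odd hg hne hsq
  · exfalso
    have hg2 : ∀ x y, (g ^ 2) (m x y) = m ((g ^ 2) x) ((g ^ 2) y) := by
      intro x y
      simp only [pow_two, Equiv.Perm.mul_apply, hg]
    have hg4 : ∀ x y, ((g ^ 2) ^ 2) (m x y) = m (((g ^ 2) ^ 2) x) (((g ^ 2) ^ 2) y) := by
      intro x y
      simp only [pow_two, Equiv.Perm.mul_apply, hg]
    have h4 : (g ^ 2) ^ 2 = 1 := by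
      apply h.rigid hg4 <;> simp only [pow_two, Equiv.Perm.mul_apply]
      · exact h.pow_four hg
      · exact h.shift.pow_four hg
      · exact h.shift.shift.pow_four hg
      · exact h.shift.shift.shift.pow_four hg
    have h5 := h.involution_odd hg2 hsq h4
    rw [map_pow] at h5
    rcases Int.units_eq_one_or (Equiv.Perm.sign g) with h6 | h6 <;> rw [h6] at h5 <;>
      exact absurd h5 (by decide)

end TypeN

open Classical in
/-- The third point of the triple through `x, y`, or `y` if there is none. -/
noncomputable def third (B : Finset (Finset (Fin 17))) (x y : Fin 17) : Fin 17 :=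
  if h : ∃ z, ({x, y, z} : Finset (Fin 17)) ∈ B then h.choose else y

section third

variable {B : Finset (Finset (Fin 17))}

theorem triple_distinct (hB : isPTS B) {x y z : Fin 17} (h : ({x, y, z} : Finset (Fin 17)) ∈ B) :
    x ≠ y ∧ x ≠ z ∧ y ≠ z := by
  have h3 := hB.1 _ h
  refine ⟨?_, ?_, ?_⟩ <;> rintro rfl
  · have := Finset.card_le_two (a := x) (b := z)
    simp at h3; omega
  · have := Finset.card_le_two (a := x) (b := y)
    rw [Finset.insert_comm] at h3
    simp at h3
    have := Finset.card_le_two (a := y) (b := x)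
    omega
  · have := Finset.card_le_two (a := x) (b := y)
    simp at h3; omega

theorem triple_unique (hB : isPTS B) {x y z w : Fin 17}
    (h : ({x, y, z} : Finset (Fin 17)) ∈ B) (h' : ({x, y, w} : Finset (Fin 17)) ∈ B) :
    z = w := by
  have d := triple_distinct hB h
  have h1 := hB.2 {x, y} (Finset.card_pair d.1) _ h _ h' (by intro u; simp; tauto)
    (by intro u; simp; tauto)
  have h2 : z ∈ ({x, y, w} : Finset (Fin 17)) := h1 ▸ (by simp)
  simp only [Finset.mem_insert, Finset.mem_singleton] at h2
  rcases h2 with h2 | h2 | h2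
  · exact absurd h2.symm d.2.1
  · exact absurd h2.symm d.2.2
  · exact h2

theorem third_eq (hB : isPTS B) {x y z : Fin 17} (h : ({x, y, z} : Finset (Fin 17)) ∈ B) :
    third B x y = z := by
  have hex : ∃ z, ({x, y, z} : Finset (Fin 17)) ∈ B := ⟨z, h⟩
  rw [third, dif_pos hex]
  exact triple_unique hB hex.choose_spec h

theorem third_mem {x y : Fin 17} (h : third B x y ≠ y) :
    ({x, y, third B x y} : Finset (Fin 17)) ∈ B := by
  by_cases hex : ∃ z, ({x, y, z} : Finset (Fin 17)) ∈ B
  · rw [third, dif_pos hex]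
    exact hex.choose_spec
  · rw [third, dif_neg hex] at h
    exact absurd rfl h

theorem swap12 {x y z : Fin 17} (h : ({x, y, z} : Finset (Fin 17)) ∈ B) :
    ({y, x, z} : Finset (Fin 17)) ∈ B := by
  rwa [Finset.insert_comm]

theorem swap23 {x y z : Fin 17} (h : ({x, y, z} : Finset (Fin 17)) ∈ B) :
    ({x, z, y} : Finset (Fin 17)) ∈ B := by
  rwa [Finset.pair_comm]

theorem third_sys (hB : isPTS B) : Sys (third B) where
  inv := fun x y => by
    by_cases h : third B x y = y
    · rw [h, h]
    · exact third_eq hB (swap23 (third_mem h))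
  self := fun x => by
    by_contra h
    exact (triple_distinct hB (third_mem h)).1 rfl
  comm := fun x y h => (third_eq hB (swap12 (third_mem h))).symm

theorem third_auto (hB : isPTS B) {g : Equiv.Perm (Fin 17)} (hg : isAuto B g)
    (hg' : isAuto B g⁻¹) (x y : Fin 17) : g (third B x y) = third B (g x) (g y) := by
  have img : ∀ (f : Equiv.Perm (Fin 17)) (u v w : Fin 17), isAuto B f →
      ({u, v, w} : Finset (Fin 17)) ∈ B → ({f u, f v, f w} : Finset (Fin 17)) ∈ B := by
    intro f u v w hf h
    have := hf _ h
    simpa [Finset.image_insert] using this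
  by_cases h : third B x y = y
  · rw [h]
    by_contra hne
    have h1 := img g⁻¹ _ _ _ hg' (third_mem (Ne.symm hne))
    simp only [← Equiv.Perm.mul_apply, inv_mul_cancel, Equiv.Perm.one_apply] at h1
    have h2 := third_eq hB h1
    exact (triple_distinct hB h1).2.2 (h.symm.trans h2)
  · exact (third_eq hB (img g _ _ _ hg (third_mem h))).symm

theorem auto_inv {g : Equiv.Perm (Fin 17)} (hg : isAuto B g) : isAuto B g⁻¹ := by
  intro T hT
  have hinj : Function.Injective (fun S : Finset (Fin 17) => S.image g) :=
    Finset.image_injective g.injective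
  have h1 : B.image (fun S : Finset (Fin 17) => S.image g) = B := by
    apply Finset.eq_of_subset_of_card_le
    · intro S hS
      obtain ⟨S', hS', rfl⟩ := Finset.mem_image.1 hS
      exact hg _ hS'
    · rw [Finset.card_image_of_injective _ hinj]
  rw [← h1] at hT
  obtain ⟨S, hS, rfl⟩ := Finset.mem_image.1 hT
  have : (S.image g).image (g⁻¹ : Equiv.Perm (Fin 17)) = S := by
    rw [Finset.image_image]
    simp
  simp only [this]
  exact hS

theorem auto_mul {g k : Equiv.Perm (Fin 17)} (hg : isAuto B g) (hk : isAuto B k) :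
    isAuto B (g * k) := by
  intro T hT
  have := hg _ (hk _ hT)
  rwa [Finset.image_image] at this

theorem pair_count (hB : isPTS B) :
    (Finset.univ.filter (fun p : Fin 17 × Fin 17 =>
      p.1 ≠ p.2 ∧ third B p.1 p.2 = p.2)).card + 6 * B.card = 272 := by
  have h1 : B.biUnion (fun T => T.offDiag) =
      Finset.univ.filter (fun p : Fin 17 × Fin 17 => third B p.1 p.2 ≠ p.2) := by
    ext ⟨x, y⟩
    simp only [Finset.mem_biUnion, Finset.mem_offDiag, Finset.mem_filter, Finset.mem_univ,
      true_and]
    constructor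
    · rintro ⟨T, hT, hx, hy, hxy⟩
      have hT3 := hB.1 T hT
      have hc : ((T.erase x).erase y).card = 1 := by
        rw [Finset.card_erase_of_mem (Finset.mem_erase.2 ⟨hxy.symm, hy⟩),
          Finset.card_erase_of_mem hx, hT3]
      obtain ⟨z, hz⟩ := Finset.card_eq_one.1 hc
      have hTe : T = {x, y, z} := by
        rw [← Finset.insert_erase hx, ← Finset.insert_erase
          (Finset.mem_erase.2 ⟨hxy.symm, hy⟩ : y ∈ T.erase x), hz]
      rw [hTe] at hT
      rw [third_eq hB hT]
      exact (triple_distinct hB hT).2.2.symm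
    · intro h
      have hm := third_mem h
      exact ⟨_, hm, by simp, by simp, (triple_distinct hB hm).1⟩
  have h2 : (B.biUnion (fun T => T.offDiag)).card = 6 * B.card := by
    rw [Finset.card_biUnion]
    · rw [Finset.sum_congr rfl (g := fun _ => 6), Finset.sum_const, smul_eq_mul, mul_comm]
      intro T hT
      rw [Finset.offDiag_card, hB.1 T hT]
    · intro T hT T' hT' hne
      apply Finset.disjoint_left.2
      rintro ⟨x, y⟩ h3 h4
      rw [Finset.mem_offDiag] at h3 h4
      exact hne (hB.2 {x, y} (Finset.card_pair h3.2.2) T hT T' hT'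
        (by intro u hu; simp at hu; rcases hu with rfl | rfl; exacts [h3.1, h3.2.1])
        (by intro u hu; simp at hu; rcases hu with rfl | rfl; exacts [h4.1, h4.2.1]))
  have h3 := Finset.card_filter_add_card_filter_not
    (s := (Finset.univ : Finset (Fin 17)).offDiag) (fun p => third B p.1 p.2 ≠ p.2)
  have h4 : ((Finset.univ : Finset (Fin 17)).offDiag.filter
      (fun p => third B p.1 p.2 ≠ p.2)) =
      Finset.univ.filter (fun p : Fin 17 × Fin 17 => third B p.1 p.2 ≠ p.2) := by
    ext ⟨x, y⟩
    simp only [Finset.mem_offDiag, Finset.mem_filter, Finset.mem_univ, true_and]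
    exact ⟨fun h => h.2, fun h => ⟨(triple_distinct hB (third_mem h)).1, h⟩⟩
  have h5 : ((Finset.univ : Finset (Fin 17)).offDiag.filter
      (fun p => ¬ third B p.1 p.2 ≠ p.2)) =
      Finset.univ.filter (fun p : Fin 17 × Fin 17 => p.1 ≠ p.2 ∧ third B p.1 p.2 = p.2) := by
    ext ⟨x, y⟩
    simp only [Finset.mem_offDiag, Finset.mem_filter, Finset.mem_univ, true_and, not_not]
  rw [h4, h5, ← h1, h2, Finset.offDiag_card, Finset.card_univ, Fintype.card_fin] at h3
  omega

/-- With at least 44 triples the leave is a four-cycle. -/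
theorem leave_cycle_s14 (hB : isPTS B) (hcard : 44 ≤ B.card) :
    ∃ a b c d : Fin 17, a ≠ b ∧ a ≠ c ∧ a ≠ d ∧ b ≠ c ∧ b ≠ d ∧ c ≠ d ∧
      ∀ x y, (x ≠ y ∧ third B x y = y) ↔
        ((x = a ∨ x = c) ∧ (y = b ∨ y = d)) ∨ ((x = b ∨ x = d) ∧ (y = a ∨ y = c)) := by
  have hs := third_sys hB
  set m := third B with hm
  have hN := pair_count hB
  rw [← hm] at hN
  let D : Fin 17 → Finset (Fin 17) := fun x => Finset.univ.filter (fun y => x ≠ y ∧ m x y = y)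
  have memD : ∀ x y, y ∈ D x ↔ x ≠ y ∧ m x y = y := fun x y => by simp [D]
  have symD : ∀ x y, y ∈ D x → x ∈ D y := fun x y h => by
    rw [memD] at *
    exact ⟨h.1.symm, hs.symm h.2⟩
  have evenD : ∀ x, (D x).card % 2 = 0 := by
    intro x
    have h1 := hs.parity Finset.univ x (fun y _ => Finset.mem_univ _)
    have h2 : (Finset.univ.filter (fun y => m x y = y)) = insert x (D x) := by
      ext y
      simp only [Finset.mem_filter, Finset.mem_univ, true_and, Finset.mem_insert, memD]
      constructor
      · intro h
        by_cases hxy : y = x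
        · exact Or.inl hxy
        · exact Or.inr ⟨Ne.symm hxy, h⟩
      · rintro (rfl | h)
        · exact hs.self y
        · exact h.2
    rw [h2, Finset.card_insert_of_notMem (by simp [memD]), Finset.card_univ,
      Fintype.card_fin] at h1
    have h3 : 17 % 2 = ((D x).card + 1) % 2 := h1
    omega
  let K : Finset (Fin 17) := Finset.univ.filter (fun x => (D x).card ≠ 0)
  have memK : ∀ x, x ∈ K ↔ (D x).card ≠ 0 := fun x => by simp [K]
  have hsum : (Finset.univ.filter (fun p : Fin 17 × Fin 17 =>
      p.1 ≠ p.2 ∧ m p.1 p.2 = p.2)).card = ∑ x ∈ K, (D x).card := by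
    have h1 : (Finset.univ.filter (fun p : Fin 17 × Fin 17 =>
        p.1 ≠ p.2 ∧ m p.1 p.2 = p.2)) = (K.sigma D).map
          ⟨fun s => (s.1, s.2), fun s t h => by
            cases s; cases t; simp at h; obtain ⟨rfl, rfl⟩ := h; rfl⟩ := by
      ext ⟨x, y⟩
      simp only [Finset.mem_filter, Finset.mem_univ, true_and, Finset.mem_map,
        Finset.mem_sigma]
      constructor
      · intro h
        refine ⟨⟨x, y⟩, ⟨(memK x).2 ?_, (memD x y).2 h⟩, rfl⟩
        exact Finset.card_ne_zero_of_mem ((memD x y).2 h)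
      · rintro ⟨⟨u, v⟩, ⟨_, h⟩, heq⟩
        have e1 : u = x := congrArg Prod.fst heq
        have e2 : v = y := congrArg Prod.snd heq
        subst e1 e2
        exact (memD _ _).1 h
    rw [h1, Finset.card_map, Finset.card_sigma]
  have subD : ∀ x, D x ⊆ K.erase x := by
    intro x y hy
    refine Finset.mem_erase.2 ⟨((memD x y).1 hy).1.symm, (memK y).2 ?_⟩
    exact Finset.card_ne_zero_of_mem (symD x y hy)
  have lowD : ∀ x ∈ K, 2 ≤ (D x).card := fun x hx => by
    have h1 := evenD x
    have h2 := (memK x).1 hx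
    omega
  have hK2 : K.card * 2 ≤ ∑ x ∈ K, (D x).card := by
    have := Finset.card_nsmul_le_sum K (fun x => (D x).card) 2 lowD
    simpa using this
  have twoD : ∀ x ∈ K, (D x).card = 2 := fun x hx => by
    have h1 := Finset.card_le_card (subD x)
    rw [Finset.card_erase_of_mem hx] at h1
    have h2 := evenD x
    have h3 := lowD x hx
    omega
  have hK3 : ∑ x ∈ K, (D x).card = K.card * 2 := by
    rw [Finset.sum_congr rfl twoD, Finset.sum_const, smul_eq_mul]
  obtain ⟨a, ha⟩ : K.Nonempty := by
    rw [Finset.nonempty_iff_ne_empty]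
    intro h0
    rw [h0] at hK3
    simp only [Finset.card_empty] at hK3
    rw [h0] at hsum
    omega
  have hK4 : K.card = 4 := by
    have h1 := Finset.card_le_card (subD a)
    rw [Finset.card_erase_of_mem ha, twoD a ha] at h1
    omega
  obtain ⟨b, d, hbd, hDa⟩ := Finset.card_eq_two.1 (twoD a ha)
  have hb : b ∈ D a := by rw [hDa]; simp
  have hd : d ∈ D a := by rw [hDa]; simp
  have hbK := Finset.mem_erase.1 (subD a hb)
  have hdK := Finset.mem_erase.1 (subD a hd)
  have hc1 : (((K.erase a).erase b).erase d).card = 1 := by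
    rw [Finset.card_erase_of_mem (Finset.mem_erase.2 ⟨hbd.symm, subD a hd⟩),
      Finset.card_erase_of_mem (subD a hb), Finset.card_erase_of_mem ha, hK4]
  obtain ⟨c, hc⟩ := Finset.card_eq_one.1 hc1
  have hKc : ∀ x, x ∈ K ↔ x = a ∨ x = b ∨ x = c ∨ x = d := by
    intro x
    have h1 : x ∈ ((K.erase a).erase b).erase d ↔ x = c := by rw [hc]; simp
    simp only [Finset.mem_erase] at h1
    constructor
    · intro hx
      by_cases e1 : x = a
      · exact Or.inl e1
      by_cases e2 : x = b
      · exact Or.inr (Or.inl e2)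
      by_cases e3 : x = d
      · exact Or.inr (Or.inr (Or.inr e3))
      exact Or.inr (Or.inr (Or.inl (h1.1 ⟨e3, e2, e1, hx⟩)))
    · rintro (rfl | rfl | h | rfl)
      · exact ha
      · exact hbK.2
      · exact (h1.2 h).2.2.2
      · exact hdK.2
  have hcm : c ∈ ((K.erase a).erase b).erase d := by rw [hc]; simp
  simp only [Finset.mem_erase] at hcm
  obtain ⟨hcd, hcb, hca, hcK⟩ := hcm
  have hDc : D c = {b, d} := by
    apply Finset.eq_of_subset_of_card_le
    · intro y hy
      have h1 := Finset.mem_erase.1 (subD c hy)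
      have h2 : y ≠ a := by
        rintro rfl
        have h3 := symD _ _ hy
        rw [hDa] at h3
        simp only [Finset.mem_insert, Finset.mem_singleton] at h3
        exact h3.elim hcb hcd
      simp only [Finset.mem_insert, Finset.mem_singleton]
      rcases (hKc y).1 h1.2 with h4 | h4 | h4 | h4
      · exact absurd h4 h2
      · exact Or.inl h4
      · exact absurd h4 h1.1
      · exact Or.inr h4
    · rw [twoD c hcK, Finset.card_pair hbd]
  have hDb : D b = {a, c} := by
    symm
    apply Finset.eq_of_subset_of_card_le
    · intro y hy
      simp only [Finset.mem_insert, Finset.mem_singleton] at hy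
      rcases hy with rfl | rfl
      · exact symD _ _ hb
      · exact symD _ _ (by rw [hDc]; simp)
    · rw [twoD b hbK.2, Finset.card_pair (Ne.symm hca)]
  have hDd : D d = {a, c} := by
    symm
    apply Finset.eq_of_subset_of_card_le
    · intro y hy
      simp only [Finset.mem_insert, Finset.mem_singleton] at hy
      rcases hy with rfl | rfl
      · exact symD _ _ hd
      · exact symD _ _ (by rw [hDc]; simp)
    · rw [twoD d hdK.2, Finset.card_pair (Ne.symm hca)]
  refine ⟨a, b, c, d, hbK.1.symm, Ne.symm hca, hdK.1.symm, Ne.symm hcb, hbd, hcd, ?_⟩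
  intro x y
  rw [← memD]
  constructor
  · intro h
    have hx : x ∈ K := (memK x).2 (Finset.card_ne_zero_of_mem h)
    rcases (hKc x).1 hx with h1 | h1 | h1 | h1 <;> rw [h1] at h
    · rw [hDa, Finset.mem_insert, Finset.mem_singleton] at h
      exact Or.inl ⟨Or.inl h1, h⟩
    · rw [hDb, Finset.mem_insert, Finset.mem_singleton] at h
      exact Or.inr ⟨Or.inl h1, h⟩
    · rw [hDc, Finset.mem_insert, Finset.mem_singleton] at h
      exact Or.inl ⟨Or.inr h1, h⟩
    · rw [hDd, Finset.mem_insert, Finset.mem_singleton] at h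
      exact Or.inr ⟨Or.inr h1, h⟩
  · rintro (⟨rfl | rfl, h⟩ | ⟨rfl | rfl, h⟩)
    · rw [hDa]; simpa using h
    · rw [hDc]; simpa using h
    · rw [hDb]; simpa using h
    · rw [hDd]; simpa using h

end third

/-- The triples of an explicit partial triple system of order 17 with 44 triples. -/
def exList : List (Fin 17 × Fin 17 × Fin 17) :=
  [(0, 1, 15), (0, 2, 8), (0, 3, 5), (0, 4, 7), (0, 6, 10), (0, 9, 16),
   (0, 11, 14), (0, 12, 13), (1, 2, 16), (1, 3, 14), (1, 5, 7), (1, 8, 10),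
   (1, 9, 12), (1, 11, 13), (2, 3, 12), (2, 4, 15), (2, 5, 9), (2, 6, 14),
   (2, 7, 11), (2, 10, 13), (3, 4, 10), (3, 6, 7), (3, 8, 11), (3, 9, 15),
   (3, 13, 16), (4, 5, 6), (4, 8, 16), (4, 9, 14), (4, 11, 12), (5, 8, 14),
   (5, 10, 12), (5, 11, 16), (5, 13, 15), (6, 8, 12), (6, 9, 11), (6, 15, 16),
   (7, 8, 15), (7, 9, 10), (7, 12, 16), (7, 13, 14), (8, 9, 13), (10, 11, 15),
   (10, 14, 16), (12, 14, 15)]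

/-- The point set of a triple. -/
def ptSet (t : Fin 17 × Fin 17 × Fin 17) : Finset (Fin 17) := {t.1, t.2.1, t.2.2}

/-- Membership of a point in a triple. -/
def ptIn (x : Fin 17) (t : Fin 17 × Fin 17 × Fin 17) : Bool :=
  x == t.1 || (x == t.2.1 || x == t.2.2)

theorem ptIn_iff (x : Fin 17) (t : Fin 17 × Fin 17 × Fin 17) : x ∈ ptSet t ↔ ptIn x t = true := by
  simp [ptSet, ptIn]

/-- No two points of the triple `t` lie in the triple `s`. -/
def sparse (t s : Fin 17 × Fin 17 × Fin 17) : Bool :=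
  !(ptIn t.1 s && ptIn t.2.1 s) && !(ptIn t.1 s && ptIn t.2.2 s) &&
    !(ptIn t.2.1 s && ptIn t.2.2 s)

theorem exList_sparse :
    (exList.all fun t => exList.all fun s => t == s || sparse t s) = true := by
  decide +kernel

theorem exList_distinct :
    (exList.all fun t => t.1 != t.2.1 && (t.1 != t.2.2 && t.2.1 != t.2.2)) = true := by
  decide +kernel

theorem exList_nodup : exList.Nodup := by decide +kernel

theorem exList_length : exList.length = 44 := by decide +kernel

theorem exList_dist {t : Fin 17 × Fin 17 × Fin 17} (ht : t ∈ exList) :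
    t.1 ≠ t.2.1 ∧ t.1 ≠ t.2.2 ∧ t.2.1 ≠ t.2.2 := by
  have := List.all_eq_true.1 exList_distinct t ht
  simpa using this

theorem exList_unique {t s : Fin 17 × Fin 17 × Fin 17} (ht : t ∈ exList) (hs : s ∈ exList)
    {x y : Fin 17} (hxy : x ≠ y) (hx : x ∈ ptSet t) (hy : y ∈ ptSet t) (hx' : x ∈ ptSet s)
    (hy' : y ∈ ptSet s) : t = s := by
  have h1 := List.all_eq_true.1 (List.all_eq_true.1 exList_sparse t ht) s hs
  rw [Bool.or_eq_true, beq_iff_eq] at h1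
  rcases h1 with h1 | h1
  · exact h1
  · exfalso
    rw [ptIn_iff] at hx' hy'
    simp only [ptSet, Finset.mem_insert, Finset.mem_singleton] at hx hy
    rcases hx with rfl | rfl | rfl <;> rcases hy with rfl | rfl | rfl <;>
      first
      | exact hxy rfl
      | simp [sparse, hx', hy'] at h1

/-- An explicit partial triple system of order 17 with 44 triples. -/
def example17 : Finset (Finset (Fin 17)) := (exList.map ptSet).toFinset

theorem example17_pts : isPTS example17 := by
  constructor
  · intro T hT
    rw [example17, List.mem_toFinset, List.mem_map] at hT
    obtain ⟨t, ht, rfl⟩ := hT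
    have := exList_dist ht
    exact Finset.card_eq_three.2 ⟨_, _, _, this.1, this.2.1, this.2.2, rfl⟩
  · intro p hp T₁ hT₁ T₂ hT₂ hs₁ hs₂
    rw [example17, List.mem_toFinset, List.mem_map] at hT₁ hT₂
    obtain ⟨t, ht, rfl⟩ := hT₁
    obtain ⟨s, hs, rfl⟩ := hT₂
    obtain ⟨x, y, hxy, rfl⟩ := Finset.card_eq_two.1 hp
    rw [exList_unique ht hs hxy (hs₁ (by simp)) (hs₁ (by simp)) (hs₂ (by simp)) (hs₂ (by simp))]

theorem example17_card : example17.card = 44 := by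
  rw [example17, List.toFinset_card_of_nodup, List.length_map, exList_length]
  apply List.Nodup.map_on _ exList_nodup
  intro t ht s hs heq
  have h1 : t.1 ∈ ptSet t := by simp [ptSet]
  have h2 : t.2.1 ∈ ptSet t := by simp [ptSet]
  exact exList_unique ht hs (exList_dist ht).1 h1 h2 (heq ▸ h1) (heq ▸ h2)

theorem typeN_of (B : Finset (Finset (Fin 17))) (hB : isMMPTS B) (hQ : ¬ isTypeQ B) :
    ∃ a b c d, TypeN (third B) a b c d := by
  have hP := hB.1
  have h44 : 44 ≤ B.card := by
    rw [← example17_card]; exact hB.2 _ example17_pts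
  obtain ⟨a, b, c, d, ab, ac, ad, bc, bd, cd, hL⟩ := leave_cycle_s14 hP h44
  have hs := third_sys hP
  have hne : ∀ x y, third B x y = y → y = x ∨
      ((x = a ∨ x = c) ∧ (y = b ∨ y = d)) ∨ ((x = b ∨ x = d) ∧ (y = a ∨ y = c)) := by
    intro x y h
    by_cases hxy : y = x
    · exact Or.inl hxy
    · exact Or.inr ((hL x y).1 ⟨Ne.symm hxy, h⟩)
  have hac : third B a c ≠ c := fun h => by
    rcases hne a c h with h | ⟨_, h | h⟩ | ⟨h | h, _⟩
    exacts [ac h.symm, bc h.symm, cd h, ab h, ad h]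
  have hbd : third B b d ≠ d := fun h => by
    rcases hne b d h with h | ⟨h | h, _⟩ | ⟨_, h | h⟩
    exacts [bd h.symm, ab h.symm, bc h, ad h.symm, cd h.symm]
  have hleave : leave B = {{a, b}, {b, c}, {c, d}, {d, a}} := by
    have hl : ∀ x y, x ≠ y → (({x, y} : Finset (Fin 17)) ∈ leave B ↔ third B x y = y) := by
      intro x y hxy
      constructor
      · intro h
        by_contra h1
        exact h.2 _ (third_mem h1) (by intro u; simp; tauto)
      · intro h
        refine ⟨Finset.card_pair hxy, fun T hT hsub => ?_⟩
        have hx : x ∈ T := hsub (by simp)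
        have hy : y ∈ T := hsub (by simp)
        have hc : ((T.erase x).erase y).card = 1 := by
          rw [Finset.card_erase_of_mem (Finset.mem_erase.2 ⟨hxy.symm, hy⟩),
            Finset.card_erase_of_mem hx, hP.1 T hT]
        obtain ⟨z, hz⟩ := Finset.card_eq_one.1 hc
        have hTe : T = {x, y, z} := by
          rw [← Finset.insert_erase hx, ← Finset.insert_erase
            (Finset.mem_erase.2 ⟨hxy.symm, hy⟩ : y ∈ T.erase x), hz]
        rw [hTe] at hT
        exact (triple_distinct hP hT).2.2 (h.symm.trans (third_eq hP hT))
    ext p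
    simp only [Set.mem_insert_iff, Set.mem_singleton_iff]
    constructor
    · intro hp
      obtain ⟨x, y, hxy, rfl⟩ := Finset.card_eq_two.1 hp.1
      rcases (hL x y).1 ⟨hxy, (hl x y hxy).1 hp⟩ with
        ⟨rfl | rfl, rfl | rfl⟩ | ⟨rfl | rfl, rfl | rfl⟩ <;>
      simp [Finset.pair_comm]
    · rintro (rfl | rfl | rfl | rfl)
      · exact (hl _ _ ab).2 ((hL _ _).2 (by tauto)).2
      · exact (hl _ _ bc).2 ((hL _ _).2 (by tauto)).2
      · exact (hl _ _ cd).2 ((hL _ _).2 (by tauto)).2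
      · exact (hl _ _ ad.symm).2 ((hL _ _).2 (by tauto)).2
  have back : ∀ x y, ((x = a ∨ x = c) ∧ (y = b ∨ y = d)) ∨
      ((x = b ∨ x = d) ∧ (y = a ∨ y = c)) → third B x y = y :=
    fun x y h => ((hL x y).2 h).2
  refine ⟨a, b, c, d, hs, ab, ac, ad, bc, bd, cd, ?_, ?_, ?_, ?_, ?_, ?_⟩
  · intro y
    constructor
    · intro h
      rcases hne a y h with h | h | h
      · exact Or.inl h
      · exact Or.inr h.2
      · exact absurd h.1 (not_or.2 ⟨ab, ad⟩)
    · rintro (rfl | h)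
      · exact hs.self _
      · exact back a y (Or.inl ⟨Or.inl rfl, h⟩)
  · intro y
    constructor
    · intro h
      rcases hne b y h with h | h | h
      · exact Or.inl h
      · exact absurd h.1 (not_or.2 ⟨ab.symm, bc⟩)
      · exact Or.inr h.2
    · rintro (rfl | h)
      · exact hs.self _
      · exact back b y (Or.inr ⟨Or.inl rfl, h⟩)
  · intro y
    constructor
    · intro h
      rcases hne c y h with h | h | h
      · exact Or.inl h
      · exact Or.inr h.2
      · exact absurd h.1 (not_or.2 ⟨bc.symm, cd⟩)
    · rintro (rfl | h)
      · exact hs.self _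
      · exact back c y (Or.inl ⟨Or.inr rfl, h⟩)
  · intro y
    constructor
    · intro h
      rcases hne d y h with h | h | h
      · exact Or.inl h
      · exact absurd h.1 (not_or.2 ⟨ad.symm, cd.symm⟩)
      · exact Or.inr h.2
    · rintro (rfl | h)
      · exact hs.self _
      · exact back d y (Or.inr ⟨Or.inr rfl, h⟩)
  · intro x h1 h2 h3 h4 y hy
    rcases hne x y hy with h | h | h
    · exact h
    · exact absurd h.1 (not_or.2 ⟨h1, h3⟩)
    · exact absurd h.1 (not_or.2 ⟨h2, h4⟩)
  · intro heq
    refine hQ ⟨a, b, c, d, ab, ac, ad, bc, bd, cd, hleave, third B a c, third_mem hac, ?_⟩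
    rw [heq]
    exact third_mem hbd

theorem mmpts17_typeN_aut_le_two :
    ∀ B : Finset (Finset (Fin 17)), isMMPTS B → ¬ isTypeQ B →
      Nat.card {φ : Equiv.Perm (Fin 17) // isAuto B φ} ≤ 2 := by
  intro B hB hQ
  obtain ⟨a, b, c, d, h⟩ := typeN_of B hB hQ
  have hinj : Function.Injective
      (fun φ : {φ : Equiv.Perm (Fin 17) // isAuto B φ} => Equiv.Perm.sign φ.1) := by
    rintro ⟨φ, hφ⟩ ⟨ψ, hψ⟩ heq
    dsimp only at heq
    have hk : isAuto B (φ⁻¹ * ψ) := auto_mul (auto_inv hφ) hψ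
    by_contra hne
    have hne' : φ⁻¹ * ψ ≠ 1 := by
      intro h1
      exact hne (Subtype.ext (inv_mul_eq_one.1 h1))
    have h1 := h.auto_odd (fun x y => third_auto hB.1 hk (auto_inv hk) x y) hne'
    rw [map_mul, map_inv, heq, inv_mul_cancel] at h1
    exact absurd h1 (by decide)
  have h2 := Nat.card_le_card_of_injective _ hinj
  have h3 : Nat.card ℤˣ = 2 := by rw [Nat.card_eq_fintype_card]; rfl
  omega
end
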